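/- arXiv:1609.07017 — 2 statements merged into one kernel-verified Lean document; each statement's English description precedes it below -/
import Mathlib

section
/- Let (R,m) be a Noetherian complete local domain of prime characteristic p > 0 and of Krull dimension d, and let I = (g_1,…,g_n) be an ideal of R. Then: (i) the robust closure of I equals the tight closure I^* (indeed already the immediate robust closure I^▫ equals I^*); (ii) for every u ∈ R, if the image in the generic forcing algebra S = R[Z_1,…,Z_n]/(u − Σ_{l=1}^n Z_l g_l) of one system of parameters of R forms a Q-sequence in S, then the image of every system of parameters of R forms a Q-sequence in S. -/
set_option synthInstance.maxHeartbeats 1000000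
set_option maxHeartbeats 1000000
open scoped BigOperators ENNReal TensorProduct

universe u

/-- A filtration of `M` of length `h` whose factors are cyclic modules killed by `J`. -/
def HasQLFiltration (S : Type u) [CommRing S] (J : Ideal S)
    (M : Type u) [AddCommGroup M] [Module S M] (h : ℕ) : Prop :=
  ∃ c : Fin (h + 1) → Submodule S M,
    Monotone c ∧ c 0 = ⊥ ∧ c (Fin.last h) = ⊤ ∧
    ∀ i : Fin h,
      (∃ m : M, c i.succ = c i.castSucc ⊔ Submodule.span S {m}) ∧
      ∀ a ∈ J, ∀ x ∈ c i.succ, a • x ∈ c i.castSucc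

/-- The `J`-quasilength of `M`. -/
noncomputable def quasilength (S : Type u) [CommRing S] (J : Ideal S)
    (M : Type u) [AddCommGroup M] [Module S M] : ℕ∞ :=
  sInf {n : ℕ∞ | ∃ h : ℕ, n = (h : ℕ∞) ∧ HasQLFiltration S J M h}

/-- `x₁, …, x_d` is a Q-sequence in `S`. -/
def IsQSequence {d : ℕ} {S : Type u} [CommRing S] (x : Fin d → S) : Prop :=
  Ideal.span (Set.range x) ≠ ⊤ ∧
  ∀ t : ℕ, 0 < t →
    ((t : ℕ∞) ^ d) ≤ quasilength S (Ideal.span (Set.range x))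
      (S ⧸ Ideal.span (Set.range fun i => x i ^ t))

/-- `T` is a robust algebra over the (complete local domain) `D`: the image in `T`
of every system of parameters of `D` is a Q-sequence in `T`. -/
def IsRobustOver (D : Type u) [CommRing D] (T : Type u) [CommRing T] [Algebra D T] : Prop :=
  ∀ (d : ℕ) (x : Fin d → D), ringKrullDim D = d →
    (Ideal.span (Set.range x)).radical.IsMaximal →
    IsQSequence (fun i => algebraMap D T (x i))

/-- `D` is a complete local domain of `R`, i.e. `D ≅ (R_m)^∧ / q` (compatibly with the
structure maps) for some maximal ideal `m` of `R` and minimal prime `q` of `(R_m)^∧`. -/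
def IsCompleteLocalDomainOf (R : Type u) [CommRing R] (D : Type u) [CommRing D]
    [Algebra R D] : Prop :=
  ∃ (m : Ideal R) (hm : m.IsMaximal),
    haveI : m.IsPrime := hm.isPrime
    ∃ q ∈ minimalPrimes (AdicCompletion (IsLocalRing.maximalIdeal (Localization.AtPrime m))
        (Localization.AtPrime m)),
      ∃ e : D ≃+* (AdicCompletion (IsLocalRing.maximalIdeal (Localization.AtPrime m))
          (Localization.AtPrime m) ⧸ q),
        ∀ r : R, e (algebraMap R D r) =
          Ideal.Quotient.mk q (algebraMap (Localization.AtPrime m)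
            (AdicCompletion (IsLocalRing.maximalIdeal (Localization.AtPrime m))
              (Localization.AtPrime m)) (algebraMap R (Localization.AtPrime m) r))

/-- `T` is a robust `R`-algebra: `D ⊗_R T` is robust over `D` for every complete
local domain `D` of `R`. -/
def IsRobustAlgebra (R : Type u) [CommRing R] (T : Type u) [CommRing T] [Algebra R T] : Prop :=
  ∀ (D : Type u) [CommRing D] [Algebra R D], IsCompleteLocalDomainOf R D →
    IsRobustOver D (D ⊗[R] T)

/-- `S` is a forcing algebra for `(M, N, u)`. -/
def IsForcingAlgebra (D : Type u) [CommRing D] (M : Type u) [AddCommGroup M] [Module D M]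
    (N : Submodule D M) (u : M) (S : Type u) [CommRing S] [Algebra D S] : Prop :=
  (1 : S) ⊗ₜ[D] u ∈ N.baseChange S

/-- The immediate robust closure `N^▫` of `N` in `M` (over a complete local domain `D`):
the submodule generated by `N` and all `u` admitting a robust forcing algebra. -/
noncomputable def immediateRobustClosure (D : Type u) [CommRing D] (M : Type u)
    [AddCommGroup M] [Module D M] (N : Submodule D M) : Submodule D M :=
  N ⊔ Submodule.span D {u : M |
    ∃ (S : Type u) (_ : CommRing S) (_ : Algebra D S),
      IsForcingAlgebra D M N u S ∧ IsRobustOver D S}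

/-- The robust closure of `N` in `M` over a complete local domain `D`:
the (stabilizing) union of the iterated immediate robust closures `N^(j)`. -/
noncomputable def robustClosureCLD (D : Type u) [CommRing D] (M : Type u)
    [AddCommGroup M] [Module D M] (N : Submodule D M) : Submodule D M :=
  ⨆ j : ℕ, (immediateRobustClosure D M)^[j] N

/-- `u` lies in the robust closure of `N` in `M` over the Noetherian ring `R`:
for every complete local domain `D` of `R`, the image of `u` in `D ⊗_R M` lies in the
robust closure, computed over `D`, of the image of `D ⊗_R N`. -/
def MemRobustClosure (R : Type u) [CommRing R] (M : Type u) [AddCommGroup M] [Module R M]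
    (N : Submodule R M) (u : M) : Prop :=
  ∀ (D : Type u) [CommRing D] [Algebra R D], IsCompleteLocalDomainOf R D →
    (1 : D) ⊗ₜ[R] u ∈ robustClosureCLD D (D ⊗[R] M) (N.baseChange D)


/-- `u` lies in the tight closure of the ideal `J` in the ring `T` of
prime characteristic `p`. -/
def MemTightClosure (T : Type u) [CommRing T] (p : ℕ) (J : Ideal T) (u : T) : Prop :=
  ∃ c : T, (∀ P ∈ minimalPrimes T, c ∉ P) ∧
    ∀ e : ℕ, c * u ^ p ^ e ∈ Ideal.span ((fun a => a ^ p ^ e) '' (J : Set T))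

/-!
If `u ∈ I^*` with multiplier `c`, then expressing `c u^q ∈ I^[q]` by coefficients for every
`q = p^e` defines a ring homomorphism from the generic forcing algebra `S` to the localization of
`∏ₑ R` at `c` which restricts on `R` to the `e`-th Frobenius power in the coordinate `e`. A
filtration of `S / (x₁ᵗ, …, x_dᵗ)` of length `h` thereby bounds the colength of
`(x₁^(tq), …, x_d^(tq))` by `h` times the colength of `(x₁^q, …, x_d^q)` up to `O(q^(d-1))`, and
comparing growth rates gives `t^d ≤ h`.

Conversely, if `x` is a Q-sequence in `S`, then the class of `1` in the top local cohomology of `S`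
is nonzero. Testing it against an injective module with simple socle produces a linear map from `S`
to the dual of the top local cohomology of `R`. That dual is finite and torsion-free, so there is a
functional `θ : S → R` with `θ 1 ≠ 0`, and applying `θ` to `u^q ∈ I^[q] S` gives
`θ 1 * u^q ∈ I^[q]`.
-/

/-! ### Colength and ideals of powers -/

section Colength

variable {R : Type*} [CommRing R]

/-- The length of `R ⧸ I`. -/
noncomputable def colength (I : Ideal R) : ℕ∞ := Module.length R (R ⧸ I)

/-- The ideal `(x₁ᵗ, …, x_dᵗ)`. -/
def powIdeal {ι : Type*} (x : ι → R) (t : ℕ) : Ideal R := Ideal.span (Set.range fun i => x i ^ t)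

theorem colength_anti {I J : Ideal R} (h : I ≤ J) : colength J ≤ colength I :=
  Module.length_le_of_surjective (Submodule.factor h) (Submodule.factor_surjective h)

@[simp]
theorem colength_top : colength (⊤ : Ideal R) = 0 :=
  Module.length_eq_zero_iff.2 (Submodule.Quotient.subsingleton_iff.2 rfl)

theorem one_le_colength {I : Ideal R} (h : I ≠ ⊤) : 1 ≤ colength I := by
  have : Nontrivial (R ⧸ I) := Ideal.Quotient.nontrivial_iff.2 h
  exact Order.one_le_iff_pos.2 Module.length_pos

theorem colength_ne_top_of_pow_le [IsNoetherianRing R] [IsLocalRing R] {I : Ideal R} {k : ℕ}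
    (h : IsLocalRing.maximalIdeal R ^ k ≤ I) : colength I ≠ ⊤ := by
  rcases eq_or_ne I ⊤ with rfl | hI
  · simp
  have hmin : IsLocalRing.maximalIdeal R ∈ I.minimalPrimes :=
    ⟨⟨inferInstance, IsLocalRing.le_maximalIdeal hI⟩,
      fun q hq _ => hq.1.le_of_pow_le (h.trans hq.2)⟩
  have := IsLocalRing.quotient_artinian_of_mem_minimalPrimes_of_isLocalRing I hmin
  rw [colength, Module.length_eq_of_surjective (R := R ⧸ I) Ideal.Quotient.mk_surjective]
  exact Module.length_ne_top

theorem colength_eq_add (I : Ideal R) (y : R) :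
    colength I = colength (I.colon {y}) + colength (I ⊔ Ideal.span {y}) := by
  let mulY : R ⧸ I.colon {y} →ₗ[R] R ⧸ I :=
    Submodule.mapQ _ _ (LinearMap.mulRight R y) fun _ => Submodule.mem_colon_singleton.1
  refine Module.length_eq_add_of_exact mulY
    (Submodule.factor (le_sup_left : I ≤ I ⊔ Ideal.span {y})) ?_
    (Submodule.factor_surjective _) ?_
  · rw [injective_iff_map_eq_zero]
    rintro ⟨r⟩ hr
    exact (Submodule.Quotient.mk_eq_zero _).2
      (Submodule.mem_colon_singleton.2 ((Submodule.Quotient.mk_eq_zero _).1 hr))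
  · refine LinearMap.exact_iff.2 (Eq.trans ?_ (Submodule.range_mapQ _ _ _ _).symm)
    rw [Submodule.factor, Submodule.ker_mapQ, LinearMap.range_eq_map, Submodule.comap_id,
      Submodule.map_sup, Submodule.mkQ_map_self, bot_sup_eq]
    congr 1
    ext r
    simp [Ideal.mem_span_singleton']

theorem colength_sup_span_pow_le (I : Ideal R) (y : R) (m : ℕ) :
    colength (I ⊔ Ideal.span {y ^ m}) ≤ m * colength (I ⊔ Ideal.span {y}) := by
  induction m with
  | zero => simp
  | succ m ih =>
    have hcolon : I ⊔ Ideal.span {y} ≤ (I ⊔ Ideal.span {y ^ (m + 1)}).colon {y ^ m} := by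
      refine sup_le (le_sup_left.trans Ideal.le_colon) ?_
      rw [Ideal.span_singleton_le_iff_mem, Submodule.mem_colon_singleton, smul_eq_mul, ← pow_succ']
      exact Submodule.mem_sup_right (Ideal.mem_span_singleton_self _)
    calc colength (I ⊔ Ideal.span {y ^ (m + 1)})
        = colength ((I ⊔ Ideal.span {y ^ (m + 1)}).colon {y ^ m}) +
            colength (I ⊔ Ideal.span {y ^ (m + 1)} ⊔ Ideal.span {y ^ m}) := colength_eq_add _ _
      _ ≤ colength (I ⊔ Ideal.span {y}) + m * colength (I ⊔ Ideal.span {y}) :=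
          add_le_add (colength_anti hcolon)
            ((colength_anti (sup_le_sup_right le_sup_left _)).trans ih)
      _ = (m + 1 : ℕ) * colength (I ⊔ Ideal.span {y}) := by push_cast; ring

theorem span_range_fin_succ {d : ℕ} (x : Fin (d + 1) → R) :
    Ideal.span (Set.range x) = Ideal.span {x 0} ⊔ Ideal.span (Set.range (Fin.tail x)) := by
  rw [← Ideal.span_insert, ← Fin.range_cons, Fin.cons_self_tail]

section powIdeal

variable {ι : Type*} (x : ι → R)

theorem pow_mem_powIdeal (t : ℕ) (i : ι) : x i ^ t ∈ powIdeal x t := Ideal.subset_span ⟨i, rfl⟩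

theorem powIdeal_le_iff {x : ι → R} {t : ℕ} {I : Ideal R} : powIdeal x t ≤ I ↔ ∀ i, x i ^ t ∈ I :=
  Ideal.span_le.trans Set.range_subset_iff

theorem powIdeal_anti {s t : ℕ} (h : s ≤ t) : powIdeal x t ≤ powIdeal x s :=
  powIdeal_le_iff.2 fun i => Ideal.pow_mem_of_pow_mem _ (pow_mem_powIdeal x s i) h

theorem powIdeal_fin_succ {d : ℕ} (x : Fin (d + 1) → R) (t : ℕ) :
    powIdeal x t = Ideal.span {x 0 ^ t} ⊔ powIdeal (Fin.tail x) t :=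
  span_range_fin_succ _

theorem span_range_pow_le_powIdeal {d : ℕ} (x : Fin d → R) (t : ℕ) :
    Ideal.span (Set.range x) ^ (d * t + 1) ≤ powIdeal x t := by
  induction d with
  | zero => simp
  | succ d ih =>
    rw [span_range_fin_succ, powIdeal_fin_succ, show (d + 1) * t + 1 = t + (d * t + 1) by ring,
      ← Ideal.span_singleton_pow]
    exact Ideal.sup_pow_add_le_pow_sup_pow.trans (sup_le_sup_left (ih _) _)

theorem pow_le_powIdeal {d : ℕ} {x : Fin d → R} {𝔪 : Ideal R} {k : ℕ}
    (h : 𝔪 ^ k ≤ Ideal.span (Set.range x)) (t : ℕ) : 𝔪 ^ (k * (d * t + 1)) ≤ powIdeal x t := by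
  rw [pow_mul]
  exact (Ideal.pow_right_mono h _).trans (span_range_pow_le_powIdeal x t)

theorem colength_sup_powIdeal_le {d : ℕ} (I : Ideal R) (x : Fin d → R) (m : ℕ) :
    colength (I ⊔ powIdeal x m) ≤ (m : ℕ∞) ^ d * colength (I ⊔ Ideal.span (Set.range x)) := by
  induction d generalizing I with
  | zero => simp [powIdeal]
  | succ d ih =>
    calc colength (I ⊔ powIdeal x m)
        = colength (I ⊔ Ideal.span {x 0 ^ m} ⊔ powIdeal (Fin.tail x) m) := by
          rw [powIdeal_fin_succ, sup_assoc]
      _ ≤ (m : ℕ∞) ^ d *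
            colength (I ⊔ Ideal.span (Set.range (Fin.tail x)) ⊔ Ideal.span {x 0 ^ m}) :=
          (ih _ _).trans_eq (by rw [sup_right_comm])
      _ ≤ (m : ℕ∞) ^ d *
            (m * colength (I ⊔ Ideal.span (Set.range (Fin.tail x)) ⊔ Ideal.span {x 0})) :=
          mul_le_mul_right (colength_sup_span_pow_le _ _ _) _
      _ = (m : ℕ∞) ^ (d + 1) * colength (I ⊔ Ideal.span (Set.range x)) := by
          rw [span_range_fin_succ, ← sup_assoc, sup_right_comm, pow_succ, mul_assoc]

theorem colength_powIdeal_mul_le {d : ℕ} (x : Fin d → R) (n m : ℕ) :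
    colength (powIdeal x (n * m)) ≤ (m : ℕ∞) ^ d * colength (powIdeal x n) := by
  simpa [powIdeal, ← pow_mul] using colength_sup_powIdeal_le ⊥ (fun i => x i ^ n) m

end powIdeal

end Colength

/-! ### Quasilength of cyclic modules and the monomial property -/

section Quasilength

/-- `HasCyclicChain J h I` says that `S ⧸ I` has a filtration of length `h` with cyclic factors
killed by `J`, built from the bottom up: the first factor is generated by the class of some `s`
with `J s ⊆ I`, and the remaining ones filter `S ⧸ (I + (s))`. -/
inductive HasCyclicChain {S : Type*} [CommRing S] (J : Ideal S) : ℕ → Ideal S → Prop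
  | top : HasCyclicChain J 0 ⊤
  | cons {h : ℕ} {I : Ideal S} (s : S) : J ≤ I.colon {s} →
      HasCyclicChain J h (I ⊔ Ideal.span {s}) → HasCyclicChain J (h + 1) I

namespace HasCyclicChain

variable {S : Type*} [CommRing S] {J : Ideal S}

theorem mono {h : ℕ} {I I' : Ideal S} (H : HasCyclicChain J h I) (hI : I ≤ I') :
    HasCyclicChain J h I' := by
  induction H generalizing I' with
  | top => exact top_unique hI ▸ top
  | cons s hs _ ih =>
    exact cons s (hs.trans (Submodule.colon_mono hI le_rfl)) (ih (sup_le_sup_right hI _))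

theorem add {h₁ h₂ : ℕ} {I K : Ideal S} {y : S} (H₁ : HasCyclicChain J h₁ K)
    (hK : K ≤ I.colon {y}) (H₂ : HasCyclicChain J h₂ (I ⊔ Ideal.span {y})) :
    HasCyclicChain J (h₁ + h₂) I := by
  induction H₁ generalizing I with
  | top =>
    have hy : y ∈ I := by simpa using hK (Submodule.mem_top (x := (1 : S)))
    rwa [sup_eq_left.2 ((Ideal.span_singleton_le_iff_mem _).2 hy), ← zero_add h₂] at H₂
  | cons s hs _ ih =>
    rw [Nat.succ_add]
    refine cons (s * y) (fun a ha => ?_) (ih (sup_le ?_ ?_) (H₂.mono ?_))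
    · rw [Submodule.mem_colon_singleton, smul_eq_mul, ← mul_assoc]
      exact Submodule.mem_colon_singleton.1 (hK (Submodule.mem_colon_singleton.1 (hs ha)))
    · exact hK.trans (Submodule.colon_mono le_sup_left le_rfl)
    · rw [Ideal.span_singleton_le_iff_mem, Submodule.mem_colon_singleton]
      exact Submodule.mem_sup_right (Ideal.mem_span_singleton_self _)
    · exact sup_le_sup_right le_sup_left _

theorem exists_chain {h : ℕ} {I : Ideal S} (H : HasCyclicChain J h I) :
    ∃ U : Fin (h + 1) → Ideal S, U 0 = I ∧ U (Fin.last h) = ⊤ ∧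
      ∀ i : Fin h, ∃ s, U i.succ = U i.castSucc ⊔ Ideal.span {s} ∧
        J ≤ (U i.castSucc).colon {s} := by
  induction H with
  | top => exact ⟨fun _ => ⊤, rfl, rfl, Fin.elim0⟩
  | @cons h I s hs _ ih =>
    obtain ⟨U, hU₀, hU_last, hU⟩ := ih
    refine ⟨Fin.cons I U, rfl, by rwa [← Fin.succ_last, Fin.cons_succ], Fin.cases ⟨s, hU₀, hs⟩ ?_⟩
    intro i
    rw [← Fin.succ_castSucc, Fin.cons_succ, Fin.cons_succ]
    exact hU i

end HasCyclicChain

variable {S : Type u} [CommRing S] {J I : Ideal S} {h : ℕ}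

theorem HasCyclicChain.hasQLFiltration (H : HasCyclicChain J h I) :
    HasQLFiltration S J (S ⧸ I) h := by
  obtain ⟨U, hU₀, hU_last, hU⟩ := H.exists_chain
  have hmono : Monotone U := Fin.monotone_iff_le_succ.2 fun i => by
    obtain ⟨s, hs, -⟩ := hU i
    exact hs ▸ le_sup_left
  refine ⟨fun i => Submodule.map I.mkQ (U i), fun i j hij => Submodule.map_mono (hmono hij), ?_, ?_,
    fun i => ?_⟩
  · simp only [hU₀, Submodule.mkQ_map_self]
  · simp only [hU_last, Submodule.map_top, Submodule.range_mkQ]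
  obtain ⟨s, hs, hJ⟩ := hU i
  refine ⟨⟨I.mkQ s, ?_⟩, ?_⟩
  · simp only [hs, Submodule.map_sup, Ideal.span, Submodule.map_span, Set.image_singleton]
  · rintro a ha _ ⟨z, hz, rfl⟩
    refine ⟨a • z, ?_, map_smul _ _ _⟩
    obtain ⟨b, hb, r, hr, rfl⟩ := Submodule.mem_sup.1 (hs ▸ hz)
    obtain ⟨r, rfl⟩ := Ideal.mem_span_singleton'.1 hr
    rw [smul_add, ← smul_eq_mul r, smul_comm]
    exact add_mem (Submodule.smul_mem _ _ hb)
      (Submodule.smul_mem _ _ (Submodule.mem_colon_singleton.1 (hJ ha)))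

theorem HasQLFiltration.hasCyclicChain (H : HasQLFiltration S J (S ⧸ I) h) :
    HasCyclicChain J h I := by
  obtain ⟨c, -, hc₀, hc_last, hc⟩ := H
  have chain_comap (i : Fin (h + 1)) : HasCyclicChain J (h - i) ((c i).comap I.mkQ) := by
    induction i using Fin.reverseInduction with
    | last => simpa [hc_last] using HasCyclicChain.top
    | cast i ih =>
      obtain ⟨⟨m, hm⟩, hJ⟩ := hc i
      obtain ⟨s, rfl⟩ := Submodule.mkQ_surjective _ m
      have hlen : h - (i.castSucc : ℕ) = h - (i.succ : ℕ) + 1 := by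
        simp only [Fin.val_castSucc, Fin.val_succ]; omega
      have hsucc : (c i.succ).comap I.mkQ ≤ (c i.castSucc).comap I.mkQ ⊔ Ideal.span {s} := by
        have hmap : c i.succ = ((c i.castSucc).comap I.mkQ ⊔ Ideal.span {s}).map I.mkQ := by
          rw [hm, Submodule.map_sup,
            Submodule.map_comap_eq_of_surjective (Submodule.mkQ_surjective I), Ideal.span,
            Submodule.map_span, Set.image_singleton]
        rw [hmap, Submodule.comap_map_mkQ]
        exact sup_le (le_sup_of_le_left (Submodule.le_comap_mkQ _ _)) le_rfl
      rw [hlen]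
      refine .cons s (fun a ha => Submodule.mem_colon_singleton.2 ?_) (ih.mono hsucc)
      exact hJ a ha _ (hm ▸ Submodule.mem_sup_right (Submodule.mem_span_singleton_self _))
  simpa [hc₀] using chain_comap 0

theorem le_quasilength_iff {n : ℕ} :
    (n : ℕ∞) ≤ quasilength S J (S ⧸ I) ↔ ∀ h, HasCyclicChain J h I → n ≤ h := by
  rw [quasilength, le_sInf_iff]
  constructor
  · intro H h hh
    exact_mod_cast H h ⟨h, rfl, hh.hasQLFiltration⟩
  · rintro H _ ⟨h, rfl, hh⟩
    exact_mod_cast H h hh.hasCyclicChain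

theorem isQSequence_iff {d : ℕ} {x : Fin d → S} :
    IsQSequence x ↔ ∀ t, 0 < t → ∀ h,
      HasCyclicChain (Ideal.span (Set.range x)) h (powIdeal x t) → t ^ d ≤ h := by
  have key (t : ℕ) : (t : ℕ∞) ^ d ≤ quasilength S (Ideal.span (Set.range x)) (S ⧸ powIdeal x t) ↔
      ∀ h, HasCyclicChain (Ideal.span (Set.range x)) h (powIdeal x t) → t ^ d ≤ h := by
    rw [← Nat.cast_pow]
    exact le_quasilength_iff
  refine ⟨fun H t ht => (key t).1 (H.2 t ht), fun H => ⟨fun htop => ?_, fun t ht =>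
    (key t).2 (H t ht)⟩⟩
  have hone : powIdeal x 1 = ⊤ := by simpa [powIdeal] using htop
  simpa using H 1 one_pos 0 (hone ▸ .top)

end Quasilength

section Monomial

variable {S : Type*} [CommRing S] {J I : Ideal S}

theorem le_colon_pow_sup_span_tail {d : ℕ} {x : Fin (d + 1) → S}
    (hJ : J ≤ I ⊔ Ideal.span (Set.range x)) (m : ℕ) :
    J ≤ (I ⊔ Ideal.span {x 0 ^ (m + 1)}).colon {x 0 ^ m} ⊔
      Ideal.span (Set.range (Fin.tail x)) := by
  refine hJ.trans ?_
  rw [span_range_fin_succ, ← sup_assoc]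
  refine sup_le_sup_right (sup_le (le_sup_left.trans Ideal.le_colon) ?_) _
  rw [Ideal.span_singleton_le_iff_mem, Submodule.mem_colon_singleton, smul_eq_mul, ← pow_succ']
  exact Submodule.mem_sup_right (Ideal.mem_span_singleton_self _)

theorem hasCyclicChain_mul_sup_span_pow {d t : ℕ} {x : Fin (d + 1) → S}
    (hchain : ∀ I : Ideal S, J ≤ I ⊔ Ideal.span (Set.range (Fin.tail x)) →
      (∀ i, Fin.tail x i ^ t ∈ I) → HasCyclicChain J (t ^ d) I)
    (hJ : J ≤ I ⊔ Ideal.span (Set.range x)) (hx : ∀ i, x i ^ t ∈ I) (m : ℕ) :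
    HasCyclicChain J (m * t ^ d) (I ⊔ Ideal.span {x 0 ^ m}) := by
  induction m with
  | zero => simpa using HasCyclicChain.top
  | succ m ih =>
    rw [Nat.succ_mul, add_comm]
    exact (hchain _ (le_colon_pow_sup_span_tail hJ m)
      fun i => Ideal.le_colon (Submodule.mem_sup_left (hx i.succ))).add le_rfl
        (ih.mono (sup_le_sup_right le_sup_left _))

theorem hasCyclicChain_pow {t : ℕ} : ∀ {d : ℕ} {I : Ideal S} {x : Fin d → S},
    J ≤ I ⊔ Ideal.span (Set.range x) → (∀ i, x i ^ t ∈ I) → HasCyclicChain J (t ^ d) I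
  | 0, I, x, hJ, _ => by
    exact HasCyclicChain.cons 1 (fun a ha => by simpa using hJ ha)
      (by simpa using HasCyclicChain.top)
  | d + 1, I, x, hJ, hx => by
    have := hasCyclicChain_mul_sup_span_pow (fun _ => hasCyclicChain_pow) hJ hx t
    rwa [sup_eq_left.2 ((Ideal.span_singleton_le_iff_mem _).2 (hx 0)), ← pow_succ'] at this

/-- If the top monomial vanishes in `S ⧸ I`, one step of the obvious chain is redundant. -/
theorem hasCyclicChain_pow_sub_one {t : ℕ} : ∀ {d : ℕ} {I : Ideal S} {x : Fin d → S},
    J ≤ I ⊔ Ideal.span (Set.range x) → (∀ i, x i ^ (t + 1) ∈ I) → ∏ i, x i ^ t ∈ I →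
      HasCyclicChain J ((t + 1) ^ d - 1) I
  | 0, I, x, _, _, hprod => by
    have : I = ⊤ := by simpa [Ideal.eq_top_iff_one] using hprod
    simpa [this] using HasCyclicChain.top
  | d + 1, I, x, hJ, hx, hprod => by
    have hI : I ⊔ Ideal.span {x 0 ^ (t + 1)} = I :=
      sup_eq_left.2 ((Ideal.span_singleton_le_iff_mem _).2 (hx 0))
    have htail := hasCyclicChain_pow_sub_one (hI ▸ le_colon_pow_sup_span_tail hJ t)
      (fun i => Ideal.le_colon (hx i.succ)) (by
        rw [Submodule.mem_colon_singleton, smul_eq_mul, mul_comm]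
        rwa [Fin.prod_univ_succ] at hprod)
    have hlen : (t + 1) ^ d - 1 + t * (t + 1) ^ d = (t + 1) ^ (d + 1) - 1 := by
      have : 0 < (t + 1) ^ d := by positivity
      rw [pow_succ', add_mul, one_mul]
      omega
    exact hlen ▸ htail.add le_rfl
      (hasCyclicChain_mul_sup_span_pow (fun _ => hasCyclicChain_pow) hJ hx t)

end Monomial

theorem IsQSequence.prod_pow_notMem {S : Type u} [CommRing S] {d : ℕ} {x : Fin d → S}
    (H : IsQSequence x) (t : ℕ) : ∏ i, x i ^ t ∉ powIdeal x (t + 1) := fun hmem => by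
  have hchain := hasCyclicChain_pow_sub_one le_sup_right (pow_mem_powIdeal x (t + 1)) hmem
  have hle := isQSequence_iff.1 H (t + 1) t.succ_pos _ hchain
  have hpos : 0 < (t + 1) ^ d := by positivity
  omega

/-! ### Growth of colengths of powers of parameters -/

section Growth

open IsLocalRing

theorem exists_radical_span_range_eq_maximalIdeal (A : Type*) [CommRing A] [IsNoetherianRing A]
    [IsLocalRing A] :
    ∃ (r : ℕ) (z : Fin r → A), ringKrullDim A = r ∧
      (Ideal.span (Set.range z)).radical = maximalIdeal A := by
  obtain ⟨s, hs, hcard⟩ := Ideal.exists_finset_card_eq_height_of_isNoetherianRing (maximalIdeal A)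
  refine ⟨s.card, fun i => s.equivFin.symm i, ?_, ?_⟩
  · rw [← maximalIdeal_height_eq_ringKrullDim, ← hcard]; rfl
  · have hrange : Set.range (fun i => (s.equivFin.symm i : A)) = s := by
      rw [← Function.comp_def Subtype.val, s.equivFin.symm.surjective.range_comp]
      exact Subtype.range_coe
    rw [hrange]
    refine le_antisymm ((maximalIdeal.isMaximal A).isPrime.radical_le_iff.2 hs.1.2) ?_
    rw [Ideal.radical_eq_sInf]
    exact le_sInf fun q hq => hs.2 ⟨hq.2, hq.1⟩ (le_maximalIdeal hq.2.ne_top)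

variable {R : Type*} [CommRing R] [IsNoetherianRing R]

theorem exists_pow_le_of_radical_eq {I J : Ideal R} (h : I.radical = J) : ∃ k, J ^ k ≤ I :=
  h ▸ I.exists_radical_pow_le_of_fg (Ideal.fg_of_isNoetherianRing _)

theorem exists_radical_span_sup_eq_maximalIdeal [IsLocalRing R] [IsDomain R] {d : ℕ}
    (hd : ringKrullDim R = d) {c : R} (hc : c ≠ 0) (hcm : c ∈ maximalIdeal R) :
    ∃ (r : ℕ) (z : Fin r → R), r + 1 = d ∧
      (Ideal.span {c} ⊔ Ideal.span (Set.range z)).radical = maximalIdeal R := by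
  let π := Ideal.Quotient.mk (Ideal.span {c})
  have : Nontrivial (R ⧸ Ideal.span {c}) :=
    Ideal.Quotient.nontrivial_iff.2 (mt Ideal.span_singleton_eq_top.1 hcm)
  have := IsLocalRing.of_surjective' π Ideal.Quotient.mk_surjective
  have := IsLocalHom.of_surjective π Ideal.Quotient.mk_surjective
  obtain ⟨r, z, hr, hz⟩ := exists_radical_span_range_eq_maximalIdeal (R ⧸ Ideal.span {c})
  choose w hw using fun i => Ideal.Quotient.mk_surjective (z i)
  have hdim := ringKrullDim_quotient_span_singleton_succ_eq_ringKrullDim_of_mem_nonZeroDivisors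
    (mem_nonZeroDivisors_of_ne_zero hc) hcm
  refine ⟨r, w, by rw [hr, hd] at hdim; exact_mod_cast hdim, ?_⟩
  have hmap : Ideal.map π (Ideal.span (Set.range w)) = Ideal.span (Set.range z) := by
    rw [Ideal.map_span, ← Set.range_comp]
    exact congrArg (fun v => Ideal.span (Set.range v)) (funext hw)
  rw [← maximalIdeal_comap π, ← hz, ← hmap, Ideal.comap_radical,
    Ideal.comap_map_of_surjective _ Ideal.Quotient.mk_surjective, ← RingHom.ker_eq_comap_bot,
    Ideal.mk_ker, sup_comm]

theorem exists_mul_colength_span_sup_powIdeal_le [IsLocalRing R] [IsDomain R] {d : ℕ}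
    (hd : ringKrullDim R = d) {c : R} (hc : c ≠ 0) {x : Fin d → R}
    (hx : (Ideal.span (Set.range x)).radical = maximalIdeal R) :
    ∃ C : ℕ, ∀ n : ℕ, 0 < n → n * colength (Ideal.span {c} ⊔ powIdeal x n) ≤ C * (n : ℕ∞) ^ d := by
  by_cases hcm : c ∈ maximalIdeal R
  swap
  · have hunit : IsUnit c := not_not.1 hcm
    exact ⟨0, fun n _ => by simp [Ideal.span_singleton_eq_top.2 hunit]⟩
  obtain ⟨r, z, rfl, hz⟩ := exists_radical_span_sup_eq_maximalIdeal hd hc hcm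
  obtain ⟨k, hk⟩ := exists_pow_le_of_radical_eq hx
  obtain ⟨k', hk'⟩ := exists_pow_le_of_radical_eq hz
  obtain ⟨C, hC⟩ := ENat.ne_top_iff_exists.1 (colength_ne_top_of_pow_le hk')
  refine ⟨(k * (r + 2)) ^ r * C, fun n hn => ?_⟩
  have hzm (i : Fin r) : z i ∈ maximalIdeal R :=
    hz ▸ Ideal.le_radical (Submodule.mem_sup_right (Ideal.subset_span ⟨i, rfl⟩))
  have hexp : k * ((r + 1) * n + 1) ≤ k * (r + 2) * n := by
    rw [mul_assoc]
    exact Nat.mul_le_mul_left _ (by linarith)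
  have hle : powIdeal z (k * (r + 2) * n) ≤ powIdeal x n := powIdeal_le_iff.2 fun i =>
    pow_le_powIdeal hk n (Ideal.pow_le_pow_right hexp (Ideal.pow_mem_pow (hzm i) _))
  calc n * colength (Ideal.span {c} ⊔ powIdeal x n)
      ≤ n * (((k * (r + 2) * n : ℕ) : ℕ∞) ^ r * C) := by
        gcongr
        rw [hC]
        exact (colength_anti (sup_le_sup_left hle _)).trans (colength_sup_powIdeal_le _ _ _)
    _ = ((k * (r + 2)) ^ r * C : ℕ) * (n : ℕ∞) ^ (r + 1) := by
        rw [Nat.cast_mul (k * (r + 2)), mul_pow]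
        push_cast
        ring

theorem exists_colon_sup_pow_le (𝔪 P : Ideal R) [P.IsPrime] {y : R} (hy : y ∉ P) :
    ∃ k, ∀ n, (P ⊔ 𝔪 ^ (n + k)).colon {y} ≤ P ⊔ 𝔪 ^ n := by
  obtain ⟨k, hk⟩ := Ideal.exists_pow_inf_eq_pow_smul 𝔪
    (Submodule.map P.mkQ (Ideal.span {y} : Submodule R R))
  refine ⟨k, fun n r hr => ?_⟩
  obtain ⟨a, ha, b, hb, hab⟩ := Submodule.mem_sup.1 (Submodule.mem_colon_singleton.1 hr)
  have hmem : P.mkQ (r * y) ∈ 𝔪 ^ (n + k) • (⊤ : Submodule R (R ⧸ P)) ⊓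
      Submodule.map P.mkQ (Ideal.span {y} : Submodule R R) := by
    refine ⟨?_, r * y, Ideal.mem_span_singleton'.2 ⟨r, rfl⟩, rfl⟩
    have ha' : P.mkQ a = 0 := (Submodule.Quotient.mk_eq_zero P).2 ha
    have hb' : P.mkQ (r * y) = b • P.mkQ 1 := by
      rw [← smul_eq_mul, ← hab, map_add, ← map_smul, smul_eq_mul, mul_one, ha', zero_add]
    exact hb' ▸ Submodule.smul_mem_smul hb trivial
  rw [hk _ (Nat.le_add_left k n), Nat.add_sub_cancel] at hmem
  have hmem' := Submodule.smul_mono (le_refl (𝔪 ^ n)) inf_le_right hmem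
  rw [← Submodule.map_smul''] at hmem'
  obtain ⟨w, hw, hwr⟩ := hmem'
  obtain ⟨v, hv, rfl⟩ := Ideal.mem_mul_span_singleton.1 hw
  have hrv : (r - v) * y ∈ P := by
    rw [sub_mul]
    exact (Submodule.Quotient.eq P).1 hwr.symm
  have hrv' := (Ideal.IsPrime.mem_or_mem inferInstance hrv).resolve_right hy
  exact sub_add_cancel r v ▸ Submodule.add_mem_sup hrv' hv

theorem exists_colength_add_le (𝔪 : Ideal R) {P Q : Ideal R} [P.IsPrime] (hPQ : P < Q) :
    ∃ k, 0 < k ∧ ∀ n, colength (P ⊔ 𝔪 ^ n) + colength (Q ⊔ 𝔪 ^ (n + k)) ≤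
      colength (P ⊔ 𝔪 ^ (n + k)) := by
  obtain ⟨y, hyQ, hyP⟩ := SetLike.exists_of_lt hPQ
  obtain ⟨k, hk⟩ := exists_colon_sup_pow_le 𝔪 P hyP
  refine ⟨k + 1, k.succ_pos, fun n => ?_⟩
  rw [colength_eq_add (P ⊔ 𝔪 ^ (n + (k + 1))) y]
  refine add_le_add (colength_anti ?_) (colength_anti ?_)
  · exact (Submodule.colon_mono (sup_le_sup_left (Ideal.pow_le_pow_right (by lia)) _) le_rfl).trans
      (hk n)
  · refine sup_le (sup_le_sup_right hPQ.le _) ?_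
    exact (Ideal.span_singleton_le_iff_mem _).2 (Submodule.mem_sup_left hyQ)

theorem add_pow_succ_le (n k d : ℕ) :
    (n + k) ^ (d + 1) ≤ n ^ (d + 1) + (d + 1) * k * (n + k) ^ d := by
  induction d with
  | zero => simp
  | succ d ih =>
    calc (n + k) ^ (d + 2) = (n + k) * (n + k) ^ (d + 1) := pow_succ' _ _
      _ ≤ (n + k) * (n ^ (d + 1) + (d + 1) * k * (n + k) ^ d) := by gcongr
      _ = n ^ (d + 2) + k * n ^ (d + 1) + (d + 1) * k * (n + k) ^ (d + 1) := by ring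
      _ ≤ n ^ (d + 2) + k * (n + k) ^ (d + 1) + (d + 1) * k * (n + k) ^ (d + 1) := by
        gcongr; omega
      _ = n ^ (d + 2) + (d + 1 + 1) * k * (n + k) ^ (d + 1) := by ring

theorem exists_pow_succ_le_mul_of_add_le {f g : ℕ → ℕ∞} {d k C : ℕ} (hk : 0 < k)
    (hf : ∀ n : ℕ, 0 < n → 1 ≤ f n) (hg : ∀ n : ℕ, 0 < n → (n : ℕ∞) ^ d ≤ C * g n)
    (hfg : ∀ n, f n + g (n + k) ≤ f (n + k)) :
    ∃ B : ℕ, ∀ n : ℕ, 0 < n → (n : ℕ∞) ^ (d + 1) ≤ B * f n := by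
  refine ⟨k ^ (d + 1) + (d + 1) * k * C, fun n => ?_⟩
  induction n using Nat.strong_induction_on with
  | _ n ih =>
  intro hn
  rcases le_or_gt n k with hnk | hnk
  · calc (n : ℕ∞) ^ (d + 1) ≤ ((k ^ (d + 1) + (d + 1) * k * C : ℕ) : ℕ∞) * 1 := by
          rw [mul_one]
          exact_mod_cast (Nat.pow_le_pow_left hnk _).trans (Nat.le_add_right _ _)
      _ ≤ _ := by gcongr; exact hf n hn
  obtain ⟨n, rfl⟩ := Nat.exists_eq_add_of_le' hnk.le
  calc ((n + k : ℕ) : ℕ∞) ^ (d + 1)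
      ≤ (n : ℕ∞) ^ (d + 1) + ((d + 1) * k : ℕ) * ((n + k : ℕ) : ℕ∞) ^ d := by
        exact_mod_cast add_pow_succ_le n k d
    _ ≤ (k ^ (d + 1) + (d + 1) * k * C : ℕ) * f n +
          (k ^ (d + 1) + (d + 1) * k * C : ℕ) * g (n + k) := by
        refine add_le_add (ih n (by omega) (by omega)) ?_
        calc ((d + 1) * k : ℕ) * ((n + k : ℕ) : ℕ∞) ^ d
            ≤ ((d + 1) * k : ℕ) * (C * g (n + k)) := by gcongr; exact hg _ hn
          _ = ((d + 1) * k * C : ℕ) * g (n + k) := by push_cast; ring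
          _ ≤ _ := by gcongr; exact Nat.le_add_left _ _
    _ ≤ _ := by rw [← mul_add]; gcongr; exact hfg n

theorem exists_pow_length_le_mul_colength [IsLocalRing R] (s : LTSeries (PrimeSpectrum R)) :
    ∃ C : ℕ, ∀ n : ℕ, 0 < n →
      (n : ℕ∞) ^ s.length ≤ C * colength (s.head.asIdeal ⊔ maximalIdeal R ^ n) := by
  have one_le (q : PrimeSpectrum R) (n : ℕ) (hn : 0 < n) :
      1 ≤ colength (q.asIdeal ⊔ maximalIdeal R ^ n) :=
    one_le_colength (ne_top_of_le_ne_top (maximalIdeal.isMaximal R).ne_top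
      (sup_le (le_maximalIdeal q.2.ne_top) (Ideal.pow_le_self hn.ne')))
  induction s using RelSeries.inductionOn with
  | singleton q => exact ⟨1, fun n hn => by simpa using one_le q n hn⟩
  | cons s q hq ih =>
    obtain ⟨C, hC⟩ := ih
    obtain ⟨k, hk, hadd⟩ := exists_colength_add_le (maximalIdeal R)
      (PrimeSpectrum.asIdeal_lt_asIdeal _ _ |>.2 hq)
    simpa using exists_pow_succ_le_mul_of_add_le hk (one_le q) hC hadd

theorem exists_pow_le_mul_colength_powIdeal [IsLocalRing R] {d : ℕ}
    (hd : ringKrullDim R = d) {ι : Type*} {x : ι → R} (hx : ∀ i, x i ∈ maximalIdeal R) :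
    ∃ C : ℕ, ∀ n : ℕ, 0 < n → (n : ℕ∞) ^ d ≤ C * colength (powIdeal x n) := by
  obtain ⟨s, rfl⟩ : ∃ s : LTSeries (PrimeSpectrum R), s.length = d :=
    Order.le_krullDim_iff.1 hd.ge
  obtain ⟨C, hC⟩ := exists_pow_length_le_mul_colength s
  refine ⟨C, fun n hn => (hC n hn).trans ?_⟩
  gcongr
  exact colength_anti (powIdeal_le_iff.2 fun i =>
    Submodule.mem_sup_right (Ideal.pow_mem_pow (hx i) n))

end Growth

theorem pow_le_of_forall_pow_le_div_add_one_pow_mul {p t d h : ℕ} (hp : 1 < p)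
    (ht : 0 < t) (H : ∀ a, (p ^ a) ^ d ≤ (p ^ a / t + 1) ^ d * h) : t ^ d ≤ h := by
  have hlim : Filter.Tendsto (fun a : ℕ => ((1 : ℝ) / t + (p : ℝ)⁻¹ ^ a) ^ d * h) Filter.atTop
      (nhds ((1 / t + 0) ^ d * h)) :=
    (((tendsto_pow_atTop_nhds_zero_of_lt_one (by positivity)
      (inv_lt_one_of_one_lt₀ (by exact_mod_cast hp))).const_add _).pow d).mul_const _
  have hone (a : ℕ) : 1 ≤ ((1 : ℝ) / t + (p : ℝ)⁻¹ ^ a) ^ d * h := by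
    have hpa : (0 : ℝ) < (p : ℝ) ^ a := by positivity
    have hdiv : ((p ^ a / t + 1 : ℕ) : ℝ) ≤ (1 / t + (p : ℝ)⁻¹ ^ a) * (p : ℝ) ^ a := by
      rw [add_mul, inv_pow, inv_mul_cancel₀ hpa.ne', one_div_mul_eq_div]
      push_cast
      gcongr
      exact_mod_cast Nat.cast_div_le (α := ℝ) (m := p ^ a) (n := t)
    refine le_of_mul_le_mul_right ?_ (pow_pos hpa d)
    calc 1 * ((p : ℝ) ^ a) ^ d ≤ ((p ^ a / t + 1 : ℕ) : ℝ) ^ d * h := by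
          rw [one_mul]
          exact_mod_cast H a
      _ ≤ ((1 / t + (p : ℝ)⁻¹ ^ a) * (p : ℝ) ^ a) ^ d * h := by gcongr
      _ = _ := by rw [mul_pow]; ring
  have hle : 1 ≤ ((1 : ℝ) / t + 0) ^ d * h := ge_of_tendsto' hlim hone
  rw [add_zero, div_pow, one_pow, one_div_mul_eq_div, le_div_iff₀ (by positivity), one_mul] at hle
  exact_mod_cast hle

theorem exists_pos_tendsto_apply_pow_div {f : ℕ → ℕ} {p d A : ℕ} (hp : 1 < p)
    (hmul : ∀ n m, f (n * m) ≤ m ^ d * f n) (hlow : ∀ n, 0 < n → n ^ d ≤ A * f n) :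
    ∃ L : ℝ, 0 < L ∧
      Filter.Tendsto (fun e => (f (p ^ e) : ℝ) / ((p : ℝ) ^ e) ^ d) Filter.atTop (nhds L) := by
  have hanti : Antitone fun e => (f (p ^ e) : ℝ) / ((p : ℝ) ^ e) ^ d :=
    antitone_nat_of_succ_le fun e => by
      have hle : (f (p ^ (e + 1)) : ℝ) ≤ (p : ℝ) ^ d * f (p ^ e) := by
        exact_mod_cast hmul (p ^ e) p
      rw [div_le_div_iff₀ (by positivity) (by positivity), pow_succ (p : ℝ) e, mul_pow]
      nlinarith [show (0 : ℝ) < ((p : ℝ) ^ e) ^ d by positivity]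
  have hA : 0 < A := Nat.pos_of_ne_zero fun hA => by simpa [hA] using hlow 1 one_pos
  have hle (e : ℕ) : 1 / (A : ℝ) ≤ f (p ^ e) / ((p : ℝ) ^ e) ^ d := by
    rw [div_le_div_iff₀ (by positivity) (by positivity), one_mul, mul_comm]
    exact_mod_cast hlow (p ^ e) (by positivity)
  have hlim := tendsto_atTop_ciInf hanti ⟨1 / A, by rintro _ ⟨e, rfl⟩; exact hle e⟩
  exact ⟨_, (by positivity : (0 : ℝ) < 1 / A).trans_le (ge_of_tendsto' hlim hle), hlim⟩

/- If `f (p ^ e) / (p ^ e) ^ d` tends to `L`, then comparing `f (t * p ^ e)` with `f (p ^ (e + a))`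
and letting `e → ∞` gives `(p ^ a) ^ d * L ≤ (p ^ a / t + 1) ^ d * h * L`. -/
theorem pow_le_of_mul_apply_mul_le {f : ℕ → ℕ} {p d t h A C : ℕ} (hp : 1 < p) (ht : 0 < t)
    (hmono : Monotone f) (hmul : ∀ n m, f (n * m) ≤ m ^ d * f n)
    (hlow : ∀ n, 0 < n → n ^ d ≤ A * f n)
    (hrec : ∀ e, p ^ e * f (t * p ^ e) ≤ h * (p ^ e * f (p ^ e)) + C * (p ^ e) ^ d) :
    t ^ d ≤ h := by
  obtain ⟨L, hL_pos, hL⟩ := exists_pos_tendsto_apply_pow_div hp hmul hlow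
  set φ := fun e => (f (p ^ e) : ℝ) / ((p : ℝ) ^ e) ^ d with hφ
  refine pow_le_of_forall_pow_le_div_add_one_pow_mul hp ht fun a => ?_
  set m := p ^ a / t + 1
  have hφ_shift (e : ℕ) :
      ((p : ℝ) ^ a) ^ d * φ (e + a) ≤ (m : ℝ) ^ d * (h * φ e + C * (p : ℝ)⁻¹ ^ e) := by
    have hpm : p ^ a ≤ t * m := (Nat.lt_mul_div_succ (p ^ a) ht).le
    have hshift : f (p ^ (e + a)) ≤ m ^ d * f (t * p ^ e) :=
      (hmono (by rw [pow_add]; nlinarith [Nat.zero_le (p ^ e)])).trans (hmul (t * p ^ e) m)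
    calc ((p : ℝ) ^ a) ^ d * φ (e + a) = f (p ^ (e + a)) / ((p : ℝ) ^ e) ^ d := by
          simp only [hφ, pow_add, mul_pow]
          field_simp
      _ ≤ ((m ^ d * f (t * p ^ e) : ℕ) : ℝ) / ((p : ℝ) ^ e) ^ d := by gcongr
      _ = (m : ℝ) ^ d * ((p ^ e * f (t * p ^ e) : ℕ) / ((p : ℝ) ^ e * ((p : ℝ) ^ e) ^ d)) := by
          push_cast
          field_simp
      _ ≤ (m : ℝ) ^ d * ((h * (p ^ e * f (p ^ e)) + C * (p ^ e) ^ d : ℕ) /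
            ((p : ℝ) ^ e * ((p : ℝ) ^ e) ^ d)) := by gcongr; exact hrec e
      _ = _ := by
          simp only [hφ, inv_pow]
          push_cast
          field_simp
  have hlim : ((p : ℝ) ^ a) ^ d * L ≤ (m : ℝ) ^ d * (h * L + C * 0) :=
    le_of_tendsto_of_tendsto' ((hL.comp (Filter.tendsto_add_atTop_nat a)).const_mul _)
      (((hL.const_mul _).add ((tendsto_pow_atTop_nhds_zero_of_lt_one (by positivity)
        (inv_lt_one_of_one_lt₀ (by exact_mod_cast hp))).const_mul _)).const_mul _) hφ_shift
  rw [mul_zero, add_zero, ← mul_assoc] at hlim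
  exact_mod_cast le_of_mul_le_mul_right hlim hL_pos

/-! ### Frobenius evaluations and Q-sequences -/

section SequenceRing

variable {R : Type*} [CommRing R]

theorem colength_le_add_of_pow_mul_mem {ι : Type*} {J M : Ideal R} (hJM : J ≤ M) {c s : R} {N : ℕ}
    {z : ι → R} (hz : ∀ i, c ^ N * (z i * s) ∈ M) :
    colength M ≤ colength (M ⊔ Ideal.span {s}) +
      (colength (Ideal.span (Set.range z)) + colength (Ideal.span {c ^ N} ⊔ J)) := by
  rw [colength_eq_add M s, colength_eq_add (M.colon {s}) (c ^ N), add_comm]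
  gcongr
  · refine colength_anti (Ideal.span_le.2 ?_)
    rintro _ ⟨i, rfl⟩
    simpa only [SetLike.mem_coe, Submodule.mem_colon_singleton, smul_eq_mul, mul_left_comm,
      mul_assoc] using hz i
  · exact colength_anti (sup_le le_sup_right ((hJM.trans Ideal.le_colon).trans le_sup_left))

theorem colength_span_pow_sup_mono (c : R) (J : Ideal R) {N N' : ℕ} (h : N ≤ N') :
    colength (Ideal.span {c ^ N} ⊔ J) ≤ colength (Ideal.span {c ^ N'} ⊔ J) :=
  colength_anti (sup_le_sup_right
    (Ideal.span_singleton_le_span_singleton.2 (pow_dvd_pow c h)) _)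

variable {B : Type*} [CommRing B] [Algebra (ℕ → R) B] {c : R}
  [IsLocalization.Away (fun _ => c : ℕ → R) B]

theorem exists_pow_mul_mem_of_algebraMap_mem_map_pi {M : ℕ → Ideal R} {r : ℕ → R}
    (h : algebraMap (ℕ → R) B r ∈ (Ideal.pi M).map (algebraMap (ℕ → R) B)) :
    ∃ N, ∀ e, c ^ N * r e ∈ M e := by
  obtain ⟨_, ⟨N, rfl⟩, hN⟩ := (IsLocalization.algebraMap_mem_map_algebraMap_iff
    (Submonoid.powers (fun _ => c : ℕ → R)) _ _ _).1 h
  exact ⟨N, fun e => hN e⟩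

variable {S : Type*} [CommRing S]

theorem map_sup_span_singleton_le_map_pi {Φ : S →+* B} {U : Ideal S} {M : ℕ → Ideal R}
    (hU : U.map Φ ≤ (Ideal.pi M).map (algebraMap (ℕ → R) B)) {s : S} {a σ : ℕ → R}
    (ha : IsUnit (algebraMap (ℕ → R) B a))
    (hσ : Φ s * algebraMap (ℕ → R) B a = algebraMap (ℕ → R) B σ) :
    (U ⊔ Ideal.span {s}).map Φ ≤
      (Ideal.pi fun e => M e ⊔ Ideal.span {σ e}).map (algebraMap (ℕ → R) B) := by
  rw [Ideal.map_sup, Ideal.map_span, Set.image_singleton]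
  refine sup_le (hU.trans (Ideal.map_mono fun r hr e => Submodule.mem_sup_left (hr e)))
    ((Ideal.span_singleton_le_iff_mem _).2 ?_)
  rw [← Ideal.mul_unit_mem_iff_mem _ ha, hσ]
  exact Ideal.mem_map_of_mem _ fun e => Submodule.mem_sup_right (Ideal.mem_span_singleton_self _)

/- Each cyclic factor of the chain costs one `colength (z)` in every degree `e`, up to the error
caused by the denominator `c ^ N`, which does not depend on `e`. -/
theorem HasCyclicChain.exists_colength_le {ι : Type*} [Finite ι] {y : ι → S} {z : ι → ℕ → R}
    {Φ : S →+* B} (hΦ : ∀ i, Φ (y i) = algebraMap (ℕ → R) B (z i)) {J : ℕ → Ideal R} {h : ℕ}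
    {U : Ideal S} (H : HasCyclicChain (Ideal.span (Set.range y)) h U) {M : ℕ → Ideal R}
    (hJM : J ≤ M) (hU : U.map Φ ≤ (Ideal.pi M).map (algebraMap (ℕ → R) B)) :
    ∃ N : ℕ, ∀ e, colength (M e) ≤ h * colength (Ideal.span (Set.range fun i => z i e)) +
      (h + 1) * colength (Ideal.span {c ^ N} ⊔ J e) := by
  induction H generalizing M with
  | top =>
    rw [Ideal.map_top, top_le_iff, Ideal.eq_top_iff_one, ← map_one (algebraMap (ℕ → R) B)] at hU
    obtain ⟨N, hN⟩ := exists_pow_mul_mem_of_algebraMap_mem_map_pi (c := c) hU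
    refine ⟨N, fun e => ?_⟩
    simpa using colength_anti (sup_le ((Ideal.span_singleton_le_iff_mem _).2
      (by simpa using hN e)) (hJM e))
  | @cons h U s hs _ ih =>
    obtain ⟨⟨σ, n⟩, hσ⟩ := IsLocalization.surj (Submonoid.powers (fun _ => c : ℕ → R)) (Φ s)
    have hn := IsLocalization.map_units B n
    have hstep := map_sup_span_singleton_le_map_pi hU hn hσ
    obtain ⟨N, hN⟩ := ih (hJM.trans fun _ => le_sup_left) hstep
    have hzσ (i : ι) : ∃ N, ∀ e, c ^ N * (z i e * σ e) ∈ M e := by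
      refine exists_pow_mul_mem_of_algebraMap_mem_map_pi (B := B) (r := z i * σ) ?_
      rw [map_mul, ← hσ, ← hΦ, ← mul_assoc, Ideal.mul_unit_mem_iff_mem _ hn, ← map_mul]
      exact hU (Ideal.mem_map_of_mem _ (Submodule.mem_colon_singleton.1
        (hs (Ideal.subset_span ⟨i, rfl⟩))))
    choose N' hN' using hzσ
    obtain ⟨N₀, hN₀⟩ := Set.Finite.bddAbove (Set.finite_range N')
    refine ⟨N + N₀, fun e => ?_⟩
    have hz (i : ι) : c ^ N₀ * (z i e * σ e) ∈ M e :=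
      Ideal.mem_of_dvd _ (mul_dvd_mul_right (pow_dvd_pow c (hN₀ ⟨i, rfl⟩)) _) (hN' i e)
    set ε := colength (Ideal.span {c ^ (N + N₀)} ⊔ J e)
    set ζ := colength (Ideal.span (Set.range fun i => z i e))
    calc colength (M e) ≤ _ := colength_le_add_of_pow_mul_mem (hJM e) hz
      _ ≤ (h * ζ + (h + 1) * ε) + (ζ + ε) := by
        refine add_le_add ((hN e).trans ?_) ?_ <;> gcongr <;>
          exact colength_span_pow_sup_mono _ _ (by lia)
      _ = _ := by push_cast; ring

theorem map_powIdeal_le_map_pi {ι : Type*} {x : ι → R} {y : ι → S} {Φ : S →+* B} {q : ℕ → ℕ}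
    (hΦ : ∀ i, Φ (y i) = algebraMap (ℕ → R) B fun e => x i ^ q e) (t : ℕ) :
    (powIdeal y t).map Φ ≤
      (Ideal.pi fun e => powIdeal x (t * q e)).map (algebraMap (ℕ → R) B) := by
  rw [powIdeal, Ideal.map_span, Ideal.span_le]
  rintro _ ⟨_, ⟨i, rfl⟩, rfl⟩
  simp only [map_pow, hΦ]
  rw [← map_pow]
  refine Ideal.mem_map_of_mem _ fun e => ?_
  rw [Pi.pow_apply, ← pow_mul, mul_comm]
  exact pow_mem_powIdeal _ _ _

end SequenceRing

theorem colength_powIdeal_ne_top {R : Type*} [CommRing R] [IsNoetherianRing R] [IsLocalRing R]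
    {d : ℕ} {x : Fin d → R} (hx : (Ideal.span (Set.range x)).radical = IsLocalRing.maximalIdeal R)
    (n : ℕ) : colength (powIdeal x n) ≠ ⊤ := by
  obtain ⟨k, hk⟩ := exists_pow_le_of_radical_eq hx
  exact colength_ne_top_of_pow_le (pow_le_powIdeal hk n)

theorem isQSequence_of_frobenius_evaluation {R : Type*} [CommRing R] [IsNoetherianRing R]
    [IsLocalRing R] [IsDomain R] {B : Type*} [CommRing B] [Algebra (ℕ → R) B] {c : R} (hc : c ≠ 0)
    [IsLocalization.Away (fun _ => c : ℕ → R) B] {S : Type u} [CommRing S] (Φ : S →+* B) {p : ℕ}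
    (hp : 1 < p) {d : ℕ} (hd : ringKrullDim R = d) {x : Fin d → R}
    (hx : (Ideal.span (Set.range x)).radical = IsLocalRing.maximalIdeal R) {y : Fin d → S}
    (hΦ : ∀ i, Φ (y i) = algebraMap (ℕ → R) B fun e => x i ^ p ^ e) : IsQSequence y := by
  refine isQSequence_iff.2 fun t ht h H => ?_
  obtain ⟨N, hN⟩ := H.exists_colength_le (c := c) hΦ le_rfl (map_powIdeal_le_map_pi hΦ t)
  have hxm (i : Fin d) : x i ∈ IsLocalRing.maximalIdeal R :=
    hx ▸ Ideal.le_radical (Ideal.subset_span ⟨i, rfl⟩)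
  obtain ⟨C, hC⟩ := exists_mul_colength_span_sup_powIdeal_le hd (pow_ne_zero N hc) hx
  obtain ⟨A, hA⟩ := exists_pow_le_mul_colength_powIdeal hd hxm
  choose f hf using fun n => ENat.ne_top_iff_exists.1 (colength_powIdeal_ne_top hx n)
  refine pow_le_of_mul_apply_mul_le (f := f) (A := A) (C := (h + 1) * C * t ^ d) hp ht
    (fun m n hmn => ?_) (fun n m => ?_) (fun n hn => ?_) fun e => ?_ <;>
    rw [← Nat.cast_le (α := ℕ∞)] <;> push_cast [hf]
  · exact colength_anti (powIdeal_anti x hmn)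
  · exact colength_powIdeal_mul_le x n m
  · exact hA n hn
  · set ε := colength (Ideal.span {c ^ N} ⊔ powIdeal x (t * p ^ e))
    have hε : (p : ℕ∞) ^ e * ε ≤ C * (t * p ^ e) ^ d := by
      refine le_trans ?_ (by exact_mod_cast hC (t * p ^ e) (by positivity))
      gcongr
      exact_mod_cast Nat.le_mul_of_pos_left _ ht
    calc (p : ℕ∞) ^ e * colength (powIdeal x (t * p ^ e))
        ≤ p ^ e * (h * colength (powIdeal x (p ^ e)) + (h + 1) * ε) := by gcongr; exact hN e
      _ = h * (p ^ e * colength (powIdeal x (p ^ e))) + (h + 1) * (p ^ e * ε) := by ring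
      _ ≤ h * (p ^ e * colength (powIdeal x (p ^ e))) + (h + 1) * (C * (t * p ^ e) ^ d) := by gcongr
      _ = _ := by rw [mul_pow]; ring

/-! ### Tight closure in a domain -/

section TightClosure

variable {R : Type*} [CommRing R] (p : ℕ) [ExpChar R p]

/-- The ideal of all `u` with `c * u ^ q ∈ J ^ [q]` for every power `q` of `p`: the contribution of
a single multiplier `c` to the tight closure of `J`. -/
noncomputable def frobeniusColon (c : R) (J : Ideal R) : Ideal R :=
  ⨅ e, ((J.map (iterateFrobenius R p e)).colon {c}).comap (iterateFrobenius R p e)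

variable {p} {c : R} {J : Ideal R}

theorem mem_frobeniusColon {u : R} :
    u ∈ frobeniusColon p c J ↔ ∀ e, c * u ^ p ^ e ∈ J.map (iterateFrobenius R p e) := by
  simp only [frobeniusColon, Ideal.mem_iInf, Ideal.mem_comap, Submodule.mem_colon_singleton,
    iterateFrobenius_def, smul_eq_mul, mul_comm]

theorem le_frobeniusColon : J ≤ frobeniusColon p c J := fun _ hu =>
  mem_frobeniusColon.2 fun e =>
    Ideal.mul_mem_left _ _ (Ideal.mem_map_of_mem (iterateFrobenius R p e) hu)

theorem frobeniusColon_le_of_dvd {c' : R} (h : c ∣ c') :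
    frobeniusColon p c J ≤ frobeniusColon p c' J := fun _ hu =>
  mem_frobeniusColon.2 fun e =>
    Ideal.mem_of_dvd _ (mul_dvd_mul_right h _) (mem_frobeniusColon.1 hu e)

theorem frobeniusColon_frobeniusColon_le (c' : R) :
    frobeniusColon p c' (frobeniusColon p c J) ≤ frobeniusColon p (c' * c) J := by
  intro u hu
  refine mem_frobeniusColon.2 fun e => ?_
  have hle : (frobeniusColon p c J).map (iterateFrobenius R p e) ≤
      (J.map (iterateFrobenius R p e)).colon {c} := Ideal.map_le_iff_le_comap.2 (iInf_le _ e)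
  have hmem := Submodule.mem_colon_singleton.1 (hle (mem_frobeniusColon.1 hu e))
  rwa [smul_eq_mul, mul_right_comm] at hmem

variable [IsDomain R]

theorem directed_frobeniusColon (J : Ideal R) :
    Directed (· ≤ ·) fun c : {c : R // c ≠ 0} => frobeniusColon p c.1 J := fun c c' =>
  ⟨⟨c * c', mul_ne_zero c.2 c'.2⟩, frobeniusColon_le_of_dvd (dvd_mul_right _ _),
    frobeniusColon_le_of_dvd (dvd_mul_left _ _)⟩

variable (p) in
/-- The tight closure of `J` as an ideal; membership in it is `MemTightClosure`, see
`mem_tightClosure`. -/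
noncomputable def tightClosure (J : Ideal R) : Ideal R :=
  ⨆ c : {c : R // c ≠ 0}, frobeniusColon p c.1 J

theorem mem_tightClosure_iff_exists {u : R} :
    u ∈ tightClosure p J ↔ ∃ c : R, c ≠ 0 ∧ u ∈ frobeniusColon p c J := by
  have : Nonempty {c : R // c ≠ 0} := ⟨⟨1, one_ne_zero⟩⟩
  simp [tightClosure, Submodule.mem_iSup_of_directed _ (directed_frobeniusColon J)]

theorem frobeniusColon_le_tightClosure (hc : c ≠ 0) : frobeniusColon p c J ≤ tightClosure p J :=
  fun _ hu => mem_tightClosure_iff_exists.2 ⟨c, hc, hu⟩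

theorem le_tightClosure : J ≤ tightClosure p J :=
  le_frobeniusColon.trans (frobeniusColon_le_tightClosure one_ne_zero)

theorem exists_tightClosure_eq_frobeniusColon [IsNoetherianRing R] (J : Ideal R) :
    ∃ c : R, c ≠ 0 ∧ tightClosure p J = frobeniusColon p c J := by
  obtain ⟨_, ⟨⟨c, hc⟩, rfl⟩, hmax⟩ := set_has_maximal_iff_noetherian.2 ‹IsNoetherianRing R›
    (Set.range fun c : {c : R // c ≠ 0} => frobeniusColon p c.1 J) ⟨_, ⟨1, one_ne_zero⟩, rfl⟩
  refine ⟨c, hc, le_antisymm (iSup_le fun c' => ?_) (frobeniusColon_le_tightClosure hc)⟩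
  obtain ⟨c'', hc₁, hc₂⟩ := directed_frobeniusColon (p := p) J ⟨c, hc⟩ c'
  exact hc₂.trans_eq (eq_of_le_of_not_lt hc₁ (hmax _ ⟨c'', rfl⟩)).symm

theorem tightClosure_tightClosure [IsNoetherianRing R] (J : Ideal R) :
    tightClosure p (tightClosure p J) = tightClosure p J := by
  refine le_antisymm ?_ le_tightClosure
  obtain ⟨c, hc, hJ⟩ := exists_tightClosure_eq_frobeniusColon (p := p) J
  obtain ⟨c', hc', hJ'⟩ := exists_tightClosure_eq_frobeniusColon (p := p) (tightClosure p J)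
  rw [hJ', hJ]
  exact (frobeniusColon_frobeniusColon_le c').trans
    ((frobeniusColon_le_tightClosure (mul_ne_zero hc' hc)).trans_eq hJ)

theorem mem_tightClosure {R : Type u} [CommRing R] [IsDomain R] [ExpChar R p] {J : Ideal R}
    {u : R} : u ∈ tightClosure p J ↔ MemTightClosure R p J u := by
  simp only [mem_tightClosure_iff_exists, mem_frobeniusColon, MemTightClosure,
    IsDomain.minimalPrimes_eq_singleton_bot, Set.mem_singleton_iff, forall_eq, Ideal.mem_bot]
  rfl

end TightClosure

/-! ### The generic forcing algebra -/

section Forcing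

/-- The generic forcing algebra `R[Z₁, …, Zₙ] / (u - ∑ Zₗ gₗ)`. -/
abbrev GenericForcingAlgebra {R : Type*} [CommRing R] {n : ℕ} (g : Fin n → R) (u : R) :=
  MvPolynomial (Fin n) R ⧸ Ideal.span {MvPolynomial.C u -
    ∑ l : Fin n, MvPolynomial.X l * MvPolynomial.C (g l)}

namespace GenericForcingAlgebra

variable {R : Type*} [CommRing R] {n : ℕ} {g : Fin n → R} {u : R}

theorem algebraMap_mem_map (g : Fin n → R) (u : R) :
    algebraMap R (GenericForcingAlgebra g u) u ∈
      (Ideal.span (Set.range g)).map (algebraMap R (GenericForcingAlgebra g u)) := by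
  have hrel : algebraMap R (GenericForcingAlgebra g u) u =
      ∑ l, Ideal.Quotient.mk _ (.X l) * algebraMap R (GenericForcingAlgebra g u) (g l) := by
    have hmk := (Ideal.Quotient.mk_eq_mk_iff_sub_mem (MvPolynomial.C u) _).2
      (Ideal.mem_span_singleton_self (MvPolynomial.C u -
        ∑ l : Fin n, MvPolynomial.X l * MvPolynomial.C (g l)))
    simp only [map_sum, map_mul] at hmk
    exact hmk
  rw [hrel]
  exact Ideal.sum_mem _ fun l _ =>
    Ideal.mul_mem_left _ _ (Ideal.mem_map_of_mem _ (Ideal.subset_span ⟨l, rfl⟩))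

theorem exists_ringHom_comp_algebraMap_eq {B : Type*} [CommRing B] (φ : R →+* B)
    (h : φ u ∈ (Ideal.span (Set.range g)).map φ) :
    ∃ Φ : GenericForcingAlgebra g u →+* B, Φ.comp (algebraMap R _) = φ := by
  rw [Ideal.map_span, ← Set.range_comp, Ideal.mem_span_range_iff_exists_fun] at h
  obtain ⟨w, hw⟩ := h
  have hker : Ideal.span {MvPolynomial.C u -
      ∑ l : Fin n, MvPolynomial.X l * MvPolynomial.C (g l)} ≤
      RingHom.ker (MvPolynomial.eval₂Hom φ w) := by
    rw [Ideal.span_singleton_le_iff_mem, RingHom.mem_ker]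
    simpa [sub_eq_zero] using hw.symm
  exact ⟨Ideal.Quotient.lift _ _ hker, RingHom.ext fun r => MvPolynomial.eval₂Hom_C φ w r⟩

end GenericForcingAlgebra

theorem isForcingAlgebra_iff {R : Type u} [CommRing R] {I : Ideal R} {u : R} {S : Type u}
    [CommRing S] [Algebra R S] :
    IsForcingAlgebra R R I u S ↔ algebraMap R S u ∈ I.map (algebraMap R S) := by
  have hmap : (Submodule.baseChange S I).map
      (TensorProduct.AlgebraTensorModule.rid R S S).toLinearMap = I.map (algebraMap R S) := by
    rw [Submodule.baseChange_eq_span, Submodule.map_span]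
    refine congrArg (Submodule.span S) ?_
    ext s
    simp [Algebra.smul_def]
  have hone : TensorProduct.AlgebraTensorModule.rid R S S (1 ⊗ₜ[R] u) = algebraMap R S u := by
    simp [Algebra.smul_def]
  rw [IsForcingAlgebra, ← hmap, ← hone]
  exact ((TensorProduct.AlgebraTensorModule.rid R S S).injective.mem_set_image).symm

theorem isQSequence_genericForcingAlgebra {R : Type u} [CommRing R] [IsNoetherianRing R]
    [IsLocalRing R] [IsDomain R] {p : ℕ} [Fact p.Prime] [CharP R p] {d : ℕ}
    (hd : ringKrullDim R = d) {n : ℕ} {g : Fin n → R} {u : R}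
    (hu : u ∈ tightClosure p (Ideal.span (Set.range g))) {x : Fin d → R}
    (hx : (Ideal.span (Set.range x)).radical = IsLocalRing.maximalIdeal R) :
    IsQSequence fun i => algebraMap R (GenericForcingAlgebra g u) (x i) := by
  obtain ⟨c, hc, hcu⟩ := mem_tightClosure_iff_exists.1 hu
  have hcoef (e : ℕ) : ∃ r : Fin n → R, ∑ l, r l * g l ^ p ^ e = c * u ^ p ^ e := by
    have hmem := mem_frobeniusColon.1 hcu e
    rwa [Ideal.map_span, ← Set.range_comp, Ideal.mem_span_range_iff_exists_fun] at hmem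
  choose r hr using hcoef
  let cSeq : ℕ → R := fun _ => c
  let φ : R →+* Localization.Away cSeq :=
    (algebraMap (ℕ → R) _).comp (RingHom.pi fun e => iterateFrobenius R p e)
  have hφu : φ u ∈ (Ideal.span (Set.range g)).map φ := by
    rw [← Ideal.unit_mul_mem_iff_mem _ (IsLocalization.Away.algebraMap_isUnit cSeq)]
    have hsum : algebraMap (ℕ → R) (Localization.Away cSeq) cSeq * φ u =
        ∑ l, algebraMap (ℕ → R) (Localization.Away cSeq) (fun e => r e l) * φ (g l) := by
      simp only [φ, RingHom.comp_apply, ← map_mul, ← map_sum]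
      congr 1
      ext e
      simpa [cSeq, iterateFrobenius_def] using (hr e).symm
    rw [hsum]
    exact Ideal.sum_mem _ fun l _ =>
      Ideal.mul_mem_left _ _ (Ideal.mem_map_of_mem _ (Ideal.subset_span ⟨l, rfl⟩))
  obtain ⟨Φ, hΦ⟩ := GenericForcingAlgebra.exists_ringHom_comp_algebraMap_eq φ hφu
  exact isQSequence_of_frobenius_evaluation hc Φ (Fact.out : p.Prime).one_lt hd hx
    fun i => RingHom.congr_fun hΦ (x i)

end Forcing

/-! ### An injective module with simple socle -/

section InjectiveHull

open IsLocalRing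

section Complements

variable {R Q : Type*} [Ring R] [AddCommGroup Q] [Module R Q] {A C E : Submodule R Q}

theorem exists_le_maximal_disjoint (h : Disjoint A E) : ∃ C, E ≤ C ∧ Maximal (Disjoint A) C :=
  zorn_le_nonempty₀ {C | Disjoint A C} (fun c hc hchain _ _ =>
    ⟨sSup c, hchain.directedOn.disjoint_sSup_right.2 fun _ hb => hc hb, fun _ => le_sSup⟩) E h

theorem exists_ne_zero_mem_eq_add_smul (hC : Maximal (Disjoint A) C) {q : Q} (hq : q ∉ C) :
    ∃ c ∈ C, ∃ r : R, c + r • q ∈ A ∧ c + r • q ≠ 0 := by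
  have hmeet : ¬ Disjoint A (C ⊔ R ∙ q) := fun hdisj =>
    hq (hC.2 hdisj le_sup_left (Submodule.mem_sup_right (Submodule.mem_span_singleton_self q)))
  rw [Submodule.disjoint_def] at hmeet
  push Not at hmeet
  obtain ⟨a, haA, ha, ha0⟩ := hmeet
  obtain ⟨c, hcC, b, hb, rfl⟩ := Submodule.mem_sup.1 ha
  obtain ⟨r, rfl⟩ := Submodule.mem_span_singleton.1 hb
  exact ⟨c, hcC, r, haA, ha0⟩

theorem mem_ker_of_apply_mem (hC : Maximal (Disjoint E) C) {h : Q →ₗ[R] Q}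
    (hE : ∀ e ∈ E, h e = e) (hker : C ≤ LinearMap.ker h) {q : Q} (hq : h q ∈ C) : h q = 0 := by
  by_contra hne
  obtain ⟨c, hc, r, hmem, hne0⟩ := exists_ne_zero_mem_eq_add_smul hC fun hqC => hne (hker hqC)
  have hfix := hE _ hmem
  rw [map_add, LinearMap.mem_ker.1 (hker hc), zero_add, map_smul] at hfix
  exact hne0 (Submodule.disjoint_def.1 hC.1 _ hmem (hfix ▸ C.smul_mem r hq))

end Complements

theorem exists_linearMap_comp_eq_of_ker_le {R X Y : Type*} {E : Type u} [Ring R] [Small.{u} R]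
    [AddCommGroup E] [Module R E] [AddCommGroup X] [Module R X] [AddCommGroup Y] [Module R Y]
    [Module.Injective R E] {f : X →ₗ[R] Y} {g : X →ₗ[R] E}
    (h : LinearMap.ker f ≤ LinearMap.ker g) : ∃ l : Y →ₗ[R] E, l ∘ₗ f = g := by
  obtain ⟨l, hl⟩ := Module.Injective.extension_property R E _ _
    ((LinearMap.ker f).liftQ f le_rfl)
    (LinearMap.ker_eq_bot.1 (Submodule.ker_liftQ_eq_bot _ _ _ le_rfl))
    ((LinearMap.ker f).liftQ g h)
  refine ⟨l, ?_⟩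
  rw [← (LinearMap.ker f).liftQ_mkQ f le_rfl, ← LinearMap.comp_assoc, hl, Submodule.liftQ_mkQ]

variable {R : Type u} [CommRing R]

section Retraction

variable {Q : Type u} [AddCommGroup Q] [Module R Q] {C E : Submodule R Q}

theorem exists_retraction_of_maximal_disjoint [Module.Injective R Q]
    (hE : Maximal (Disjoint C) E) (hC : Maximal (Disjoint E) C) :
    ∃ h : Q →ₗ[R] E, h ∘ₗ E.subtype = LinearMap.id := by
  obtain ⟨h, hh⟩ := exists_linearMap_comp_eq_of_ker_le (f := E.subtype.coprod C.subtype)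
    (g := E.subtype ∘ₗ LinearMap.fst R E C) (by
      rintro ⟨a, b⟩ hab
      have hab' : (a : Q) + b = 0 := hab
      exact Submodule.disjoint_def.1 hC.1 a a.2
        (eq_neg_of_add_eq_zero_left hab' ▸ C.neg_mem b.2))
  have hhE : ∀ e ∈ E, h e = e := fun e he => by
    simpa using LinearMap.congr_fun hh (⟨e, he⟩, 0)
  have hhC : C ≤ LinearMap.ker h := fun c hc => by
    simpa using LinearMap.congr_fun hh (0, ⟨c, hc⟩)
  have hrange : LinearMap.range h ≤ E := by
    refine hE.2 (Submodule.disjoint_def.2 ?_) fun e he => ⟨e, hhE e he⟩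
    rintro _ hq ⟨q, rfl⟩
    exact mem_ker_of_apply_mem hC hhE hhC hq
  exact ⟨h.codRestrict E fun q => hrange ⟨q, rfl⟩,
    LinearMap.ext fun e => Subtype.ext (hhE e e.2)⟩

theorem injective_of_retraction [Module.Injective R Q] {h : Q →ₗ[R] E}
    (hh : h ∘ₗ E.subtype = LinearMap.id) : Module.Injective R E where
  out X Y _ _ _ _ i hi g := by
    obtain ⟨l, hl⟩ := Module.Injective.out i hi (E.subtype ∘ₗ g)
    exact ⟨h ∘ₗ l, fun x => by
      rw [LinearMap.comp_apply, hl, LinearMap.comp_apply, ← LinearMap.comp_apply h, hh,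
        LinearMap.id_apply]⟩

end Retraction

variable [IsLocalRing R]

theorem mem_of_mem_torsionBySet_maximalIdeal {Q : Type*} [AddCommGroup Q] [Module R Q]
    {L C E : Submodule R Q} (hC : Maximal (Disjoint L) C) (hLE : L ≤ E) (hCE : Disjoint C E)
    {v : Q} (hvE : v ∈ E) (hv : v ∈ Submodule.torsionBySet R Q (maximalIdeal R)) : v ∈ L := by
  by_cases hvC : v ∈ C
  · exact Submodule.disjoint_def.1 hCE v hvC hvE ▸ L.zero_mem
  obtain ⟨c, hc, r, hmem, hne⟩ := exists_ne_zero_mem_eq_add_smul hC hvC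
  have hcE : c ∈ E := (E.add_mem_iff_left (E.smul_mem r hvE)).1 (hLE hmem)
  rw [Submodule.disjoint_def.1 hCE c hc hcE, zero_add] at hmem hne
  have hr : IsUnit r := by
    by_contra hr
    exact hne ((Submodule.mem_torsionBySet_iff _ _).1 hv ⟨r, hr⟩)
  exact (L.smul_mem_iff_of_isUnit hr).1 hmem

variable (R) in
theorem exists_injective_ne_zero_smul_eq_zero :
    ∃ (Q : Type u) (_ : AddCommGroup Q) (_ : Module R Q) (q : Q),
      Module.Injective R Q ∧ q ≠ 0 ∧ ∀ a ∈ maximalIdeal R, a • q = 0 := by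
  obtain ⟨Q, hQ, f, hf⟩ :=
    CategoryTheory.EnoughInjectives.presentation (ModuleCat.of R (ResidueField R))
  have hinj : Function.Injective f.hom := (ModuleCat.mono_iff_injective f).1 hf
  refine ⟨Q, inferInstance, inferInstance, f.hom (1 : ResidueField R),
    Module.injective_module_of_injective_object R Q, ?_, fun a ha => ?_⟩
  · exact (map_ne_zero_iff f.hom hinj).2 (one_ne_zero : (1 : ResidueField R) ≠ 0)
  · have hzero : a • (1 : ResidueField R) = 0 := by
      rw [Algebra.smul_def, mul_one]
      exact (residue_eq_zero_iff a).2 ha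
    rw [← map_smul, hzero, map_zero]

-- Inside an injective module containing the residue field `L`, take `C` maximal disjoint from `L`
-- and `E ⊇ L` maximal disjoint from `C`: then `E` is a direct summand in which `L` is essential.
variable (R) in
theorem exists_injective_torsionBySet_maximalIdeal_eq_span :
    ∃ (E : Type u) (_ : AddCommGroup E) (_ : Module R E) (e : E),
      Module.Injective R E ∧ e ≠ 0 ∧ Submodule.torsionBySet R E (maximalIdeal R) = R ∙ e := by
  obtain ⟨Q, _, _, q, hQ, hq0, hq⟩ := exists_injective_ne_zero_smul_eq_zero R
  obtain ⟨C, -, hC⟩ := exists_le_maximal_disjoint (disjoint_bot_right (a := R ∙ q))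
  obtain ⟨E, hqE, hE⟩ := exists_le_maximal_disjoint hC.1.symm
  obtain ⟨h, hh⟩ := exists_retraction_of_maximal_disjoint hE
    ⟨hE.1.symm, fun D hD => hC.2 (hD.mono_left hqE)⟩
  have hmem : q ∈ E := hqE (Submodule.mem_span_singleton_self q)
  refine ⟨E, inferInstance, inferInstance, ⟨q, hmem⟩, injective_of_retraction hh,
    fun h0 => hq0 (congrArg Subtype.val h0), le_antisymm (fun v hv => ?_) ?_⟩
  · have hvQ : (v : Q) ∈ Submodule.torsionBySet R Q (maximalIdeal R) :=
      (Submodule.mem_torsionBySet_iff _ _).2 fun a =>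
        congrArg Subtype.val ((Submodule.mem_torsionBySet_iff _ _).1 hv a)
    obtain ⟨r, hr⟩ := Submodule.mem_span_singleton.1
      (mem_of_mem_torsionBySet_maximalIdeal hC hqE hE.1 v.2 hvQ)
    exact Submodule.mem_span_singleton.2 ⟨r, Subtype.ext hr⟩
  · rw [Submodule.span_singleton_le_iff_mem, Submodule.mem_torsionBySet_iff]
    exact fun a => Subtype.ext (hq a a.2)

theorem isNoetherian_torsionBySet_maximalIdeal_pow [IsNoetherianRing R] {E : Type*}
    [AddCommGroup E] [Module R E]
    (hE : IsNoetherian R (Submodule.torsionBySet R E (maximalIdeal R))) (n : ℕ) :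
    IsNoetherian R (Submodule.torsionBySet R E (maximalIdeal R ^ n : Ideal R)) := by
  induction n with
  | zero =>
    rw [pow_zero, Ideal.one_eq_top, Submodule.top_coe, Submodule.torsionBySet_univ]
    infer_instance
  | succ n ih =>
    obtain ⟨r, y, hy⟩ := Submodule.fg_iff_exists_fin_generating_family.1
      (Ideal.fg_of_isNoetherianRing (maximalIdeal R))
    have hym : ∀ i, y i ∈ maximalIdeal R := fun i => hy ▸ Submodule.subset_span ⟨i, rfl⟩
    let T := Submodule.torsionBySet R E (maximalIdeal R ^ (n + 1) : Ideal R)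
    let φ : T →ₗ[R] Fin r → Submodule.torsionBySet R E (maximalIdeal R ^ n : Ideal R) :=
      LinearMap.pi fun i => (LinearMap.lsmul R E (y i)).restrict fun v hv =>
        (Submodule.mem_torsionBySet_iff _ _).2 fun a => by
          rw [LinearMap.lsmul_apply, smul_smul]
          exact (Submodule.mem_torsionBySet_iff _ _).1 hv
            ⟨a * y i, pow_succ (maximalIdeal R) n ▸ Ideal.mul_mem_mul a.2 (hym i)⟩
    have hker : ∀ v ∈ LinearMap.ker φ,
        T.subtype v ∈ Submodule.torsionBySet R E (maximalIdeal R) := by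
      intro v hv
      rw [← hy, ← Submodule.torsionBySet_eq_torsionBySet_span, Submodule.mem_torsionBySet_iff]
      rintro ⟨_, i, rfl⟩
      exact congrArg Subtype.val (congrFun hv i)
    have : IsNoetherian R (LinearMap.ker φ) := by
      refine isNoetherian_of_injective (T.subtype.restrict hker) fun a b hab => ?_
      have hval : (T.subtype.restrict hker a : E) = T.subtype.restrict hker b := by rw [hab]
      exact Subtype.ext (Subtype.ext hval)
    exact isNoetherian_of_range_eq_ker (LinearMap.ker φ).subtype φ (by simp)

end InjectiveHull

/-! ### Top local cohomology -/

section TopCohomology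

variable {R : Type*} [CommRing R] {ι : Type*}

/-- The submodule `N + (x₁ᵗ⁺¹, …, x_dᵗ⁺¹) M` of `M`; the exponents start at `1`. -/
def powSubmodule {M : Type*} [AddCommGroup M] [Module R M] (N : Submodule R M) (x : ι → R)
    (t : ℕ) : Submodule R M :=
  N ⊔ powIdeal x (t + 1) • ⊤

variable [Fintype ι]

theorem powIdeal_le_colon_prod_pow (x : ι → R) (t k : ℕ) :
    powIdeal x t ≤ (powIdeal x (t + k)).colon {(∏ i, x i) ^ k} :=
  powIdeal_le_iff.2 fun i => by
    obtain ⟨z, hz⟩ := Finset.dvd_prod_of_mem x (Finset.mem_univ i)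
    rw [Submodule.mem_colon_singleton, smul_eq_mul, hz, mul_pow, ← mul_assoc, ← pow_add]
    exact Ideal.mul_mem_right _ _ (pow_mem_powIdeal x (t + k) i)

variable {M : Type*} [AddCommGroup M] [Module R M] {N : Submodule R M} {x : ι → R}

theorem prod_pow_smul_mem_powSubmodule {t : ℕ} (k : ℕ) {m : M} (hm : m ∈ powSubmodule N x t) :
    (∏ i, x i) ^ k • m ∈ powSubmodule N x (t + k) := by
  suffices powSubmodule N x t ≤
      (powSubmodule N x (t + k)).comap (LinearMap.lsmul R M ((∏ i, x i) ^ k)) from this hm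
  refine sup_le (fun n hn => Submodule.mem_sup_left (N.smul_mem _ hn))
    (Submodule.smul_le.2 fun r hr m _ => Submodule.mem_sup_right ?_)
  rw [LinearMap.lsmul_apply, smul_smul, mul_comm]
  exact Submodule.smul_mem_smul
    (Submodule.mem_colon_singleton.1
      (add_right_comm t 1 k ▸ powIdeal_le_colon_prod_pow x (t + 1) k hr)) trivial

variable (N x)

/-- The transition maps of the direct system defining `TopCohomology`: multiplication by
`(∏ xᵢ) ^ (j - i)`. -/
def topCohomologyTransition (i j : ℕ) (h : i ≤ j) :
    (M ⧸ powSubmodule N x i) →ₗ[R] M ⧸ powSubmodule N x j :=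
  Submodule.mapQ _ _ (LinearMap.lsmul R M ((∏ i, x i) ^ (j - i))) fun m hm => by
    have := prod_pow_smul_mem_powSubmodule (j - i) hm
    rwa [Nat.add_sub_cancel' h] at this

theorem topCohomologyTransition_mk (i j : ℕ) (h : i ≤ j) (m : M) :
    topCohomologyTransition N x i j h (Submodule.Quotient.mk m) =
      Submodule.Quotient.mk ((∏ i, x i) ^ (j - i) • m) :=
  rfl

instance : DirectedSystem (fun t : ℕ => M ⧸ powSubmodule N x t)
    (fun i j h => topCohomologyTransition N x i j h) where
  map_self i m := by
    obtain ⟨m, rfl⟩ := Submodule.Quotient.mk_surjective _ m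
    rw [topCohomologyTransition_mk, Nat.sub_self, pow_zero, one_smul]
  map_map k j i hij hjk m := by
    obtain ⟨m, rfl⟩ := Submodule.Quotient.mk_surjective _ m
    rw [topCohomologyTransition_mk, topCohomologyTransition_mk, topCohomologyTransition_mk,
      smul_smul, ← pow_add, tsub_add_tsub_cancel hjk hij]

/-- The top local cohomology module of `M ⧸ N` with respect to `x₁, …, x_d`, as the direct limit of
the modules `M ⧸ (N + (x₁ᵗ⁺¹, …, x_dᵗ⁺¹) M)`; working with a submodule `N` avoids iterated quotients
when the number of elements is reduced. -/
abbrev TopCohomology :=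
  Module.DirectLimit (fun t : ℕ => M ⧸ powSubmodule N x t)
    (fun i j h => topCohomologyTransition N x i j h)

namespace TopCohomology

/-- The class `[m / (∏ xᵢ) ^ (t + 1)]` in top local cohomology. -/
noncomputable def of (t : ℕ) : M →ₗ[R] TopCohomology N x :=
  Module.DirectLimit.of R ℕ (fun t : ℕ => M ⧸ powSubmodule N x t)
    (fun i j h => topCohomologyTransition N x i j h) t ∘ₗ Submodule.mkQ _

variable {N x}

theorem exists_of (η : TopCohomology N x) : ∃ t m, of N x t m = η := by
  obtain ⟨t, m, rfl⟩ := Module.DirectLimit.exists_of η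
  obtain ⟨m, rfl⟩ := Submodule.Quotient.mk_surjective _ m
  exact ⟨t, m, rfl⟩

theorem of_add_prod_pow_smul (t k : ℕ) (m : M) :
    of N x (t + k) ((∏ i, x i) ^ k • m) = of N x t m := by
  have := Module.DirectLimit.of_f (R := R) (f := fun i j h => topCohomologyTransition N x i j h)
    (hij := Nat.le_add_right t k) (x := Submodule.Quotient.mk m)
  rwa [topCohomologyTransition_mk, Nat.add_sub_cancel_left] at this

theorem of_eq_zero_of_mem {t : ℕ} {m : M} (h : m ∈ powSubmodule N x t) : of N x t m = 0 := by
  rw [of, LinearMap.comp_apply, Submodule.mkQ_apply, (Submodule.Quotient.mk_eq_zero _).2 h,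
    map_zero]

theorem exists_mem_of_of_eq_zero {t : ℕ} {m : M} (h : of N x t m = 0) :
    ∃ k, (∏ i, x i) ^ k • m ∈ powSubmodule N x (t + k) := by
  obtain ⟨j, hj, h'⟩ := Module.DirectLimit.of.zero_exact h
  obtain ⟨k, rfl⟩ := Nat.exists_eq_add_of_le hj
  rw [Submodule.mkQ_apply, topCohomologyTransition_mk, Nat.add_sub_cancel_left] at h'
  exact ⟨k, (Submodule.Quotient.mk_eq_zero _).1 h'⟩

variable {P : Type*} [AddCommGroup P] [Module R P]

theorem hom_ext {f g : TopCohomology N x →ₗ[R] P} (h : ∀ t, f ∘ₗ of N x t = g ∘ₗ of N x t) :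
    f = g :=
  LinearMap.ext fun η => by
    obtain ⟨t, m, rfl⟩ := exists_of η
    exact LinearMap.congr_fun (h t) m

theorem exists_lift (g : ℕ → M →ₗ[R] P) (hker : ∀ t, powSubmodule N x t ≤ LinearMap.ker (g t))
    (hstep : ∀ t m, g (t + 1) ((∏ i, x i) • m) = g t m) :
    ∃ G : TopCohomology N x →ₗ[R] P, ∀ t, G ∘ₗ of N x t = g t := by
  have hadd : ∀ t k m, g (t + k) ((∏ i, x i) ^ k • m) = g t m := by
    intro t k
    induction k with
    | zero => intro m; simp
    | succ k ih => intro m; rw [pow_succ', mul_smul, ← add_assoc, hstep, ih]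
  refine ⟨Module.DirectLimit.lift R ℕ _ _ (fun t => (powSubmodule N x t).liftQ (g t) (hker t))
    fun i j h m => ?_, fun t => LinearMap.ext fun m => ?_⟩
  · obtain ⟨m, rfl⟩ := Submodule.Quotient.mk_surjective _ m
    obtain ⟨k, rfl⟩ := Nat.exists_eq_add_of_le h
    rw [topCohomologyTransition_mk, Nat.add_sub_cancel_left, Submodule.liftQ_apply,
      Submodule.liftQ_apply, hadd]
  · rw [of, LinearMap.comp_apply, LinearMap.comp_apply, Module.DirectLimit.lift_of]
    rfl

end TopCohomology

end TopCohomology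

section TopCohomologyStep

variable {R : Type*} [CommRing R] {M : Type*} [AddCommGroup M] [Module R M]

theorem powSubmodule_sup_span_singleton_smul {ι : Type*} (N : Submodule R M) (y : R) (x : ι → R)
    (t : ℕ) : powSubmodule (N ⊔ Ideal.span {y} • ⊤) x t = powSubmodule N x t ⊔ Ideal.span {y} • ⊤ :=
  sup_right_comm ..

theorem powSubmodule_fin_succ {d : ℕ} (N : Submodule R M) (x : Fin (d + 1) → R) (t : ℕ) :
    powSubmodule N x t =
      powSubmodule N (Fin.tail x) t ⊔ Ideal.span {x 0 ^ (t + 1)} • ⊤ := by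
  rw [powSubmodule, powSubmodule, powIdeal_fin_succ, Submodule.sup_smul, sup_assoc,
    sup_comm (Ideal.span _ • ⊤)]

theorem mem_sup_span_singleton_smul_top {N : Submodule R M} {y : R} {m : M} :
    m ∈ N ⊔ Ideal.span {y} • ⊤ ↔ ∃ a, m - y • a ∈ N := by
  rw [Submodule.mem_sup]
  refine ⟨fun ⟨n, hn, z, hz, h⟩ => ?_, fun ⟨a, ha⟩ => ⟨_, ha, y • a,
    Submodule.smul_mem_smul (Ideal.mem_span_singleton_self y) trivial, sub_add_cancel m _⟩⟩
  rw [Submodule.ideal_span_singleton_smul] at hz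
  obtain ⟨a, -, rfl⟩ := hz
  exact ⟨a, by rwa [← h, DistribSMul.toLinearMap_apply, add_sub_cancel_right]⟩

variable {d : ℕ} {N : Submodule R M} {x : Fin (d + 1) → R}

theorem mem_powSubmodule_fin_succ {t : ℕ} {m : M} :
    m ∈ powSubmodule N x t ↔ ∃ a, m - x 0 ^ (t + 1) • a ∈ powSubmodule N (Fin.tail x) t := by
  rw [powSubmodule_fin_succ, mem_sup_span_singleton_smul_top]

theorem pow_smul_mem_powSubmodule {t : ℕ} {m : M}
    (hm : m ∈ powSubmodule (N ⊔ Ideal.span {x 0} • ⊤) (Fin.tail x) t) :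
    x 0 ^ t • m ∈ powSubmodule N x t := by
  rw [powSubmodule_sup_span_singleton_smul, mem_sup_span_singleton_smul_top] at hm
  obtain ⟨a, ha⟩ := hm
  refine mem_powSubmodule_fin_succ.2 ⟨a, ?_⟩
  rw [pow_succ, mul_smul, ← smul_sub]
  exact Submodule.smul_mem _ _ ha

namespace TopCohomology

theorem exists_eq_of_pow_smul {t : ℕ} {m : M} (h : x 0 • of N x t m = 0) :
    ∃ s a, of N x t m = of N x s (x 0 ^ s • a) := by
  rw [← map_smul] at h
  obtain ⟨k, hk⟩ := exists_mem_of_of_eq_zero h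
  obtain ⟨a, ha⟩ := mem_powSubmodule_fin_succ.1 hk
  refine ⟨t + k, a, ?_⟩
  rw [← of_add_prod_pow_smul t k m, ← sub_eq_zero, ← map_sub, ← of_add_prod_pow_smul (t + k) 1]
  apply of_eq_zero_of_mem
  have := prod_pow_smul_mem_powSubmodule 1 ha
  rw [powSubmodule_fin_succ]
  refine Submodule.mem_sup_left ?_
  convert this using 1
  simp only [Fin.prod_univ_succ, Fin.tail, pow_succ, smul_sub, smul_smul]
  congr 2 <;> ring

/-- The long exact sequence of local cohomology for multiplication by `x₀` makes the annihilator of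
`x₀` a quotient of the top local cohomology modulo `x₀`, via `[m / ∏ᵢ xᵢ₊₁ᵗ⁺¹] ↦
[m / (x₀ ∏ᵢ xᵢ₊₁ᵗ⁺¹)]`. -/
theorem exists_ker_lsmul_le_range (N : Submodule R M) (x : Fin (d + 1) → R) :
    ∃ β : TopCohomology (N ⊔ Ideal.span {x 0} • ⊤) (Fin.tail x) →ₗ[R] TopCohomology N x,
      LinearMap.ker (LinearMap.lsmul R (TopCohomology N x) (x 0)) ≤ LinearMap.range β := by
  obtain ⟨β, hβ⟩ := exists_lift (N := N ⊔ Ideal.span {x 0} • ⊤) (x := Fin.tail x)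
    (fun t => of N x t ∘ₗ LinearMap.lsmul R M (x 0 ^ t))
    (fun t m hm => of_eq_zero_of_mem (pow_smul_mem_powSubmodule hm))
    (fun t m => by
      rw [LinearMap.comp_apply, LinearMap.comp_apply, ← of_add_prod_pow_smul t 1,
        LinearMap.lsmul_apply, LinearMap.lsmul_apply, smul_smul, smul_smul, Fin.prod_univ_succ]
      congr 2
      simp only [Fin.tail]
      ring)
  refine ⟨β, fun η hη => ?_⟩
  obtain ⟨t, m, rfl⟩ := exists_of η
  obtain ⟨s, a, h⟩ := exists_eq_of_pow_smul hη
  exact ⟨of _ _ s a, h ▸ LinearMap.congr_fun (hβ s) a⟩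

end TopCohomology

end TopCohomologyStep

/-! ### Finiteness of duals of local cohomology -/

section AdicFiniteness

variable {R : Type*} [CommRing R] {I : Ideal R}

theorem isPrecomplete_pi [IsPrecomplete I R] (n : ℕ) : IsPrecomplete I (Fin n → R) where
  prec' f hf := by
    have hcoord : ∀ i, ∃ L, ∀ k, f k i ≡ L [SMOD (I ^ k • ⊤ : Submodule R R)] := fun i =>
      IsPrecomplete.prec inferInstance fun {a b} hab =>
        ((hf hab).map (LinearMap.proj i)).mono
          ((Submodule.map_smul'' ..).trans_le (smul_mono_right _ le_top))
    choose L hL using hcoord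
    refine ⟨L, fun k => SModEq.sub_mem.2 ?_⟩
    rw [← Finset.univ_sum_single (f k - L)]
    refine Submodule.sum_mem _ fun i _ => ?_
    have hmem := Submodule.mem_map_of_mem (f := LinearMap.single R (fun _ => R) i)
      (SModEq.sub_mem.1 (hL i k))
    rw [Submodule.map_smul''] at hmem
    exact Submodule.smul_mono le_rfl le_top hmem

variable {M : Type*} [AddCommGroup M] [Module R M]

theorem finite_of_finite_quotient_smul_top [IsPrecomplete I R] [IsHausdorff I M]
    [Module.Finite R (M ⧸ (I • ⊤ : Submodule R M))] : Module.Finite R M := by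
  obtain ⟨n, f, hf⟩ := Module.Finite.exists_fin' R (M ⧸ (I • ⊤ : Submodule R M))
  obtain ⟨g, hg⟩ := Module.projective_lifting_property (Submodule.mkQ (I • ⊤ : Submodule R M)) f
    (Submodule.mkQ_surjective _)
  have := isPrecomplete_pi (I := I) n
  exact Module.Finite.of_surjective g
    (surjective_of_mkQ_comp_surjective (I := I) (by rwa [hg]))

theorem isHausdorff_linearMap {H E : Type*} [AddCommGroup H] [Module R H] [AddCommGroup E]
    [Module R E] (hH : ∀ h : H, ∃ n, ∀ a ∈ I ^ n, a • h = 0) : IsHausdorff I (H →ₗ[R] E) where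
  haus' l hl := LinearMap.ext fun h => by
    obtain ⟨n, hn⟩ := hH h
    have hle : (I ^ n • ⊤ : Submodule R (H →ₗ[R] E)) ≤
        LinearMap.ker (LinearMap.applyₗ (R := R) (M₂ := E) h) :=
      Submodule.smul_le.2 fun a ha μ _ => by
        rw [LinearMap.mem_ker, LinearMap.applyₗ_apply_apply, LinearMap.smul_apply, ← map_smul,
          hn a ha, map_zero]
    exact hle (SModEq.zero.1 (hl n))

end AdicFiniteness

section DualFiniteness

open IsLocalRing

variable {R : Type u} [CommRing R]

theorem TopCohomology.exists_pow_smul_eq_zero {d k : ℕ} {I N : Ideal R} {x : Fin d → R}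
    (hk : I ^ k ≤ N ⊔ Ideal.span (Set.range x)) (η : TopCohomology (M := R) N x) :
    ∃ n, ∀ a ∈ I ^ n, a • η = 0 := by
  obtain ⟨t, m, rfl⟩ := exists_of η
  refine ⟨k * (1 + (d * (t + 1) + 1)), fun a ha => ?_⟩
  rw [← map_smul]
  apply of_eq_zero_of_mem
  rw [powSubmodule, smul_eq_mul, Ideal.mul_top]
  rw [pow_mul] at ha
  refine Ideal.mul_mem_right _ _ (sup_le_sup_left (span_range_pow_le_powIdeal x (t + 1)) _
    ?_)
  simpa only [pow_one] using
    Ideal.sup_pow_add_le_pow_sup_pow (Ideal.pow_right_mono hk _ ha)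

variable [IsLocalRing R] {E : Type u} [AddCommGroup E] [Module R E]

theorem finite_dual_topCohomology_zero {k : ℕ} {N : Ideal R} (x : Fin 0 → R)
    (hk : maximalIdeal R ^ k ≤ N)
    [IsNoetherian R (Submodule.torsionBySet R E (maximalIdeal R ^ k : Ideal R))] :
    Module.Finite R (TopCohomology (M := R) N x →ₗ[R] E) := by
  let ev : (TopCohomology (M := R) N x →ₗ[R] E) →ₗ[R]
      Submodule.torsionBySet R E (maximalIdeal R ^ k : Ideal R) :=
    LinearMap.codRestrict _ (LinearMap.applyₗ (TopCohomology.of N x 0 1)) fun l => by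
      refine (Submodule.mem_torsionBySet_iff _ _).2 fun ⟨a, ha⟩ => ?_
      rw [LinearMap.applyₗ_apply_apply]
      change a • _ = _
      rw [← map_smul, ← map_smul, smul_eq_mul, mul_one,
        TopCohomology.of_eq_zero_of_mem (Submodule.mem_sup_left (hk ha)), map_zero]
  refine Module.Finite.of_injective ev ((injective_iff_map_eq_zero ev).2 fun l hl => ?_)
  have h0 : l (TopCohomology.of N x 0 1) = 0 := congrArg Subtype.val hl
  refine TopCohomology.hom_ext fun t => LinearMap.ext_ring ?_
  have h1 := TopCohomology.of_add_prod_pow_smul (N := N) (x := x) 0 t 1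
  rw [Finset.univ_eq_empty, Finset.prod_empty, one_pow, one_smul, zero_add] at h1
  rw [LinearMap.comp_apply, h1, h0]
  rfl

variable [IsNoetherianRing R] [IsAdicComplete (maximalIdeal R) R] [Module.Injective R E]

theorem finite_dual_topCohomology
    (hE : IsNoetherian R (Submodule.torsionBySet R E (maximalIdeal R))) {d k : ℕ} {N : Ideal R}
    {x : Fin d → R} (hx : ∀ i, x i ∈ maximalIdeal R)
    (hk : maximalIdeal R ^ k ≤ N ⊔ Ideal.span (Set.range x)) :
    Module.Finite R (TopCohomology (M := R) N x →ₗ[R] E) := by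
  induction d generalizing N with
  | zero =>
    have := isNoetherian_torsionBySet_maximalIdeal_pow hE k
    rw [Set.range_eq_empty, Ideal.span_empty, sup_bot_eq] at hk
    exact finite_dual_topCohomology_zero x hk
  | succ d ih =>
    obtain ⟨β, hβ⟩ := TopCohomology.exists_ker_lsmul_le_range (M := R) N x
    have := ih (N := N ⊔ Ideal.span {x 0} • ⊤) (x := Fin.tail x) (fun i => hx i.succ) (by
      rwa [smul_eq_mul, Ideal.mul_top, sup_assoc, ← span_range_fin_succ])
    let ρ := LinearMap.lcomp R E β
    have hker : LinearMap.ker ρ ≤ maximalIdeal R • ⊤ := fun l hl => by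
      obtain ⟨μ, rfl⟩ := exists_linearMap_comp_eq_of_ker_le
        (hβ.trans (LinearMap.range_le_ker_iff.2 hl) : _ ≤ LinearMap.ker l)
      have : μ ∘ₗ LinearMap.lsmul R _ (x 0) = x 0 • μ := LinearMap.ext fun η => map_smul μ _ η
      rw [this]
      exact Submodule.smul_mem_smul (hx 0) trivial
    have := Module.Finite.equiv ρ.quotKerEquivRange.symm
    have := Module.Finite.of_surjective _ (Submodule.factor_surjective hker)
    have := isHausdorff_linearMap (E := E) (TopCohomology.exists_pow_smul_eq_zero hk)
    exact finite_of_finite_quotient_smul_top (I := maximalIdeal R)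

end DualFiniteness

/-! ### Torsion-freeness of duals of local cohomology -/

section Monomials

variable {R : Type*} [CommRing R] {ι : Type*} [Fintype ι]

/-- The ideal generated by `J` and the monomials in `y` whose exponent is not in `s`. -/
def monomialComplIdeal (J : Ideal R) (y : ι → R) (s : Set (ι → ℕ)) : Ideal R :=
  J ⊔ Ideal.span ((fun b => ∏ i, y i ^ b i) '' sᶜ)

variable {J : Ideal R} {y : ι → R} {m : ℕ}

theorem prod_pow_notMem_monomialComplIdeal (hJ : powIdeal y (m + 1) ≤ J)
    (hy : (∏ i, y i) ^ m ∉ J) {s : Set (ι → ℕ)} (hs : IsLowerSet s) {a : ι → ℕ} (ha : a ∈ s)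
    (ham : a ≤ fun _ => m) :
    ∏ i, y i ^ a i ∉ monomialComplIdeal J y s := by
  suffices hle : monomialComplIdeal J y s ≤ J.colon {∏ i, y i ^ (m - a i)} by
    intro hmem
    have := Submodule.mem_colon_singleton.1 (hle hmem)
    rw [smul_eq_mul, ← Finset.prod_mul_distrib] at this
    simp only [← pow_add, Nat.add_sub_cancel' (ham _), Finset.prod_pow] at this
    exact hy this
  refine sup_le (fun r hr => Submodule.mem_colon_singleton.2 (J.mul_mem_right _ hr))
    (Ideal.span_le.2 ?_)
  rintro _ ⟨b, hb, rfl⟩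
  obtain ⟨i, hi⟩ : ∃ i, a i < b i := by
    by_contra! hba
    exact hb (hs hba ha)
  rw [SetLike.mem_coe, Submodule.mem_colon_singleton, smul_eq_mul, ← Finset.prod_mul_distrib]
  refine Ideal.mem_of_dvd _ (Finset.dvd_prod_of_mem _ (Finset.mem_univ i)) (hJ ?_)
  rw [← pow_add]
  exact Ideal.pow_mem_of_pow_mem _ (pow_mem_powIdeal y (m + 1) i) (by have := ham i; omega)

/-- Removing a maximal exponent `a` from `s` adds the monomial `yᵃ` to the ideal, and this
monomial is new because its multiple `∏ yᵢᵐ` avoids `J`. -/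
theorem card_le_colength_monomialComplIdeal (hJ : powIdeal y (m + 1) ≤ J)
    (hy : (∏ i, y i) ^ m ∉ J) (s : Finset (ι → ℕ)) (hs : IsLowerSet (s : Set (ι → ℕ)))
    (hsm : ∀ a ∈ s, a ≤ fun _ => m) :
    (s.card : ℕ∞) ≤ colength (monomialComplIdeal J y s) := by
  classical
  induction s using Finset.strongInduction with
  | H s ih =>
  obtain rfl | hne := s.eq_empty_or_nonempty
  · simp
  obtain ⟨a, ha⟩ := s.exists_maximal hne
  have hnew := prod_pow_notMem_monomialComplIdeal hJ hy hs ha.prop (hsm a ha.prop)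
  have hlower : IsLowerSet ((s.erase a : Finset _) : Set (ι → ℕ)) := by
    intro b c hcb hb
    rw [Finset.mem_coe, Finset.mem_erase] at hb ⊢
    exact ⟨fun hca => hb.1 ((ha.eq_of_le hb.2 (hca ▸ hcb)).symm), hs hcb hb.2⟩
  have hadd : monomialComplIdeal J y (s.erase a : Finset _) =
      monomialComplIdeal J y s ⊔ Ideal.span {∏ i, y i ^ a i} := by
    rw [monomialComplIdeal, monomialComplIdeal, sup_assoc, ← Ideal.span_union, Finset.coe_erase,
      Set.compl_sdiff, Set.image_union, Set.image_singleton, Set.union_comm]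
  have hcolon : (monomialComplIdeal J y s).colon {∏ i, y i ^ a i} ≠ ⊤ := fun htop => hnew <| by
    rw [Ideal.eq_top_iff_one, Submodule.mem_colon_singleton, one_smul] at htop
    exact htop
  rw [colength_eq_add _ (∏ i, y i ^ a i), ← hadd, ← Finset.card_erase_add_one ha.prop, add_comm,
    Nat.cast_add, Nat.cast_one]
  exact add_le_add (one_le_colength hcolon)
    (ih _ (Finset.erase_ssubset ha.prop) hlower fun b hb => hsm b (Finset.mem_of_mem_erase hb))

theorem pow_card_le_colength (hJ : powIdeal y (m + 1) ≤ J) (hy : (∏ i, y i) ^ m ∉ J) :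
    ((m + 1 : ℕ) : ℕ∞) ^ Fintype.card ι ≤ colength J := by
  classical
  have := card_le_colength_monomialComplIdeal hJ hy (Finset.Iic fun _ => m)
    (by simpa using isLowerSet_Iic _) fun a ha => Finset.mem_Iic.1 ha
  rw [Pi.card_Iic] at this
  simp only [Nat.card_Iic, Finset.prod_const, Finset.card_univ, Nat.cast_pow] at this
  exact this.trans (colength_anti le_sup_left)

end Monomials

section DualTorsionFree

open IsLocalRing

variable {R : Type*} [CommRing R] [IsNoetherianRing R] [IsLocalRing R] [IsDomain R] {d : ℕ}
  {c : R} {x : Fin d → R}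

/-- Otherwise the colength of `(c) + (x₁ⁿ, …, x_dⁿ)` would grow like `n ^ d`, although
`R ⧸ (c)` has dimension less than `d`. -/
theorem exists_prod_pow_mem_span_sup_powIdeal (hd : ringKrullDim R = d) (hc : c ≠ 0)
    (hx : (Ideal.span (Set.range x)).radical = maximalIdeal R) {t : ℕ} (ht : 0 < t) :
    ∃ s, (∏ i, x i) ^ (t * s) ∈ Ideal.span {c} ⊔ powIdeal x (t * (s + 1)) := by
  by_contra! hcon
  obtain ⟨C, hC⟩ := exists_mul_colength_span_sup_powIdeal_le hd hc hx
  have key : ∀ s, t * (s + 1) ≤ C * t ^ d := by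
    intro s
    have hlow : ((s + 1 : ℕ) : ℕ∞) ^ d ≤
        colength (Ideal.span {c} ⊔ powIdeal x (t * (s + 1))) := by
      have := pow_card_le_colength (y := fun i => x i ^ t) (m := s)
        (J := Ideal.span {c} ⊔ powIdeal x (t * (s + 1)))
        (powIdeal_le_iff.2 fun i => Submodule.mem_sup_right (by
          rw [← pow_mul]
          exact pow_mem_powIdeal x _ i))
        (by rw [Finset.prod_pow, ← pow_mul]; exact hcon s)
      rwa [Fintype.card_fin] at this
    have hup := (mul_le_mul_right hlow _).trans (hC (t * (s + 1)) (by positivity))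
    have : t * (s + 1) * (s + 1) ^ d ≤ C * (t * (s + 1)) ^ d := by exact_mod_cast hup
    rw [mul_pow, ← mul_assoc] at this
    exact Nat.le_of_mul_le_mul_right this (by positivity)
  have := key (C * t ^ d)
  have : C * t ^ d + 1 ≤ t * (C * t ^ d + 1) := Nat.le_mul_of_pos_left _ ht
  omega

theorem isTorsionFree_dual_topCohomology (hd : ringKrullDim R = d)
    (hx : (Ideal.span (Set.range x)).radical = maximalIdeal R) {E : Type*} [AddCommGroup E]
    [Module R E] : Module.IsTorsionFree R (TopCohomology (⊥ : Submodule R R) x →ₗ[R] E) := by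
  refine Module.isTorsionFree_iff_smul_eq_zero.2 fun c l hl => or_iff_not_imp_left.2 fun hc =>
    TopCohomology.hom_ext fun t => LinearMap.ext fun b => ?_
  obtain ⟨s, hs⟩ := exists_prod_pow_mem_span_sup_powIdeal hd hc hx (Nat.succ_pos t)
  obtain ⟨_, ha, r, hr, har⟩ := Submodule.mem_sup.1 hs
  obtain ⟨w, rfl⟩ := Ideal.mem_span_singleton'.1 ha
  have hr0 : TopCohomology.of ⊥ x (t + (t + 1) * s) (r • b) = 0 := by
    refine TopCohomology.of_eq_zero_of_mem (Submodule.mem_sup_right ?_)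
    exact Submodule.smul_mem_smul (by convert hr using 2; rw [Nat.succ_eq_add_one]; ring) trivial
  rw [LinearMap.comp_apply, ← TopCohomology.of_add_prod_pow_smul t ((t + 1) * s) b, ← har, add_smul,
    map_add, hr0, add_zero, mul_comm w, mul_smul, map_smul, map_smul, ← LinearMap.smul_apply, hl]
  rfl

end DualTorsionFree

/-! ### A functional that does not vanish at `1` -/

section Functional

open IsLocalRing

-- Some element of the dual over the fraction field separates `w` from `0`; clear denominators.
theorem exists_linearMap_apply_ne_zero {R W : Type*} [CommRing R] [IsNoetherianRing R] [IsDomain R]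
    [AddCommGroup W] [Module R W] [Module.Finite R W] [Module.IsTorsionFree R W] {w : W}
    (hw : w ≠ 0) : ∃ φ : W →ₗ[R] R, φ w ≠ 0 := by
  let K := FractionRing R
  let f := LocalizedModule.mkLinearMap (nonZeroDivisors R) W
  have hfw : f w ≠ 0 := fun h => by
    obtain ⟨c, hc⟩ := (IsLocalizedModule.eq_zero_iff (nonZeroDivisors R) f).1 h
    exact (smul_ne_zero (nonZeroDivisors.ne_zero c.2) hw) hc
  obtain ⟨ξ, hξ⟩ := Module.Projective.exists_dual_ne_zero K hfw
  have := Module.finitePresentation_of_finite R W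
  obtain ⟨φ, s, hφ⟩ := Module.FinitePresentation.exists_lift_of_isLocalizedModule
    (nonZeroDivisors R) (Algebra.linearMap R K) (ξ.restrictScalars R ∘ₗ f)
  refine ⟨φ, fun h => ?_⟩
  have hs : (s : R) • ξ (f w) = 0 := by
    have hφw := LinearMap.congr_fun hφ w
    rw [LinearMap.comp_apply, h, map_zero] at hφw
    exact hφw.symm
  exact smul_ne_zero (nonZeroDivisors.ne_zero s.2) hξ hs

namespace TopCohomology

theorem exists_linearMap_dual {R : Type*} [CommRing R] {ι : Type*} [Fintype ι] {x : ι → R}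
    {M P : Type*} [AddCommGroup M] [Module R M] [AddCommGroup P] [Module R P]
    (ψ : TopCohomology (⊥ : Submodule R M) x →ₗ[R] P) :
    ∃ θ : M →ₗ[R] TopCohomology (⊥ : Submodule R R) x →ₗ[R] P,
      ∀ m t r, θ m (of ⊥ x t r) = ψ (of ⊥ x t (r • m)) := by
  have hlift (m : M) : ∃ G : TopCohomology (⊥ : Submodule R R) x →ₗ[R] P,
      ∀ t, G ∘ₗ of ⊥ x t = ψ ∘ₗ of ⊥ x t ∘ₗ LinearMap.toSpanSingleton R M m := by
    refine exists_lift _ (fun t => ?_) fun t r => ?_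
    · rw [powSubmodule, bot_sup_eq, Submodule.smul_le]
      intro r hr a _
      rw [LinearMap.mem_ker, LinearMap.comp_apply, LinearMap.comp_apply,
        LinearMap.toSpanSingleton_apply, of_eq_zero_of_mem, map_zero]
      rw [smul_assoc]
      exact Submodule.mem_sup_right (Submodule.smul_mem_smul hr trivial)
    · have hstep := of_add_prod_pow_smul (N := (⊥ : Submodule R M)) (x := x) t 1 (r • m)
      rw [pow_one, ← smul_assoc] at hstep
      exact congrArg ψ hstep
  choose G hG using hlift
  have hG' (m t r) : G m (of ⊥ x t r) = ψ (of ⊥ x t (r • m)) := LinearMap.congr_fun (hG m t) r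
  refine ⟨⟨⟨G, fun a b => ?_⟩, fun c a => ?_⟩, hG'⟩
  · refine hom_ext fun t => LinearMap.ext fun r => ?_
    simp only [LinearMap.comp_apply, LinearMap.add_apply, hG', smul_add, map_add]
  · refine hom_ext fun t => LinearMap.ext fun r => ?_
    simp only [LinearMap.comp_apply, LinearMap.smul_apply, RingHom.id_apply, hG',
      smul_comm r c, map_smul]

theorem of_one_ne_zero {R : Type*} [CommRing R] {d : ℕ} {x : Fin d → R} {S : Type*}
    [CommRing S] [Algebra R S] (hQ : IsQSequence fun i => algebraMap R S (x i)) :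
    of (⊥ : Submodule R S) x 0 1 ≠ 0 := by
  intro h
  obtain ⟨k, hk⟩ := exists_mem_of_of_eq_zero h
  rw [powSubmodule, bot_sup_eq, Ideal.smul_top_eq_map, Submodule.restrictScalars_mem, zero_add,
    powIdeal, Ideal.map_span, ← Set.range_comp, Algebra.smul_def, mul_one, map_pow, map_prod,
    ← Finset.prod_pow] at hk
  refine hQ.prod_pow_notMem k ?_
  rw [powIdeal]
  convert hk using 4
  simp

end TopCohomology

theorem exists_linearMap_apply_eq {R : Type u} [CommRing R] [IsLocalRing R] {E : Type u}
    [AddCommGroup E] [Module R E] [Module.Injective R E] {M : Type*} [AddCommGroup M] [Module R M]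
    {m : M} (hm : m ≠ 0) {e : E} (he : e ∈ Submodule.torsionBySet R E (maximalIdeal R)) :
    ∃ ψ : M →ₗ[R] E, ψ m = e := by
  obtain ⟨ψ, hψ⟩ := exists_linearMap_comp_eq_of_ker_le (f := LinearMap.toSpanSingleton R M m)
    (g := LinearMap.toSpanSingleton R E e) fun r hr =>
      (Submodule.mem_torsionBySet_iff _ _).1 he
        ⟨r, fun hunit => hm (hunit.smul_eq_zero.1 hr)⟩
  exact ⟨ψ, by simpa using LinearMap.congr_fun hψ 1⟩

/-- The functional factors through the dual of the top local cohomology of `R` into an injective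
module with simple socle, which is finite and torsion-free. -/
theorem IsQSequence.exists_linearMap_apply_one_ne_zero {R : Type u} [CommRing R]
    [IsNoetherianRing R] [IsLocalRing R] [IsDomain R] [IsAdicComplete (maximalIdeal R) R] {d : ℕ}
    (hd : ringKrullDim R = d) {x : Fin d → R}
    (hx : (Ideal.span (Set.range x)).radical = maximalIdeal R) {S : Type*} [CommRing S]
    [Algebra R S] (hQ : IsQSequence fun i => algebraMap R S (x i)) :
    ∃ θ : S →ₗ[R] R, θ 1 ≠ 0 := by
  obtain ⟨E, _, _, e, hE, he, hsocle⟩ := exists_injective_torsionBySet_maximalIdeal_eq_span R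
  obtain ⟨k, hk⟩ := exists_pow_le_of_radical_eq hx
  have hmem (i) : x i ∈ maximalIdeal R := hx ▸ Ideal.le_radical (Ideal.subset_span ⟨i, rfl⟩)
  have hnoeth : IsNoetherian R (Submodule.torsionBySet R E (maximalIdeal R)) :=
    hsocle ▸ inferInstance
  have : Module.Finite R (TopCohomology (⊥ : Submodule R R) x →ₗ[R] E) :=
    finite_dual_topCohomology hnoeth hmem (hk.trans le_sup_right)
  have : Module.IsTorsionFree R (TopCohomology (⊥ : Submodule R R) x →ₗ[R] E) :=
    isTorsionFree_dual_topCohomology hd hx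
  obtain ⟨ψ, hψ⟩ := exists_linearMap_apply_eq (TopCohomology.of_one_ne_zero hQ)
    (e := e) (hsocle ▸ Submodule.mem_span_singleton_self e)
  obtain ⟨θ, hθ⟩ := TopCohomology.exists_linearMap_dual ψ
  have hθ1 : θ 1 ≠ 0 := fun h0 => he <| by
    have h1 := hθ 1 0 1
    rw [one_smul, hψ, h0] at h1
    exact h1.symm
  obtain ⟨φ, hφ⟩ := exists_linearMap_apply_ne_zero (R := R) hθ1
  exact ⟨φ ∘ₗ θ, hφ⟩

end Functional

/-! ### Comparison of the closures -/

section Comparison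

open IsLocalRing

theorem apply_mem_of_mem_map {R S : Type*} [CommRing R] [CommRing S] [Algebra R S] (θ : S →ₗ[R] R)
    {J : Ideal R} {s : S} (hs : s ∈ J.map (algebraMap R S)) : θ s ∈ J := by
  rw [← Submodule.restrictScalars_mem R, ← Ideal.smul_top_eq_map] at hs
  exact (Submodule.smul_le (P := Submodule.comap θ J)).2
    (fun r hr s _ => by simpa using J.mul_mem_right (θ s) hr) hs

variable {R : Type u} [CommRing R] [IsNoetherianRing R] [IsLocalRing R] [IsDomain R]
  [IsAdicComplete (maximalIdeal R) R] {p : ℕ} [Fact p.Prime] [CharP R p]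

/-- If `θ : S → R` is linear and `algebraMap R S u ∈ I S`, then `θ 1 * u ^ q = θ (u ^ q)` lies in
`θ (I ^ [q] S) ⊆ I ^ [q]`. -/
theorem mem_tightClosure_of_isQSequence {d : ℕ} (hd : ringKrullDim R = d) {x : Fin d → R}
    (hx : (Ideal.span (Set.range x)).radical = maximalIdeal R) {S : Type u} [CommRing S]
    [Algebra R S] (hQ : IsQSequence fun i => algebraMap R S (x i)) {I : Ideal R} {u : R}
    (hu : algebraMap R S u ∈ I.map (algebraMap R S)) : u ∈ tightClosure p I := by
  obtain ⟨θ, hθ⟩ := hQ.exists_linearMap_apply_one_ne_zero hd hx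
  have hS : Nontrivial S := nontrivial_of_ne 1 0 fun h => hθ (by rw [h, map_zero])
  have : CharP S p := (CharP.charP_iff_prime_eq_zero Fact.out).2 <| by
    rw [← map_natCast (algebraMap R S), CharP.cast_eq_zero, map_zero]
  refine mem_tightClosure_iff_exists.2 ⟨θ 1, hθ, mem_frobeniusColon.2 fun e => ?_⟩
  have hmap : algebraMap R S (u ^ p ^ e) ∈
      (I.map (iterateFrobenius R p e)).map (algebraMap R S) := by
    rw [Ideal.map_map, RingHom.iterateFrobenius_comm, ← Ideal.map_map, map_pow,
      ← iterateFrobenius_def]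
    exact Ideal.mem_map_of_mem _ hu
  have := apply_mem_of_mem_map θ hmap
  rwa [Algebra.algebraMap_eq_smul_one, map_smul, smul_eq_mul, mul_comm] at this

theorem immediateRobustClosure_eq_tightClosure (I : Ideal R) :
    immediateRobustClosure R R I = tightClosure p I := by
  refine le_antisymm (sup_le le_tightClosure (Submodule.span_le.2 ?_)) fun u hu => ?_
  · rintro u ⟨S, _, _, hforcing, hrobust⟩
    obtain ⟨d, x, hd, hx⟩ := exists_radical_span_range_eq_maximalIdeal R
    have hQ := hrobust d x hd (hx ▸ maximalIdeal.isMaximal R)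
    exact mem_tightClosure_of_isQSequence hd hx hQ (isForcingAlgebra_iff.1 hforcing)
  · obtain ⟨n, g, rfl⟩ := Submodule.fg_iff_exists_fin_generating_family.1
      (IsNoetherian.noetherian I)
    exact Submodule.mem_sup_right (Submodule.subset_span ⟨GenericForcingAlgebra g u, inferInstance,
      inferInstance, isForcingAlgebra_iff.2 (GenericForcingAlgebra.algebraMap_mem_map g u),
      fun d x hd hx => isQSequence_genericForcingAlgebra hd hu (eq_maximalIdeal hx)⟩)

theorem robustClosureCLD_eq_tightClosure (I : Ideal R) :
    robustClosureCLD R R I = tightClosure p I := by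
  have hiter (j : ℕ) : (immediateRobustClosure R R)^[j + 1] I = tightClosure p I := by
    induction j with
    | zero => exact immediateRobustClosure_eq_tightClosure I
    | succ j ih =>
      rw [Function.iterate_succ_apply', ih, immediateRobustClosure_eq_tightClosure (p := p),
        tightClosure_tightClosure]
  rw [robustClosureCLD, ← sup_iSup_nat_succ]
  simp only [hiter, ciSup_const, Function.iterate_zero_apply, sup_eq_right]
  exact le_tightClosure

end Comparison

/-- Over a Noetherian complete local domain `(R,m)` of prime
characteristic `p` with `I = (g₁,…,g_n)`: (i) the robust closure of `I` (and indeed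
already the immediate robust closure `I^▫`) equals the tight closure `I^*`;
(ii) if the image in the generic forcing algebra `S = R[Z]/(u − Σ Z_l g_l)` of one
system of parameters of `R` is a Q-sequence, then so is the image of every system
of parameters. -/
theorem robustClosure_eq_tightClosure
    (R : Type u) [CommRing R] [IsNoetherianRing R] [IsLocalRing R] [IsDomain R]
    [IsAdicComplete (IsLocalRing.maximalIdeal R) R]
    (p : ℕ) (hp : p.Prime) [CharP R p]
    (d : ℕ) (hd : ringKrullDim R = d)
    (n : ℕ) (g : Fin n → R) :
    (∀ u : R,
      (u ∈ robustClosureCLD R R (Ideal.span (Set.range g) : Ideal R) ↔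
        MemTightClosure R p (Ideal.span (Set.range g)) u) ∧
      (u ∈ immediateRobustClosure R R (Ideal.span (Set.range g) : Ideal R) ↔
        MemTightClosure R p (Ideal.span (Set.range g)) u)) ∧
    (∀ u : R,
      (∃ x : Fin d → R,
        (Ideal.span (Set.range x)).radical = IsLocalRing.maximalIdeal R ∧
        IsQSequence (fun i => algebraMap R (MvPolynomial (Fin n) R ⧸
          Ideal.span {MvPolynomial.C u -
            ∑ l : Fin n, MvPolynomial.X l * MvPolynomial.C (g l)}) (x i))) →
      (∀ x : Fin d → R,
        (Ideal.span (Set.range x)).radical = IsLocalRing.maximalIdeal R →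
        IsQSequence (fun i => algebraMap R (MvPolynomial (Fin n) R ⧸
          Ideal.span {MvPolynomial.C u -
            ∑ l : Fin n, MvPolynomial.X l * MvPolynomial.C (g l)}) (x i)))) := by
  have : Fact p.Prime := ⟨hp⟩
  refine ⟨fun u => ⟨?_, ?_⟩, ?_⟩
  · rw [robustClosureCLD_eq_tightClosure, mem_tightClosure]
  · rw [immediateRobustClosure_eq_tightClosure, mem_tightClosure]
  · rintro u ⟨x, hx, hQ⟩ y hy
    have hu := mem_tightClosure_of_isQSequence hd hx hQ
      (GenericForcingAlgebra.algebraMap_mem_map g u)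
    exact isQSequence_genericForcingAlgebra hd hu hy
end

section
/- Let R = ℂ[[x,y,z,u,v]]/(x³ + y³ + z³, z² − ux − vy), a quotient of the formal power series ring in five variables over ℂ. Then the images of x and y form a Q-sequence in R, but the superheight of (x,y)R is 1: for every Noetherian commutative R-algebra S in which (x,y)S is a proper ideal, the height of (x,y)S is at most 1. -/
open scoped BigOperators
open MvPowerSeries

universe u

/-- The height of an ideal: the infimum of the heights of the primes containing it. -/
noncomputable def idealHeight (S : Type u) [CommRing S] (J : Ideal S) : ℕ∞ :=
  ⨅ (P : PrimeSpectrum S) (_ : J ≤ P.asIdeal), Order.height P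

/-!
The height bound holds because the relations `z³ = -(x³ + y³)` and `z² = ux + vy` cannot coexist
with `(x, y)` of height two. After localizing at a minimal prime of `(x, y)` and completing, `x` and
`y` become a system of parameters over a coefficient field `L`, hence analytically independent, so
the completion `T` is a finite faithful extension of `L⟦X, Y⟧`. The dual of `T` is free over this
two-dimensional regular ring, and `z, u, v` act on it by commuting matrices. Comparing traces in
`z³ = (ux + vy) z` along the three lines of the cone `X³ + Y³ = 0` is contradictory in
characteristic zero.

For the Q-sequence, a filtration of `R / (xᵗ, yᵗ)` with `h` factors is a finite set of equations.
Truncated, they live in a polynomial ring over a finitely generated domain over `ℤ` and specialize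
to characteristic `p` for some prime `p ≡ 2` mod `3`. There Frobenius gives `z²ᵖ ∈ (xᵖ, yᵖ)` on the
cubic cone, so the equations have the solution `(xᵖ, yᵖ, zᵖ, u, v)` in the algebra
`Q = k[x, y, z] / (xᵖᵗ, yᵖᵗ, x³ + y³ + z³)`. It has dimension `3p²t²` while `Q / (xᵖ, yᵖ)` has
dimension at most `3p²`, and each factor is a quotient of the latter, so `h ≥ t²`.
-/

/-! ### The height bound -/

section LineRestriction

variable {L E : Type*} [CommRing L] [CommRing E] [Algebra L E]

theorem hasSubst_line (l : E) :
    HasSubst ![(PowerSeries.X : PowerSeries E), l • PowerSeries.X] :=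
  hasSubst_of_constantCoeff_zero fun i => by
    fin_cases i
    · exact PowerSeries.constantCoeff_X
    · exact (PowerSeries.constantCoeff_smul _ _).trans (by simp)

variable (L) in
/-- Restriction of a power series in two variables to the line of slope `l` through the origin:
`f(X, Y) ↦ f(X, l X)`. The slope may lie in an algebra over the coefficient ring. -/
noncomputable def restrictLine (l : E) : MvPowerSeries (Fin 2) L →ₐ[L] PowerSeries E :=
  substAlgHom (hasSubst_line l)

@[simp]
theorem restrictLine_X_zero (l : E) : restrictLine L l (X 0) = PowerSeries.X :=
  substAlgHom_X (hasSubst_line l) 0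

@[simp]
theorem restrictLine_X_one (l : E) : restrictLine L l (X 1) = l • PowerSeries.X :=
  substAlgHom_X (hasSubst_line l) 1

theorem coeff_restrictLine (l : E) (f : MvPowerSeries (Fin 2) L) (n : ℕ) :
    PowerSeries.coeff n (restrictLine L l f) =
      ∑ m ∈ Finset.HasAntidiagonal.antidiagonal n,
        coeff (Finsupp.single 0 m.1 + Finsupp.single 1 m.2) f • l ^ m.2 := by
  have hterm (d : Fin 2 →₀ ℕ) :
      coeff (Finsupp.single () n) (d.prod fun s e =>
        (![(PowerSeries.X : PowerSeries E), l • PowerSeries.X] s : MvPowerSeries Unit E) ^ e) =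
      if n = d 0 + d 1 then l ^ d 1 else 0 := by
    rw [Finsupp.prod_fintype _ _ fun _ => pow_zero _, Fin.prod_univ_two]
    change PowerSeries.coeff n (PowerSeries.X ^ d 0 * (l • PowerSeries.X) ^ d 1) = _
    rw [smul_pow, mul_smul_comm, ← pow_add, PowerSeries.coeff_smul, PowerSeries.coeff_X_pow]
    simp
  have hinj : Set.InjOn (fun m : ℕ × ℕ => Finsupp.single (0 : Fin 2) m.1 + Finsupp.single 1 m.2)
      (Finset.HasAntidiagonal.antidiagonal n) := fun a _ b _ hab => by
    have h0 := DFunLike.congr_fun hab 0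
    have h1 := DFunLike.congr_fun hab 1
    exact Prod.ext (by simpa using h0) (by simpa using h1)
  refine ((congrArg (coeff (Finsupp.single () n)) (substAlgHom_apply (hasSubst_line l) f)).trans
    (coeff_subst (hasSubst_line l) f _)).trans ?_
  simp only [hterm]
  rw [finsum_eq_sum_of_support_subset (s := (Finset.HasAntidiagonal.antidiagonal n).image _),
    Finset.sum_image hinj]
  · refine Finset.sum_congr rfl fun m hm => ?_
    simp_all
  · intro d hd
    have hn : n = d 0 + d 1 := of_not_not fun h => hd (by simp only [if_neg h, smul_zero])
    refine Finset.mem_coe.2 (Finset.mem_image.2 ⟨(d 0, d 1), by simp [hn], ?_⟩)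
    ext i
    fin_cases i <;> simp

theorem coeff_restrictLine_zero (f : MvPowerSeries (Fin 2) L) (n : ℕ) :
    PowerSeries.coeff n (restrictLine L (0 : L) f) = coeff (Finsupp.single 0 n) f := by
  rw [coeff_restrictLine, Finset.sum_eq_single (n, 0)]
  · simp
  · rintro ⟨i, j⟩ hij hne
    have hj : j ≠ 0 := by
      rintro rfl
      exact hne (by simpa using hij)
    simp [hj]
  · simp

theorem restrictLine_zero_surjective :
    Function.Surjective (restrictLine L (0 : L)) := fun g =>
  ⟨(fun m => PowerSeries.coeff (m 0) g : (Fin 2 →₀ ℕ) → L), PowerSeries.ext fun n =>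
    (coeff_restrictLine_zero _ n).trans
      (congrArg (fun k => PowerSeries.coeff k g) Finsupp.single_eq_same)⟩

theorem ker_restrictLine_zero :
    RingHom.ker (restrictLine L (0 : L)) = Ideal.span {X 1} := by
  ext f
  rw [RingHom.mem_ker, Ideal.mem_span_singleton, X_dvd_iff, PowerSeries.ext_iff]
  simp only [coeff_restrictLine_zero, map_zero]
  refine ⟨fun h d hd => ?_, fun h n => h _ (by simp)⟩
  have hd' : d = Finsupp.single 0 (d 0) := by
    ext i
    fin_cases i <;> simp [hd]
  rw [hd', h]

end LineRestriction

section Trace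

variable {ι : Type*} [Fintype ι] [DecidableEq ι]

theorem map_trace_mul_eq_zero {B E : Type*} [CommRing B] [CommRing E] [IsReduced E]
    (φ : B →+* E) {c : B} (hc : φ c = 0) {Z U : Matrix ι ι B} (hZU : Commute Z U) {n : ℕ}
    (hZ : Z ^ n = c • 1) : φ (U * Z).trace = 0 := by
  have hnil : IsNilpotent ((U * Z).map φ) := by
    refine ⟨n, ?_⟩
    rw [← Matrix.map_pow, hZU.symm.mul_pow, hZ, mul_smul_comm, mul_one]
    ext i j
    simp [hc]
  rw [← (Matrix.isNilpotent_trace_of_isNilpotent hnil).eq_zero]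
  exact AddMonoidHom.map_trace φ.toAddMonoidHom (U * Z)

variable {L : Type*} [Field L] [CharZero L]

/-- The three lines of the cone `X ^ 3 + Y ^ 3 = 0` have slopes `-1`, `-ω`, `-ω ^ 2`; summing the
quadratic parts of `f` along them isolates the coefficient of `X ^ 2`. -/
theorem coeff_X_sq_eq_zero_of_restrictLine {f : MvPowerSeries (Fin 2) L}
    (hf : ∀ l : AlgebraicClosure L, l ^ 3 = -1 → restrictLine L l f = 0) :
    coeff (Finsupp.single 0 2) f = 0 := by
  obtain ⟨ω, hω⟩ : ∃ ω : AlgebraicClosure L, ω ^ 2 + ω + 1 = 0 := by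
    obtain ⟨ω, hω⟩ := IsAlgClosed.exists_root (Polynomial.cyclotomic 3 (AlgebraicClosure L))
      (Polynomial.degree_cyclotomic_pos 3 _ three_pos).ne'
    exact ⟨ω, by simpa [Polynomial.cyclotomic_three] using hω⟩
  have hω3 : ω ^ 3 = 1 := by linear_combination (ω - 1) * hω
  have hquad (l : AlgebraicClosure L) (hl : l ^ 3 = -1) :
      algebraMap L (AlgebraicClosure L) (coeff (Finsupp.single 0 2) f) +
        algebraMap L _ (coeff (Finsupp.single 0 1 + Finsupp.single 1 1) f) * l +
        algebraMap L _ (coeff (Finsupp.single 1 2) f) * l ^ 2 = 0 := by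
    have h := coeff_restrictLine l f 2
    rw [hf l hl, map_zero] at h
    rw [h]
    simp [Finset.Nat.antidiagonal_succ, Algebra.smul_def]
    ring
  have h1 := hquad (-1) (by norm_num)
  have h2 := hquad (-ω) (by linear_combination -hω3)
  have h3 := hquad (-ω ^ 2) (by linear_combination (-ω ^ 3 - 1) * hω3)
  have hsum : (3 : AlgebraicClosure L) * algebraMap L _ (coeff (Finsupp.single 0 2) f) = 0 := by
    linear_combination h1 + h2 + h3 +
      algebraMap L _ (coeff (Finsupp.single 0 1 + Finsupp.single 1 1) f) * hω -
      algebraMap L _ (coeff (Finsupp.single 1 2) f) * (hω + ω * hω3)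
  simpa using hsum

/-- Taking traces in `Z ^ 3 = (X * U + Y * V) * Z` gives
`-n (X ^ 3 + Y ^ 3) = X * tr (U * Z) + Y * tr (V * Z)`. On each line of the cone
`X ^ 3 + Y ^ 3 = 0` the matrix `U * Z` is nilpotent, so the coefficient of `X ^ 2` in `tr (U * Z)`
vanishes, and `X ^ 3` occurs on the left only. -/
theorem matrix_sq_ne_of_cube_eq [Nonempty ι] {Z U V : Matrix ι ι (MvPowerSeries (Fin 2) L)}
    (hZU : Commute Z U)
    (hZ : Z ^ 3 = (-(X 0 ^ 3 + X 1 ^ 3) : MvPowerSeries (Fin 2) L) • 1) :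
    Z ^ 2 ≠ (X 0 : MvPowerSeries (Fin 2) L) • U + (X 1 : MvPowerSeries (Fin 2) L) • V := by
  intro hsq
  have hcoeff : coeff (Finsupp.single 0 2) (U * Z).trace = 0 :=
    coeff_X_sq_eq_zero_of_restrictLine fun l hl =>
      map_trace_mul_eq_zero (restrictLine L l).toRingHom
        (by simp [smul_pow, hl]) hZU hZ
  have htrace : (-(X 0 ^ 3 + X 1 ^ 3) : MvPowerSeries (Fin 2) L) * C (Fintype.card ι : L) =
      X 0 * (U * Z).trace + X 1 * (V * Z).trace := by
    have h := congrArg Matrix.trace (pow_succ Z 2)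
    rw [hZ, hsq, add_mul, Matrix.trace_add] at h
    simpa only [smul_mul_assoc, Matrix.trace_smul, Matrix.trace_one, smul_eq_mul,
      map_natCast] using h
  have hX : coeff (Finsupp.single 0 3) (X 0 * (U * Z).trace) = 0 := by
    rw [X_def, show (Finsupp.single 0 3 : Fin 2 →₀ ℕ) = .single 0 1 + .single 0 2 from
      Finsupp.single_add 0 1 2, coeff_add_monomial_mul, hcoeff, mul_zero]
  have hY : coeff (Finsupp.single 0 3) (X 1 * (V * Z).trace) = 0 := by
    rw [X_def, coeff_monomial_mul, if_neg (by simp)]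
  have hcube : coeff (Finsupp.single 0 3) (-(X 0 ^ 3 + X 1 ^ 3) : MvPowerSeries (Fin 2) L) =
      -1 := by
    simp [coeff_X_pow, Finsupp.single_left_inj]
  have h := congrArg (coeff (Finsupp.single 0 3)) htrace
  rw [coeff_mul_C, hcube, map_add, hX, hY] at h
  simp at h

end Trace

section Dual

variable {B N : Type*} [CommRing B] [IsDomain B] [AddCommGroup N] [Module B N]

theorem exists_dual_apply_ne_zero [Module.FinitePresentation B N] {e : N}
    (he : ∀ b : B, b • e = 0 → b = 0) : ∃ f : Module.Dual B N, f e ≠ 0 := by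
  let ι := LocalizedModule.mkLinearMap (nonZeroDivisors B) N
  have hι : ι e ≠ 0 := fun h => by
    obtain ⟨s, hs⟩ := (IsLocalizedModule.eq_zero_iff (nonZeroDivisors B) ι).1 h
    exact nonZeroDivisors.coe_ne_zero s (he _ hs)
  obtain ⟨g, hg⟩ := Module.Projective.exists_dual_ne_zero (FractionRing B) hι
  obtain ⟨f, s, hf⟩ := Module.FinitePresentation.exists_lift_of_isLocalizedModule
    (nonZeroDivisors B) (Algebra.linearMap B (FractionRing B)) (g.restrictScalars B ∘ₗ ι)
  refine ⟨f, fun h0 => ?_⟩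
  have h : algebraMap B (FractionRing B) (f e) = (s : B) • g (ι e) := LinearMap.congr_fun hf e
  rw [h0, map_zero, eq_comm, smul_eq_zero] at h
  exact h.elim (nonZeroDivisors.coe_ne_zero s) hg

theorem exists_eq_smul_of_forall_dvd {q : B} (hq : q ≠ 0) {f : Module.Dual B N}
    (hf : ∀ n, q ∣ f n) : ∃ g : Module.Dual B N, f = q • g := by
  choose g hg using hf
  exact ⟨{ toFun := g
           map_add' := fun a b => mul_left_cancel₀ hq (by rw [mul_add, ← hg, ← hg, ← hg, map_add])
           map_smul' := fun a b => mul_left_cancel₀ hq (by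
            rw [← hg, map_smul, hg, smul_eq_mul, RingHom.id_apply, smul_eq_mul, mul_left_comm]) },
    LinearMap.ext hg⟩

theorem isSMulRegular_dual {q : B} (hq : q ≠ 0) : IsSMulRegular (Module.Dual B N) q :=
  fun _ _ h => LinearMap.ext fun n => mul_left_cancel₀ hq (LinearMap.congr_fun h n)

theorem isTorsionFree_quotSMulTop_dual {q : B} (hq : Prime q) :
    Module.IsTorsionFree (B ⧸ Ideal.span {q}) (QuotSMulTop q (Module.Dual B N)) := by
  have : (Ideal.span {q}).IsPrime := (Ideal.span_singleton_prime hq.ne_zero).2 hq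
  refine ⟨fun r hr => ?_⟩
  obtain ⟨r, rfl⟩ := Ideal.Quotient.mk_surjective r
  have hqr : ¬q ∣ r := fun h => hr.ne_zero <| by
    rwa [Ideal.Quotient.eq_zero_iff_mem, Ideal.mem_span_singleton]
  rw [isSMulRegular_iff_right_eq_zero_of_smul]
  intro m hm
  obtain ⟨f, rfl⟩ := Submodule.Quotient.mk_surjective _ m
  change (Submodule.Quotient.mk (r • f) : QuotSMulTop q (Module.Dual B N)) = 0 at hm
  rw [Submodule.Quotient.mk_eq_zero, Submodule.mem_smul_pointwise_iff_exists] at hm ⊢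
  obtain ⟨g, -, hg⟩ := hm
  obtain ⟨f', hf'⟩ := exists_eq_smul_of_forall_dvd hq.ne_zero (f := f) fun n =>
    (hq.dvd_or_dvd (Dvd.intro _ (LinearMap.congr_fun hg n))).resolve_left hqr
  exact ⟨f', trivial, hf'.symm⟩

/-- Duals are torsion free modulo `q`, hence free modulo `q`, hence free. -/
theorem free_dual_of_isPrincipalIdealRing_quotient [IsNoetherianRing B] [Module.Finite B N] {q : B}
    (hq : Prime q) (hj : q ∈ (⊥ : Ideal B).jacobson)
    [IsPrincipalIdealRing (B ⧸ Ideal.span {q})] : Module.Free B (Module.Dual B N) := by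
  have : (Ideal.span {q}).IsPrime := (Ideal.span_singleton_prime hq.ne_zero).2 hq
  have : Module.Finite B (Module.Dual B N) := by unfold Module.Dual; infer_instance
  have : Module.FinitePresentation B (Module.Dual B N) := Module.finitePresentation_of_finite B _
  have : Module.Finite (B ⧸ Ideal.span {q}) (QuotSMulTop q (Module.Dual B N)) :=
    Module.Finite.of_restrictScalars_finite B _ _
  have := isTorsionFree_quotSMulTop_dual (N := N) hq
  rw [← Module.free_quotSMulTop_iff_free _ _ hj (isSMulRegular_dual hq.ne_zero)]
  infer_instance

theorem free_dual_mvPowerSeries {L N : Type*} [Field L] [AddCommGroup N]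
    [Module (MvPowerSeries (Fin 2) L) N] [Module.Finite (MvPowerSeries (Fin 2) L) N] :
    Module.Free (MvPowerSeries (Fin 2) L) (Module.Dual (MvPowerSeries (Fin 2) L) N) := by
  have : IsDomain (MvPowerSeries (Fin 2) L) := NoZeroDivisors.to_isDomain _
  have hX : (X 1 : MvPowerSeries (Fin 2) L) ≠ 0 := fun h => by
    simpa using congrArg (coeff (Finsupp.single 1 1)) h
  have hker := ker_restrictLine_zero (L := L)
  let e := (Ideal.quotEquivOfEq hker.symm).trans
    (RingHom.quotientKerEquivOfSurjective (restrictLine_zero_surjective (L := L)))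
  have := IsPrincipalIdealRing.of_surjective e.symm e.symm.surjective
  refine free_dual_of_isPrincipalIdealRing_quotient (q := X 1) ?_ ?_
  · rw [← Ideal.span_singleton_prime hX, ← hker]
    exact RingHom.ker_isPrime _
  · rw [IsLocalRing.jacobson_eq_maximalIdeal _ bot_ne_top, IsLocalRing.mem_maximalIdeal,
      mem_nonunits_iff, isUnit_iff_constantCoeff]
    simp

end Dual

section FiniteExtension

variable (B T : Type*) [CommRing B] [CommRing T] [Algebra B T]

/-- The action of a commutative `B`-algebra `T` on its `B`-dual by transposed multiplication. -/
def dualMul : T →ₐ[B] Module.End B (Module.Dual B T) :=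
  AlgHom.ofLinearMap (Module.Dual.transpose ∘ₗ LinearMap.mul B T)
    (LinearMap.ext fun g => LinearMap.ext fun t => congrArg g (one_mul t))
    fun s t => LinearMap.ext fun g => LinearMap.ext fun w =>
      congrArg g (by simp [mul_left_comm, mul_assoc])

theorem sq_ne_of_cube_eq_of_finite {L T : Type*} [Field L] [CharZero L] [CommRing T]
    [Algebra (MvPowerSeries (Fin 2) L) T] [Module.Finite (MvPowerSeries (Fin 2) L) T]
    [FaithfulSMul (MvPowerSeries (Fin 2) L) T] {z : T}
    (hz : z ^ 3 = algebraMap (MvPowerSeries (Fin 2) L) T (-(X 0 ^ 3 + X 1 ^ 3))) (u v : T) :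
    z ^ 2 ≠ u * algebraMap (MvPowerSeries (Fin 2) L) T (X 0) +
      v * algebraMap (MvPowerSeries (Fin 2) L) T (X 1) := by
  classical
  intro hsq
  set B := MvPowerSeries (Fin 2) L
  have : IsDomain B := NoZeroDivisors.to_isDomain _
  have : Module.FinitePresentation B T := Module.finitePresentation_of_finite B T
  have : Module.Free B (Module.Dual B T) := free_dual_mvPowerSeries
  have : Module.Finite B (Module.Dual B T) := by unfold Module.Dual; infer_instance
  obtain ⟨f, hf⟩ := exists_dual_apply_ne_zero (B := B) (e := (1 : T)) fun b hb =>
    (FaithfulSMul.algebraMap_injective B T).eq_iff' (map_zero _) |>.1 (by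
      rwa [Algebra.algebraMap_eq_smul_one])
  have : Nontrivial (Module.Dual B T) := ⟨f, 0, fun h => hf (by rw [h]; rfl)⟩
  let b := Module.Free.chooseBasis B (Module.Dual B T)
  have : Nonempty (Module.Free.ChooseBasisIndex B (Module.Dual B T)) := b.index_nonempty
  let ρ := (LinearMap.toMatrixAlgEquiv b).toAlgHom.comp (dualMul B T)
  refine matrix_sq_ne_of_cube_eq (V := ρ v) ((Commute.all z u).map ρ) ?_ ?_
  · rw [← map_pow, hz, AlgHom.commutes, Algebra.algebraMap_eq_smul_one]
  · rw [← map_pow, hsq, map_add, map_mul, map_mul, AlgHom.commutes, AlgHom.commutes,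
      ← Algebra.commutes, ← Algebra.commutes, Algebra.smul_def, Algebra.smul_def]

end FiniteExtension

section AdicEvaluation

theorem aeval_mem_pow_of_mem_idealOfVars_pow {σ L T : Type*} [CommRing L] [CommRing T]
    [Algebra L T] {J : Ideal T} {a : σ → T} (ha : ∀ i, a i ∈ J) {n : ℕ} {p : MvPolynomial σ L}
    (hp : p ∈ MvPolynomial.idealOfVars σ L ^ n) : MvPolynomial.aeval a p ∈ J ^ n := by
  have hmap : (MvPolynomial.idealOfVars σ L).map (MvPolynomial.aeval a) ≤ J := by
    rw [MvPolynomial.idealOfVars, Ideal.map_span, Ideal.span_le]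
    rintro _ ⟨_, ⟨i, rfl⟩, rfl⟩
    simpa using ha i
  have h := Ideal.mem_map_of_mem (MvPolynomial.aeval a) hp
  rw [Ideal.map_pow] at h
  exact Ideal.pow_right_mono hmap n h

theorem eq_zero_of_forall_mem_pow {T : Type*} [CommRing T] (J : Ideal T) [IsHausdorff J T] {t : T}
    (h : ∀ n, t ∈ J ^ n) : t = 0 :=
  IsHausdorff.haus inferInstance t (I := J) fun n => by simpa [SModEq.zero] using h n

variable {σ T : Type*} (L : Type*) [Finite σ] [CommRing L] [CommRing T] [Algebra L T]
  {J : Ideal T} {a : σ → T} (ha : ∀ i, a i ∈ J)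

/-- Evaluation of power series modulo the `n`-th power of an ideal containing the point `a`. -/
noncomputable def evalModPow (n : ℕ) : MvPowerSeries σ L →ₐ[L] T ⧸ J ^ n :=
  (Ideal.quotientMapₐ (J ^ n) (MvPolynomial.aeval a)
    fun _ => aeval_mem_pow_of_mem_idealOfVars_pow ha).comp
      ((truncTotalAlgHom σ L n).restrictScalars L)

theorem evalModPow_apply (n : ℕ) (f : MvPowerSeries σ L) :
    evalModPow L ha n f = Ideal.Quotient.mk (J ^ n) (MvPolynomial.aeval a (truncTotal n f)) :=
  rfl

theorem factor_comp_evalModPow {m n : ℕ} (hmn : m ≤ n) :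
    (Ideal.Quotient.factorₐ L (Ideal.pow_le_pow_right hmn)).comp (evalModPow L ha n) =
      evalModPow L ha m :=
  AlgHom.ext fun f => Ideal.Quotient.eq.2 <| by
    rw [← map_sub]
    exact aeval_mem_pow_of_mem_idealOfVars_pow ha
      (truncTotal_sub_truncTotal_mem_pow_idealOfVars hmn le_rfl f)

variable [IsAdicComplete J T]

/-- Evaluation of power series at a point of an ideal for which the ring is adically complete. -/
noncomputable def adicEval : MvPowerSeries σ L →ₐ[L] T :=
  IsAdicComplete.liftAlgHom J (evalModPow L ha) (factor_comp_evalModPow L ha)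

theorem adicEval_sub_aeval_truncTotal_mem (f : MvPowerSeries σ L) (n : ℕ) :
    adicEval L ha f - MvPolynomial.aeval a (truncTotal n f) ∈ J ^ n := by
  rw [← Ideal.Quotient.eq, ← evalModPow_apply L ha]
  exact IsAdicComplete.mk_liftAlgHom J _ (factor_comp_evalModPow L ha) n f

@[simp]
theorem adicEval_X (i : σ) : adicEval L ha (X i) = a i := by
  rw [← sub_eq_zero]
  refine eq_zero_of_forall_mem_pow J fun n => ?_
  let p : MvPolynomial σ L := .X i
  have h := adicEval_sub_aeval_truncTotal_mem L ha p (n + p.totalDegree + 1)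
  rw [(truncTotal_coe_eq_self_iff p (by lia)).2 (by lia), MvPolynomial.aeval_X,
    MvPolynomial.coe_X] at h
  exact Ideal.pow_le_pow_right (by lia) h

end AdicEvaluation

section CompleteExtension

theorem isPrecomplete_pi_s16 {B ι : Type*} [CommRing B] [Finite ι] (I : Ideal B) [IsPrecomplete I B] :
    IsPrecomplete I (ι → B) := by
  classical
  have := Fintype.ofFinite ι
  rw [← AdicCompletion.of_surjective_iff]
  intro f
  choose g hg using fun i => AdicCompletion.of_surjective I B
    (AdicCompletion.piEquivOfFintype I (fun _ : ι => B) f i)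
  refine ⟨g, (AdicCompletion.piEquivOfFintype I fun _ : ι => B).injective ?_⟩
  ext1 i
  rw [← hg i, AdicCompletion.piEquivOfFintype_apply]
  rfl

theorem finite_of_finite_quotient_smul_top_s16 {B N : Type*} [CommRing B] [AddCommGroup N]
    [Module B N] (I : Ideal B) [IsPrecomplete I B] [IsHausdorff I N]
    [Module.Finite B (N ⧸ (I • ⊤ : Submodule B N))] : Module.Finite B N := by
  obtain ⟨n, g, hg⟩ := Module.Finite.exists_fin' B (N ⧸ (I • ⊤ : Submodule B N))
  obtain ⟨f, hf⟩ := Module.projective_lifting_property (I • ⊤ : Submodule B N).mkQ g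
    (Submodule.mkQ_surjective _)
  have := isPrecomplete_pi_s16 (ι := Fin n) I
  exact Module.Finite.of_surjective f (surjective_of_mkQ_comp_surjective (I := I) (by rwa [hf]))

/-- A family `a` of elements of the ideal `m` is analytically independent over a ring `L` of
coefficients when no nonzero form `F` over `L`, of degree `d` say, has `F(a) ∈ m * (a) ^ d`. -/
def IsAnalyticallyIndependent {σ T : Type*} (L : Type*) [CommRing L] [CommRing T] [Algebra L T]
    (m : Ideal T) (a : σ → T) : Prop :=
  ∀ ⦃d : ℕ⦄ ⦃F : MvPolynomial σ L⦄, F.IsHomogeneous d →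
    MvPolynomial.aeval a F ∈ m * Ideal.span (Set.range a) ^ d → F = 0

variable {σ T L : Type*} [Finite σ] [CommRing L] [CommRing T] [Algebra L T] {m : Ideal T}
  [IsAdicComplete m T] {a : σ → T} (ha : ∀ i, a i ∈ m) {h : ℕ}

theorem adicEval_injective (hh : m ^ h ≤ Ideal.span (Set.range a))
    (hind : IsAnalyticallyIndependent L m a) : Function.Injective (adicEval L ha) := by
  rw [injective_iff_map_eq_zero]
  intro f hf
  by_contra hf0
  obtain ⟨s, hs, hsd⟩ :=
    exists_coeff_ne_zero_and_order (ENat.natCast_toNat (mt order_eq_top_iff.1 hf0))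
  set I := Ideal.span (Set.range a)
  let d := s.degree
  have hIm : I ≤ m := Ideal.span_le.2 (Set.range_subset_iff.2 ha)
  have hform : (truncTotal (d + 1) f).IsHomogeneous d := by
    intro e he
    have hed : e.degree < d + 1 := by
      by_contra hlt
      exact he (coeff_truncTotal_eq_zero f (not_lt.1 hlt))
    rw [coeff_truncTotal f hed] at he
    have hde : d ≤ e.degree := by
      by_contra hlt
      exact he (coeff_of_lt_order (hsd ▸ Nat.cast_lt.2 (not_le.1 hlt)))
    exact (DFunLike.congr_fun Finsupp.degree_eq_weight_one e).symm.trans (by lia)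
  refine hs ?_
  rw [← coeff_truncTotal (n := d + 1) f (by lia), hind hform ?_, MvPolynomial.coeff_zero]
  let n := (h + 1) * d + 1
  have hn : MvPolynomial.aeval a (truncTotal n f) ∈ m * I ^ d := by
    have h1 := adicEval_sub_aeval_truncTotal_mem L ha f n
    rw [hf, zero_sub, neg_mem_iff, pow_succ', pow_mul] at h1
    exact Ideal.mul_mono_right
      (Ideal.pow_right_mono ((Ideal.pow_le_pow_right h.le_succ).trans hh) d) h1
  have hsub : MvPolynomial.aeval a (truncTotal (d + 1) f - truncTotal n f) ∈ m * I ^ d := by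
    have h1 := aeval_mem_pow_of_mem_idealOfVars_pow (J := I)
      (fun i => Ideal.subset_span ⟨i, rfl⟩) (truncTotal_sub_truncTotal_mem_pow_idealOfVars
        (l := d + 1) le_rfl (show d + 1 ≤ n by lia) f)
    rw [pow_succ'] at h1
    exact Ideal.mul_mono_left hIm h1
  simpa using add_mem hsub hn

theorem finite_adicEval [Module.Finite L (T ⧸ m)] (hm : m.FG)
    (hh : m ^ h ≤ Ideal.span (Set.range a)) : (adicEval L ha).Finite := by
  let B := MvPowerSeries σ L
  let _ : Algebra B T := (adicEval L ha).toAlgebra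
  have : IsScalarTower L B T := .of_algHom (adicEval L ha)
  let I : Ideal B := .span (.range X)
  have hI : I.map (algebraMap B T) = Ideal.span (Set.range a) := by
    rw [Ideal.map_span, ← Set.range_comp]
    exact congrArg Ideal.span (congrArg Set.range (funext (adicEval_X L ha)))
  have hIm : I.map (algebraMap B T) ≤ m :=
    hI.trans_le (Ideal.span_le.2 (Set.range_subset_iff.2 ha))
  have : IsHausdorff I T := IsHausdorff.of_map hIm
  have : Module.Finite B (T ⧸ m) := .of_restrictScalars_finite L _ _
  have hker : RingHom.ker (Ideal.Quotient.factorₐ B hIm) = m.map (Ideal.Quotient.mk _) :=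
    Ideal.Quotient.factor_ker hIm
  have hnil : m.map (Ideal.Quotient.mk (I.map (algebraMap B T))) ≤ nilradical _ :=
    Ideal.map_le_iff_le_comap.2 fun t ht => mem_nilradical.2 ⟨h, by
      rw [← map_pow, Ideal.Quotient.eq_zero_iff_mem, hI]
      exact hh (Ideal.pow_mem_pow ht h)⟩
  have : Module.Finite B (T ⧸ I.map (algebraMap B T)) :=
    Module.finite_of_surjective_of_ker_le_nilradical (Ideal.Quotient.factorₐ B hIm)
      (Ideal.Quotient.factor_surjective hIm) (hker.trans_le hnil) (hker ▸ hm.map _)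
  have : Module.Finite B (T ⧸ (I • ⊤ : Submodule B T)) := by
    rw [Ideal.smul_top_eq_map]
    exact this
  exact finite_of_finite_quotient_smul_top_s16 I

theorem sq_ne_of_cube_eq_of_isAdicComplete {L T : Type*} [Field L] [CharZero L] [CommRing T]
    [Algebra L T] {m : Ideal T} [IsAdicComplete m T] [Module.Finite L (T ⧸ m)] (hm : m.FG)
    {a : Fin 2 → T} (ha : ∀ i, a i ∈ m) {h : ℕ} (hh : m ^ h ≤ Ideal.span (Set.range a))
    (hind : IsAnalyticallyIndependent L m a) {z : T} (hz : z ^ 3 = -(a 0 ^ 3 + a 1 ^ 3))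
    (u v : T) : z ^ 2 ≠ u * a 0 + v * a 1 := by
  let _ : Algebra (MvPowerSeries (Fin 2) L) T := (adicEval L ha).toAlgebra
  have : Module.Finite (MvPowerSeries (Fin 2) L) T := finite_adicEval ha hm hh
  have : FaithfulSMul (MvPowerSeries (Fin 2) L) T :=
    (faithfulSMul_iff_algebraMap_injective _ _).2 (adicEval_injective ha hh hind)
  have hX (i : Fin 2) : algebraMap (MvPowerSeries (Fin 2) L) T (X i) = a i := adicEval_X L ha i
  simpa [hX] using sq_ne_of_cube_eq_of_finite (L := L) (z := z) (by simp [hX, hz]) u v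

end CompleteExtension

section AnalyticIndependence

theorem eval_mul_of_isHomogeneous {σ A : Type*} [CommRing A] {F : MvPolynomial σ A} {d : ℕ}
    (hF : F.IsHomogeneous d) (w : A) (b : σ → A) :
    MvPolynomial.eval (fun i => w * b i) F = w ^ d * MvPolynomial.eval b F := by
  rw [MvPolynomial.eval_eq, MvPolynomial.eval_eq, Finset.mul_sum]
  refine Finset.sum_congr rfl fun s hs => ?_
  simp_rw [mul_pow]
  rw [Finset.prod_mul_distrib, Finset.prod_pow_eq_pow_sum, ← hF.degree_eq_sum_deg_support hs,
    mul_left_comm]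

theorem sup_pow_le_sup_pow {A : Type*} [CommRing A] (I J : Ideal A) (n : ℕ) :
    (I ⊔ J) ^ n ≤ I ⊔ J ^ n := by
  induction n with
  | zero => simp
  | succ n ih =>
    calc (I ⊔ J) ^ (n + 1) ≤ (I ⊔ J ^ n) * (I ⊔ J) := by
          rw [pow_succ]
          exact Ideal.mul_mono_left ih
      _ = (I ⊔ J ^ n) * I ⊔ (I * J ⊔ J ^ (n + 1)) := by
          rw [Ideal.mul_sup, Ideal.sup_mul I (J ^ n) J, pow_succ]
      _ ≤ I ⊔ J ^ (n + 1) :=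
          sup_le (le_sup_of_le_left Ideal.mul_le_right)
            (sup_le_sup_right Ideal.mul_le_left _)

theorem height_le_one_of_pow_le_span_singleton {A : Type*} [CommRing A] [IsNoetherianRing A]
    {I P : Ideal A} (hP : P ∈ I.minimalPrimes) {w : A} (hw : w ∈ P) {d : ℕ}
    (hd : I ^ d ≤ Ideal.span {w}) : P.height ≤ 1 := by
  refine Ideal.height_le_one_of_isPrincipal_of_mem_minimalPrimes (Ideal.span {w}) P
    ⟨⟨hP.1.1, (Ideal.span_singleton_le_iff_mem P).2 hw⟩, ?_⟩
  rintro Q ⟨hQ, hwQ⟩ hQP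
  exact hP.2 ⟨hQ, hQ.le_of_pow_le (hd.trans hwQ)⟩ hQP

variable {A : Type*} [CommRing A] [IsLocalRing A]

open IsLocalRing

theorem exists_isUnit_eval [Infinite (ResidueField A)] {F : MvPolynomial (Fin 2) A}
    (hF : F.map (residue A) ≠ 0) :
    ∃ b : Fin 2 → A, IsUnit (b 1) ∧ IsUnit (MvPolynomial.eval b F) := by
  obtain ⟨c, hc⟩ : ∃ c : Fin 2 → ResidueField A,
      MvPolynomial.eval c (MvPolynomial.X 1 * F.map (residue A)) ≠ 0 := by
    by_contra! h
    exact mul_ne_zero (MvPolynomial.X_ne_zero 1) hF (MvPolynomial.funext (by simpa using h))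
  choose b hb using fun i => residue_surjective (c i)
  obtain rfl : residue A ∘ b = c := funext hb
  rw [map_mul, MvPolynomial.eval_X, MvPolynomial.eval_map, ← MvPolynomial.eval₂_comp,
    mul_ne_zero_iff] at hc
  exact ⟨b, residue_ne_zero_iff_isUnit _ |>.1 hc.1, residue_ne_zero_iff_isUnit _ |>.1 hc.2⟩

variable [IsNoetherianRing A] [Infinite (ResidueField A)] {a : Fin 2 → A}

/-- The element `w` is a line `b₁ a₀ - b₀ a₁` with `F(b)` a unit: modulo `w`, the value `F(a)` is
a unit multiple of `a₁ ^ d`, which therefore lies in `(w) + m (a) ^ d`. -/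
theorem exists_pow_le_span_singleton (ha : ∀ i, a i ∈ maximalIdeal A) {d : ℕ}
    {F : MvPolynomial (Fin 2) A} (hF : F.IsHomogeneous d) (hF0 : F.map (residue A) ≠ 0)
    (hmem : MvPolynomial.eval a F ∈ maximalIdeal A * Ideal.span (Set.range a) ^ d) :
    ∃ w ∈ maximalIdeal A, Ideal.span (Set.range a) ^ d ≤ Ideal.span {w} := by
  obtain ⟨b, hb, hbF⟩ := exists_isUnit_eval hF0
  set I := Ideal.span (Set.range a)
  let w := b 1 * a 0 - b 0 * a 1
  let K := Ideal.span {w} ⊔ maximalIdeal A * I ^ d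
  have hwK : w ∈ K := Ideal.mem_sup_left (Ideal.mem_span_singleton_self w)
  have hI : I ≤ Ideal.span {w} ⊔ Ideal.span {a 1} := by
    have h1 : a 1 ∈ Ideal.span {w} ⊔ Ideal.span {a 1} :=
      Ideal.mem_sup_right (Ideal.mem_span_singleton_self _)
    refine Ideal.span_le.2 (Set.range_subset_iff.2 (Fin.forall_fin_two.2 ⟨?_, h1⟩))
    refine (Ideal.unit_mul_mem_iff_mem _ hb).1 ?_
    rw [show b 1 * a 0 = w + b 0 * a 1 by ring]
    exact add_mem (Ideal.mem_sup_left (Ideal.mem_span_singleton_self w)) (Ideal.mul_mem_left _ _ h1)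
  have hline : MvPolynomial.eval (fun i => b 1 * a i) F - MvPolynomial.eval (fun i => a 1 * b i) F
      ∈ K := by
    rw [← Ideal.Quotient.eq, MvPolynomial.eval₂_comp, MvPolynomial.eval₂_comp]
    congr 1
    funext i
    refine Ideal.Quotient.eq.2 ?_
    fin_cases i
    · simpa [w, mul_comm] using hwK
    · simp [mul_comm (b 1)]
  have hK : a 1 ^ d ∈ K := by
    rw [eval_mul_of_isHomogeneous hF, eval_mul_of_isHomogeneous hF] at hline
    refine (Ideal.mul_unit_mem_iff_mem _ hbF).1 ?_
    exact (Submodule.sub_mem_iff_right K (Ideal.mul_mem_left _ _ (Ideal.mem_sup_right hmem))).1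
      hline
  have hle : I ^ d ≤ K :=
    (Ideal.pow_right_mono hI d).trans <| (sup_pow_le_sup_pow _ _ d).trans <|
      sup_le le_sup_left (by rwa [Ideal.span_singleton_pow, Ideal.span_singleton_le_iff_mem])
  refine ⟨w, sub_mem (Ideal.mul_mem_left _ _ (ha 0)) (Ideal.mul_mem_left _ _ (ha 1)), ?_⟩
  exact Submodule.le_of_le_smul_of_le_jacobson_bot (IsNoetherian.noetherian _)
    (IsLocalRing.maximalIdeal_le_jacobson _) hle

theorem map_residue_eq_zero_of_eval_mem
    (hmin : maximalIdeal A ∈ (Ideal.span (Set.range a)).minimalPrimes)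
    (hht : 1 < (maximalIdeal A).height) {d : ℕ} {F : MvPolynomial (Fin 2) A}
    (hF : F.IsHomogeneous d)
    (hmem : MvPolynomial.eval a F ∈ maximalIdeal A * Ideal.span (Set.range a) ^ d) :
    F.map (residue A) = 0 := by
  by_contra hF0
  obtain ⟨w, hw, hd⟩ := exists_pow_le_span_singleton
    (fun i => hmin.1.2 (Ideal.subset_span ⟨i, rfl⟩)) hF hF0 hmem
  exact hht.not_ge (height_le_one_of_pow_le_span_singleton hmin hw hd)

end AnalyticIndependence

section AnalyticIndependenceCompletion

theorem exists_isHomogeneous_map_eq {σ A B : Type*} [CommSemiring A] [CommSemiring B] {φ : A →+* B}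
    (hφ : Function.Surjective φ) {d : ℕ} {F : MvPolynomial σ B} (hF : F.IsHomogeneous d) :
    ∃ G : MvPolynomial σ A, G.IsHomogeneous d ∧ G.map φ = F := by
  obtain ⟨G, rfl⟩ := MvPolynomial.map_surjective φ hφ F
  refine ⟨MvPolynomial.homogeneousComponent d G,
    MvPolynomial.homogeneousComponent_isHomogeneous d G,
    .trans ?_ ((MvPolynomial.homogeneousComponent_of_mem hF).trans (if_pos rfl))⟩
  ext s
  simp [MvPolynomial.coeff_homogeneousComponent, MvPolynomial.coeff_map, apply_ite φ]

theorem eval₂_sub_eval₂_mem {σ A B : Type*} [CommRing A] [CommRing B] {φ ψ : A →+* B}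
    {M : Ideal B} (h : ∀ c, φ c - ψ c ∈ M) {d : ℕ} {F : MvPolynomial σ A}
    (hF : F.IsHomogeneous d) (b : σ → B) :
    F.eval₂ φ b - F.eval₂ ψ b ∈ M * Ideal.span (Set.range b) ^ d := by
  rw [MvPolynomial.eval₂_eq, MvPolynomial.eval₂_eq, ← Finset.sum_sub_distrib]
  refine sum_mem fun s hs => ?_
  rw [← sub_mul, hF.degree_eq_sum_deg_support hs, ← Finset.prod_pow_eq_pow_sum]
  exact Ideal.mul_mem_mul (h _)
    (Ideal.prod_mem_prod fun i _ => Ideal.pow_mem_pow (Ideal.subset_span (Set.mem_range_self i)) _)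

theorem comap_map_adicCompletion_le {A : Type*} [CommRing A] {m J : Ideal A} {k : ℕ}
    (hk : m ^ k ≤ J) :
    (J.map (algebraMap A (AdicCompletion m A))).comap (algebraMap A (AdicCompletion m A)) ≤ J := by
  let e : AdicCompletion m A →+* A ⧸ J :=
    (Ideal.Quotient.factor hk).comp (AdicCompletion.evalₐ m k).toRingHom
  have he (c : A) : e (algebraMap A _ c) = Ideal.Quotient.mk J c := by
    simp [e]
  have hle : J.map (algebraMap A (AdicCompletion m A)) ≤ RingHom.ker e :=
    Ideal.map_le_iff_le_comap.2 fun c hc => by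
      rwa [Ideal.mem_comap, RingHom.mem_ker, he, Ideal.Quotient.eq_zero_iff_mem]
  intro c hc
  rw [← Ideal.Quotient.eq_zero_iff_mem, ← he]
  exact hle hc

open IsLocalRing

theorem isAnalyticallyIndependent_map {A T : Type*} [CommRing A] [IsLocalRing A]
    [IsNoetherianRing A] [Infinite (ResidueField A)] [CommRing T] [Algebra A T]
    [Algebra (ResidueField A) T]
    (hT : ∀ ⦃J : Ideal A⦄ ⦃k : ℕ⦄, maximalIdeal A ^ k ≤ J →
      (J.map (algebraMap A T)).comap (algebraMap A T) ≤ J)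
    (hsec : ∀ c : A, algebraMap (ResidueField A) T (residue A c) - algebraMap A T c ∈
      (maximalIdeal A).map (algebraMap A T))
    {a : Fin 2 → A} (hmin : maximalIdeal A ∈ (Ideal.span (Set.range a)).minimalPrimes) {h : ℕ}
    (hh : maximalIdeal A ^ h ≤ Ideal.span (Set.range a)) (hht : 1 < (maximalIdeal A).height) :
    IsAnalyticallyIndependent (ResidueField A) ((maximalIdeal A).map (algebraMap A T))
      (algebraMap A T ∘ a) := by
  intro d F hF hmem
  obtain ⟨G, hG, rfl⟩ := exists_isHomogeneous_map_eq residue_surjective hF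
  have hk : maximalIdeal A ^ (h * d + 1) ≤ maximalIdeal A * Ideal.span (Set.range a) ^ d := by
    rw [pow_succ', pow_mul]
    exact Ideal.mul_mono_right (Ideal.pow_right_mono hh d)
  refine map_residue_eq_zero_of_eval_mem hmin hht hG (hT hk ?_)
  rw [Ideal.mem_comap, MvPolynomial.eval₂_comp, Ideal.map_mul, Ideal.map_pow, Ideal.map_span,
    ← Set.range_comp]
  refine (Submodule.sub_mem_iff_right _ ?_).1 (eval₂_sub_eval₂_mem
    (φ := (algebraMap (ResidueField A) T).comp (residue A)) hsec hG (algebraMap A T ∘ a))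
  rwa [MvPolynomial.aeval_def, MvPolynomial.eval₂_map] at hmem

end AnalyticIndependenceCompletion

section HeightBound

open IsLocalRing

theorem formallySmooth_of_charZero (k K : Type*) [Field k] [CharZero k] [Field K] [Algebra k K] :
    Algebra.FormallySmooth k K := by
  obtain ⟨s, hs⟩ := exists_isTranscendenceBasis k K
  have := hs.isAlgebraic_field
  have : CharZero (IntermediateField.adjoin k (Set.range ((↑) : s → K))) :=
    charZero_of_injective_algebraMap (algebraMap k _).injective
  exact .of_algebraicIndependent_of_isSeparable hs.1

theorem exists_pow_le_of_mem_minimalPrimes {A : Type*} [CommRing A] [IsLocalRing A]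
    [IsNoetherianRing A] {I : Ideal A} (hI : maximalIdeal A ∈ I.minimalPrimes) :
    ∃ h, maximalIdeal A ^ h ≤ I := by
  have hrad : maximalIdeal A ≤ I.radical := by
    rw [Ideal.radical_eq_sInf]
    exact le_sInf fun P ⟨hIP, hP⟩ => hI.2 ⟨hP, hIP⟩ (le_maximalIdeal hP.ne_top)
  obtain ⟨h, hh⟩ := I.exists_radical_pow_le_of_fg I.radical.fg_of_isNoetherianRing
  exact ⟨h, (Ideal.pow_right_mono hrad h).trans hh⟩

theorem exists_section_evalOneₐ (A : Type*) [CommRing A] [IsLocalRing A] [Algebra ℚ A] :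
    ∃ σ : ResidueField A →+* AdicCompletion (maximalIdeal A) A,
      ∀ c, AdicCompletion.evalOneₐ (maximalIdeal A) (σ c) = c := by
  have : Algebra.FormallySmooth ℚ (ResidueField A) := formallySmooth_of_charZero _ _
  obtain ⟨g, hg⟩ := Algebra.FormallySmooth.exists_adicCompletionEvalOneₐ_comp_eq
    (R := ℚ) (S := A) (I := maximalIdeal A) (AlgHom.id ℚ (ResidueField A))
  exact ⟨g.toRingHom, DFunLike.congr_fun hg⟩

theorem height_maximalIdeal_le_one {A : Type*} [CommRing A] [IsLocalRing A] [IsNoetherianRing A]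
    [Algebra ℚ A] {a : Fin 2 → A} (hmin : maximalIdeal A ∈ (Ideal.span (Set.range a)).minimalPrimes)
    {z u v : A} (hcube : z ^ 3 = -(a 0 ^ 3 + a 1 ^ 3)) (hsq : z ^ 2 = u * a 0 + v * a 1) :
    (maximalIdeal A).height ≤ 1 := by
  by_contra! hht
  set m := maximalIdeal A
  have hfg : m.FG := m.fg_of_isNoetherianRing
  let T := AdicCompletion m A
  have : CharZero (ResidueField A) := algebraRat.charZero _
  obtain ⟨σ, hσ⟩ := exists_section_evalOneₐ A
  let _ : Algebra (ResidueField A) T := σ.toAlgebra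
  have hker (t : T) : t ∈ m.map (algebraMap A T) ↔ AdicCompletion.evalOneₐ m t = 0 := by
    rw [← AdicCompletion.ker_evalOneₐ_eq_map m hfg]
    rfl
  have : IsAdicComplete (m.map (algebraMap A T)) T := AdicCompletion.isAdicComplete_self m hfg
  have : Module.Finite (ResidueField A) (T ⧸ m.map (algebraMap A T)) := by
    refine .of_surjective (Algebra.linearMap _ _) (Ideal.Quotient.mk_surjective.forall.2 fun t =>
      ⟨AdicCompletion.evalOneₐ m t, Ideal.Quotient.eq.2 ((hker _).2 ?_)⟩)
    exact (map_sub _ _ _).trans (sub_eq_zero.2 (hσ _))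
  obtain ⟨h, hh⟩ := exists_pow_le_of_mem_minimalPrimes hmin
  have hind := isAnalyticallyIndependent_map (T := T) (fun _ _ => comap_map_adicCompletion_le)
    (fun c => (hker _).2 ((map_sub _ _ _).trans (sub_eq_zero.2 (hσ _)))) hmin hh hht
  refine sq_ne_of_cube_eq_of_isAdicComplete (a := algebraMap A T ∘ a) (h := h) (hfg.map _)
    (fun i => Ideal.mem_map_of_mem _ (hmin.1.2 (Ideal.subset_span ⟨i, rfl⟩))) ?_ hind
    (z := algebraMap A T z) ?_ (algebraMap A T u) (algebraMap A T v) ?_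
  · rw [← Ideal.map_pow, Set.range_comp, ← Ideal.map_span]
    exact Ideal.map_mono hh
  · simp only [Function.comp_apply, ← map_pow, ← map_add, ← map_neg, hcube]
  · simp only [Function.comp_apply, ← map_pow, ← map_mul, ← map_add, hsq]

theorem exists_height_le_one {S : Type*} [CommRing S] [IsNoetherianRing S] [Algebra ℚ S]
    {a : Fin 2 → S} (hne : Ideal.span (Set.range a) ≠ ⊤) {z u v : S}
    (hcube : z ^ 3 = -(a 0 ^ 3 + a 1 ^ 3)) (hsq : z ^ 2 = u * a 0 + v * a 1) :
    ∃ P ∈ (Ideal.span (Set.range a)).minimalPrimes, P.height ≤ 1 := by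
  obtain ⟨P, hP⟩ := Ideal.nonempty_minimalPrimes hne
  have : P.IsPrime := hP.1.1
  let A := Localization.AtPrime P
  have hmin : maximalIdeal A ∈ (Ideal.span (Set.range (algebraMap S A ∘ a))).minimalPrimes := by
    rw [Set.range_comp, ← Ideal.map_span, IsLocalization.minimalPrimes_map P.primeCompl]
    rwa [Set.mem_preimage, Localization.AtPrime.under_maximalIdeal]
  have hA : (maximalIdeal A).height ≤ 1 :=
    height_maximalIdeal_le_one (z := algebraMap S A z) (u := algebraMap S A u)
      (v := algebraMap S A v) hmin
      (by simp only [Function.comp_apply, ← map_pow, ← map_add, ← map_neg, hcube])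
      (by simp only [Function.comp_apply, ← map_pow, ← map_mul, ← map_add, hsq])
  rw [← IsLocalization.height_under P.primeCompl, Localization.AtPrime.under_maximalIdeal] at hA
  exact ⟨P, hP, hA⟩

end HeightBound

/-! ### The Q-sequence -/

section CyclicChain

variable {S S' : Type*} [CommRing S] [CommRing S'] {J K : Ideal S} {h : ℕ}

/-- `S ⧸ K` is generated by `h` elements, each of which is carried by `J` into the span of its
predecessors: a filtration of `S ⧸ K` witnessing `J`-quasilength at most `h`, with the generators
lifted to `S`. -/
def HasCyclicChain_s16 (J K : Ideal S) (h : ℕ) : Prop :=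
  ∃ f : Fin h → S, (∀ i, ∀ r ∈ J, r * f i ∈ K ⊔ Ideal.span (f '' Set.Iio i)) ∧
    K ⊔ Ideal.span (Set.range f) = ⊤

theorem span_image_castSucc_lt_succ {M : Type*} [AddCommGroup M] [Module S M] (m : Fin h → M)
    (i : Fin h) : Submodule.span S (m '' {j | j.castSucc < i.succ}) =
      Submodule.span S (m '' {j | j.castSucc < i.castSucc}) ⊔ Submodule.span S {m i} := by
  have hset : {j : Fin h | j.castSucc < i.succ} = {j | j.castSucc < i.castSucc} ∪ {i} := by
    ext j
    simp [Fin.castSucc_lt_succ_iff, le_iff_eq_or_lt]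
  rw [hset, Set.image_union, Set.image_singleton, Submodule.span_union]

theorem eq_span_image_of_forall_succ_eq_sup {M : Type*} [AddCommGroup M] [Module S M]
    {c : Fin (h + 1) → Submodule S M} {m : Fin h → M} (h0 : c 0 = ⊥)
    (hc : ∀ i : Fin h, c i.succ = c i.castSucc ⊔ Submodule.span S {m i}) (i : Fin (h + 1)) :
    c i = Submodule.span S (m '' {j | j.castSucc < i}) := by
  induction i using Fin.induction with
  | zero => simp [h0]
  | succ i ih => rw [hc, ih, span_image_castSucc_lt_succ]

theorem HasQLFiltration.hasCyclicChain_s16 {R : Type u} [CommRing R] {J I : Ideal R}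
    (H : HasQLFiltration R J (R ⧸ I) h) : HasCyclicChain_s16 J I h := by
  obtain ⟨c, -, h0, htop, hc⟩ := H
  choose m hm using fun i => (hc i).1
  choose f hf using fun i => Ideal.Quotient.mk_surjective (m i)
  have hcomap (i : Fin (h + 1)) :
      (c i).comap I.mkQ = I ⊔ Ideal.span (f '' {j | j.castSucc < i}) := by
    have hmf : m = I.mkQ ∘ f := funext fun j => (hf j).symm
    rw [eq_span_image_of_forall_succ_eq_sup h0 hm i, hmf, Set.image_comp, ← Submodule.map_span,
      Submodule.comap_map_mkQ]
  refine ⟨f, fun i r hr => ?_, ?_⟩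
  · have hmem : r • m i ∈ c i.castSucc := (hc i).2 r hr _ <|
      hm i ▸ Submodule.mem_sup_right (Submodule.mem_span_singleton_self _)
    have hset : {j : Fin h | j.castSucc < i.castSucc} = Set.Iio i := by ext; simp
    rw [← hset, ← hcomap, Submodule.mem_comap, ← smul_eq_mul, map_smul]
    exact (hf i).symm ▸ hmem
  · have hset : {j : Fin h | j.castSucc < Fin.last h} = Set.univ := by
      ext j
      simp [Fin.castSucc_lt_last]
    rw [← Set.image_univ, ← hset, ← hcomap, htop, Submodule.comap_top]

namespace HasCyclicChain_s16

theorem map (H : HasCyclicChain_s16 J K h) (φ : S →+* S') :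
    HasCyclicChain_s16 (J.map φ) (K.map φ) h := by
  obtain ⟨f, hf, htop⟩ := H
  refine ⟨φ ∘ f, fun i => ?_, ?_⟩
  · have hle : J.map φ ≤
        (K.map φ ⊔ Ideal.span ((φ ∘ f) '' Set.Iio i)).colon {φ (f i)} := by
      refine Ideal.map_le_iff_le_comap.2 fun r hr => ?_
      have hmem := Ideal.mem_map_of_mem φ (hf i r hr)
      rw [Ideal.map_sup, Ideal.map_span, ← Set.image_comp, map_mul] at hmem
      exact Submodule.mem_colon_singleton.2 hmem
    exact fun r hr => Submodule.mem_colon_singleton.1 (hle hr)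
  · rw [Set.range_comp, ← Ideal.map_span, ← Ideal.map_sup, htop, Ideal.map_top]

theorem comap_of_surjective {K : Ideal S'} {φ : S →+* S'} (hφ : Function.Surjective φ)
    (H : HasCyclicChain_s16 (J.map φ) K h) : HasCyclicChain_s16 J (K.comap φ) h := by
  obtain ⟨f', hf, htop⟩ := H
  choose f hff' using fun i => hφ (f' i)
  obtain rfl : φ ∘ f = f' := funext hff'
  have hspan (s : Set (Fin h)) : K.comap φ ⊔ Ideal.span (f '' s) =
      (K ⊔ Ideal.span ((φ ∘ f) '' s)).comap φ := by
    have hK : (K.comap φ ⊔ Ideal.span (f '' s)).map φ = K ⊔ Ideal.span ((φ ∘ f) '' s) := by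
      rw [Ideal.map_sup, Ideal.map_comap_of_surjective φ hφ, Ideal.map_span, ← Set.image_comp]
    rw [← hK, Ideal.comap_map_of_surjective φ hφ, eq_comm, sup_eq_left]
    exact (Ideal.comap_mono bot_le).trans le_sup_left
  refine ⟨f, fun i r hr => ?_, ?_⟩
  · rw [hspan, Ideal.mem_comap, map_mul]
    exact hf i _ (Ideal.mem_map_of_mem φ hr)
  · rw [← Set.image_univ, hspan, Set.image_univ, htop, Ideal.comap_top]

end HasCyclicChain_s16

end CyclicChain

section Finrank

variable {k Q : Type*} [Field k] [CommRing Q] [Algebra k Q] [Module.Finite k Q]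

theorem finrank_sup_span_singleton_le {J N : Ideal Q} {f : Q} (hf : ∀ r ∈ J, r * f ∈ N) :
    Module.finrank k ↥(N ⊔ Ideal.span {f}) ≤ Module.finrank k N + Module.finrank k (Q ⧸ J) := by
  obtain ⟨E, hE⟩ := Submodule.exists_isCompl (J.restrictScalars k)
  have hle : (N ⊔ Ideal.span {f}).restrictScalars k ≤
      N.restrictScalars k ⊔ E.map (LinearMap.mulRight k f) := by
    intro q hq
    obtain ⟨a, ha, b, hb, rfl⟩ := Submodule.mem_sup.1 hq
    obtain ⟨r, rfl⟩ := Ideal.mem_span_singleton'.1 hb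
    obtain ⟨r, hr, e, he, rfl⟩ :=
      Submodule.mem_sup.1 (hE.sup_eq_top.ge (Submodule.mem_top (x := r)))
    rw [add_mul, ← add_assoc]
    exact Submodule.add_mem_sup (N.add_mem ha (hf r hr)) ⟨e, he, rfl⟩
  calc Module.finrank k ↥(N ⊔ Ideal.span {f})
      ≤ Module.finrank k ↥(N.restrictScalars k ⊔ E.map (LinearMap.mulRight k f)) :=
        Submodule.finrank_mono hle
    _ ≤ Module.finrank k N + Module.finrank k (E.map (LinearMap.mulRight k f)) :=
        Submodule.finrank_add_le_finrank_add_finrank _ _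
    _ ≤ Module.finrank k N + Module.finrank k E := by
        gcongr
        exact Submodule.finrank_map_le _ E
    _ = Module.finrank k N + Module.finrank k (Q ⧸ J) := by
        rw [← (Submodule.quotientEquivOfIsCompl _ E hE).finrank_eq]
        rfl

theorem HasCyclicChain_s16.finrank_le {J : Ideal Q} {h : ℕ} (H : HasCyclicChain_s16 J ⊥ h) :
    Module.finrank k Q ≤ h * Module.finrank k (Q ⧸ J) := by
  obtain ⟨f, hf, htop⟩ := H
  simp only [bot_sup_eq] at hf htop
  have hchain (i : Fin (h + 1)) : Module.finrank k (Ideal.span (f '' {j | j.castSucc < i})) ≤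
      i * Module.finrank k (Q ⧸ J) := by
    induction i using Fin.induction with
    | zero =>
      have hbot : Ideal.span (f '' {j | j.castSucc < 0}) = ⊥ := by simp
      rw [hbot, Fin.val_zero, zero_mul]
      exact (finrank_bot k Q).le
    | succ i ih =>
      have hset : {j : Fin h | j.castSucc < i.castSucc} = Set.Iio i := by ext; simp
      rw [Ideal.span, span_image_castSucc_lt_succ, Fin.val_succ, add_one_mul]
      exact (finrank_sup_span_singleton_le (hset ▸ hf i)).trans (by gcongr; exact ih)
  have hset : {j : Fin h | j.castSucc < Fin.last h} = Set.univ := by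
    ext j
    simp [Fin.castSucc_lt_last]
  have hlast := hchain (Fin.last h)
  rw [hset, Set.image_univ, htop, Fin.val_last] at hlast
  exact (Submodule.topEquiv.restrictScalars k).finrank_eq.symm.trans_le hlast

end Finrank

section Descent

theorem exists_finite_forall_mem_span {S : Type u} [CommRing S] {G : Set S} {q : S}
    (hq : q ∈ Ideal.span G) : ∃ T : Set S, T.Finite ∧ ∀ {S' : Type u} [CommRing S'] (ι : S' →+* S),
      Function.Injective ι → T ⊆ Set.range ι →
        ∀ {G' : Set S'} {q' : S'}, ι '' G' = G → ι q' = q → q' ∈ Ideal.span G' := by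
  obtain ⟨n, c, g, rfl⟩ := Submodule.mem_span_set'.1 hq
  refine ⟨Set.range c, Set.finite_range c, fun ι hι hT G' q' hG hq' => ?_⟩
  choose c' hc' using fun i => hT (Set.mem_range_self i)
  choose g' hg' hg using fun i => hG.ge (g i).2
  have hsum : q' = ∑ i, c' i * g' i := by
    refine hι ?_
    simp only [hq', map_sum, map_mul, hc', hg, smul_eq_mul]
  exact hsum ▸ Ideal.sum_mem _ fun i _ => Ideal.mul_mem_left _ _ (Ideal.subset_span (hg' i))

theorem HasCyclicChain_s16.exists_finite_forall_of_injective {S : Type u} [CommRing S] {A B : Set S}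
    {h : ℕ} (hA : A.Finite) (H : HasCyclicChain_s16 (Ideal.span A) (Ideal.span B) h) :
    ∃ T : Set S, T.Finite ∧ ∀ {S' : Type u} [CommRing S'] (ι : S' →+* S),
      Function.Injective ι → T ⊆ Set.range ι → ∀ {A' B' : Set S'}, ι '' A' = A → ι '' B' = B →
        HasCyclicChain_s16 (Ideal.span A') (Ideal.span B') h := by
  obtain ⟨f, hf, htop⟩ := H
  simp only [← Ideal.span_union] at hf htop
  have hA' : Finite A := hA
  choose T hT hmem using fun (i : Fin h) (a : A) =>
    exists_finite_forall_mem_span (hf i a (Ideal.subset_span a.2))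
  obtain ⟨T₁, hT₁, hone⟩ := exists_finite_forall_mem_span ((Ideal.eq_top_iff_one _).1 htop)
  refine ⟨Set.range f ∪ (T₁ ∪ ⋃ i, ⋃ a, T i a), (Set.finite_range f).union
    (hT₁.union (Set.finite_iUnion fun i => Set.finite_iUnion (hT i))), ?_⟩
  intro S' _ ι hι hsub A' B' hA' hB'
  obtain ⟨hfι, hT₁ι, hTι⟩ := Set.union_subset_iff.1 hsub |>.imp_right Set.union_subset_iff.1
  choose f' hf' using fun i => hfι (Set.mem_range_self i)
  obtain rfl : ι ∘ f' = f := funext hf'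
  refine ⟨f', fun i r hr => ?_, ?_⟩
  · have hle : Ideal.span A' ≤
        (Ideal.span B' ⊔ Ideal.span (f' '' Set.Iio i)).colon {f' i} := by
      refine Ideal.span_le.2 fun a ha => Submodule.mem_colon_singleton.2 ?_
      rw [← Ideal.span_union]
      refine hmem i ⟨ι a, hA' ▸ ⟨a, ha, rfl⟩⟩ ι hι
        ((Set.subset_iUnion₂ (s := fun i a => T i a) i _).trans hTι) ?_ (map_mul ι a (f' i))
      rw [Set.image_union, hB', Set.image_comp]
    exact Submodule.mem_colon_singleton.1 (hle hr)
  · rw [← Ideal.span_union, Ideal.eq_top_iff_one]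
    refine hone ι hι hT₁ι ?_ (map_one ι)
    rw [Set.image_union, hB', Set.range_comp]

theorem HasCyclicChain_s16.exists_fg_subalgebra {σ A : Type*} {𝕜 : Type u} [CommRing A] [CommRing 𝕜]
    [Algebra A 𝕜] {J K : Ideal (MvPolynomial σ A)} {h : ℕ} (hJ : J.FG)
    (H : HasCyclicChain_s16 (J.map (MvPolynomial.map (algebraMap A 𝕜)))
      (K.map (MvPolynomial.map (algebraMap A 𝕜))) h) :
    ∃ D : Subalgebra A 𝕜, D.FG ∧ HasCyclicChain_s16 (J.map (MvPolynomial.map (algebraMap A D)))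
      (K.map (MvPolynomial.map (algebraMap A D))) h := by
  classical
  obtain ⟨G, rfl⟩ := hJ
  rw [Ideal.map_span] at H
  obtain ⟨T, hT, hdesc⟩ :=
    H.exists_finite_forall_of_injective (G.finite_toSet.image _)
  let s : Finset 𝕜 := hT.toFinset.biUnion MvPolynomial.coeffs
  let D := Algebra.adjoin A (s : Set 𝕜)
  have hTD : T ⊆ Set.range (MvPolynomial.map (σ := σ) D.val.toRingHom) := by
    intro q hq
    rw [MvPolynomial.mem_range_map_iff_coeffs_subset]
    refine fun a ha => ⟨⟨a, Algebra.subset_adjoin ?_⟩, rfl⟩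
    exact Finset.mem_biUnion.2 ⟨q, hT.mem_toFinset.2 hq, ha⟩
  have himage (B : Set (MvPolynomial σ A)) : MvPolynomial.map D.val.toRingHom ''
      (MvPolynomial.map (algebraMap A D) '' B) = MvPolynomial.map (algebraMap A 𝕜) '' B := by
    rw [← Set.image_comp]
    exact Set.image_congr fun q _ => MvPolynomial.map_map _ _ q
  refine ⟨D, ⟨s, rfl⟩, ?_⟩
  rw [Ideal.map_span]
  exact hdesc _ (MvPolynomial.map_injective _ Subtype.val_injective) hTD (himage G) (himage K)

end Descent

section CubicIdeal

variable {S : Type*} [CommRing S]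

theorem sup_pow_add_add_one_le (I J : Ideal S) (n m : ℕ) :
    (I ⊔ J) ^ (n + m + 1) ≤ I ^ (n + 1) * (I ⊔ J) ^ m ⊔ J ^ (m + 1) * (I ⊔ J) ^ n := by
  nth_rewrite 1 [← Ideal.add_eq_sup]
  rw [add_pow, Ideal.sum_eq_sup]
  refine Finset.sup_le fun i hi => Ideal.mul_le_left.trans ?_
  have hi : i ≤ n + m + 1 := Nat.lt_succ_iff.1 (Finset.mem_range.1 hi)
  rcases le_or_gt (n + 1) i with h | h
  · obtain ⟨j, rfl⟩ := Nat.exists_eq_add_of_le h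
    obtain ⟨l, rfl⟩ : ∃ l, m = j + l := ⟨m - j, by omega⟩
    rw [show n + (j + l) + 1 - (n + 1 + j) = l by omega, pow_add I, mul_assoc, pow_add (I ⊔ J)]
    exact le_sup_of_le_left (Ideal.mul_mono_right (Ideal.mul_mono
      (Ideal.pow_right_mono le_sup_left j) (Ideal.pow_right_mono le_sup_right l)))
  · obtain ⟨l, rfl⟩ := Nat.exists_eq_add_of_le (Nat.lt_succ_iff.1 h)
    rw [show i + l + m + 1 - i = m + 1 + l by omega, pow_add J, mul_left_comm, pow_add (I ⊔ J)]
    exact le_sup_of_le_right (Ideal.mul_mono_right (Ideal.mul_mono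
      (Ideal.pow_right_mono le_sup_left i) (Ideal.pow_right_mono le_sup_right l)))

theorem pow_add_le_of_pow_succ_le {I M : Ideal S} {r : ℕ} (h : M ^ (r + 1) ≤ I * M ^ r) (j : ℕ) :
    M ^ (r + j) ≤ I ^ j * M ^ r := by
  induction j with
  | zero => simp
  | succ j ih =>
    calc M ^ (r + (j + 1)) = M * M ^ (r + j) := by ring
      _ ≤ M * (I ^ j * M ^ r) := Ideal.mul_mono_right ih
      _ = I ^ j * M ^ (r + 1) := by ring
      _ ≤ I ^ j * (I * M ^ r) := Ideal.mul_mono_right h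
      _ = I ^ (j + 1) * M ^ r := by ring

variable {x y z : S} (hz : z ^ 3 = -(x ^ 3 + y ^ 3))

include hz

theorem span_pow_add_two_eq_bot_of_cube_eq {n : ℕ} (hx : x ^ n = 0) (hy : y ^ n = 0) :
    Ideal.span {x, y, z} ^ (2 * n + 2) = ⊥ := by
  have hsup : Ideal.span {x, y, z} = Ideal.span {x, y} ⊔ Ideal.span {z} := by
    simp only [Ideal.span_insert, sup_assoc]
  have hcube : Ideal.span {z} ^ 3 ≤ Ideal.span {x, y} ^ 3 := by
    rw [Ideal.span_singleton_pow, Ideal.span_singleton_le_iff_mem, hz]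
    exact neg_mem (add_mem (Ideal.pow_mem_pow (Ideal.subset_span (by simp)) 3)
      (Ideal.pow_mem_pow (Ideal.subset_span (by simp)) 3))
  have hred : Ideal.span {x, y, z} ^ (2 + 1) ≤ Ideal.span {x, y} * Ideal.span {x, y, z} ^ 2 := by
    rw [hsup]
    refine (zero_add 2 ▸ sup_pow_add_add_one_le _ _ 0 2).trans (sup_le (by simp) ?_)
    rw [pow_zero, mul_one]
    refine hcube.trans ?_
    rw [pow_succ']
    exact Ideal.mul_mono_right (Ideal.pow_right_mono le_sup_left 2)
  have hxy : Ideal.span {x, y} ^ (n + n) = ⊥ := by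
    rw [Ideal.span_insert, eq_bot_iff]
    refine Ideal.sup_pow_add_le_pow_sup_pow.trans ?_
    simp [Ideal.span_singleton_pow, hx, hy]
  rw [eq_bot_iff, add_comm, two_mul, ← hxy]
  exact (pow_add_le_of_pow_succ_le hred _).trans Ideal.mul_le_left

/-- `z²ᵖ = -(x³ + y³)^(2r+1) z` lies in the ideal `(x, y)⁶ʳ⁺³ z`, and `6r + 3 = 2p - 1`. -/
theorem exists_mem_pow_sq_pow_eq {r p : ℕ} (hp : p = 3 * r + 2) :
    ∃ u ∈ Ideal.span {x, y, z} ^ p, ∃ v ∈ Ideal.span {x, y, z} ^ p,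
      (z ^ p) ^ 2 = u * x ^ p + v * y ^ p := by
  have hxy : Ideal.span {x} ⊔ Ideal.span {y} ≤ Ideal.span {x, y, z} := by
    simp only [Ideal.span_insert, ← sup_assoc, le_sup_left]
  have hle : (Ideal.span {x} ⊔ Ideal.span {y}) ^ (3 * r + 1 + (3 * r + 1) + 1) * Ideal.span {z} ≤
      Ideal.span {x, y, z} ^ p * Ideal.span {x ^ p} ⊔
        Ideal.span {x, y, z} ^ p * Ideal.span {y ^ p} := by
    have hpow : (Ideal.span {x} ⊔ Ideal.span {y}) ^ (3 * r + 1) * Ideal.span {z} ≤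
        Ideal.span {x, y, z} ^ p := by
      rw [hp, pow_succ _ (3 * r + 1)]
      exact Ideal.mul_mono (Ideal.pow_right_mono hxy _) (Ideal.span_mono (by simp))
    refine (Ideal.mul_mono_left (sup_pow_add_add_one_le _ _ _ _)).trans ?_
    rw [Ideal.sup_mul, mul_assoc, mul_assoc, Ideal.span_singleton_pow, Ideal.span_singleton_pow,
      ← hp, mul_comm (Ideal.span {x ^ p}), mul_comm (Ideal.span {y ^ p})]
    exact sup_le_sup (Ideal.mul_mono_left hpow) (Ideal.mul_mono_left hpow)
  have hmem : (x ^ 3 + y ^ 3) ^ (2 * r + 1) ∈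
      (Ideal.span {x} ⊔ Ideal.span {y}) ^ (3 * r + 1 + (3 * r + 1) + 1) := by
    rw [show 3 * r + 1 + (3 * r + 1) + 1 = 3 * (2 * r + 1) by ring, pow_mul]
    refine Ideal.pow_mem_pow (add_mem (Ideal.pow_mem_pow ?_ 3) (Ideal.pow_mem_pow ?_ 3)) _
    · exact Ideal.mem_sup_left (Ideal.mem_span_singleton_self x)
    · exact Ideal.mem_sup_right (Ideal.mem_span_singleton_self y)
  have hzp : (z ^ p) ^ 2 = -((x ^ 3 + y ^ 3) ^ (2 * r + 1) * z) := by
    have hodd : Odd (2 * r + 1) := odd_two_mul_add_one r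
    calc (z ^ p) ^ 2 = (z ^ 3) ^ (2 * r + 1) * z := by rw [hp]; ring
      _ = _ := by rw [hz, hodd.neg_pow, neg_mul]
  obtain ⟨_, hs, _, ht, hst⟩ := Submodule.mem_sup.1 (hle (neg_mem
    (Ideal.mul_mem_mul hmem (Ideal.mem_span_singleton_self z))))
  obtain ⟨u, hu, rfl⟩ := Ideal.mem_mul_span_singleton.1 hs
  obtain ⟨v, hv, rfl⟩ := Ideal.mem_mul_span_singleton.1 ht
  exact ⟨u, hu, v, hv, hzp.trans hst.symm⟩

end CubicIdeal

section ArtinianCubic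

theorem exists_free_algebra_pow_eq {R : Type u} [CommRing R] [Nontrivial R] (n : ℕ) [NeZero n]
    (a : R) :
    ∃ (A : Type u) (_ : CommRing A) (_ : Nontrivial A) (_ : Algebra R A) (_ : Module.Free R A)
      (_ : Module.Finite R A) (x : A), Module.finrank R A = n ∧ x ^ n = algebraMap R A a ∧
        ∀ b : A, ∃ c : R, b - algebraMap R A c ∈ Ideal.span {x} := by
  let f : Polynomial R := Polynomial.X ^ n - Polynomial.C a
  have hf : f.Monic := Polynomial.monic_X_pow_sub_C a (NeZero.ne n)
  have hrank : Module.finrank R (AdjoinRoot f) = n := by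
    rw [(AdjoinRoot.isAdjoinRootMonic f hf).finrank, Polynomial.natDegree_X_pow_sub_C]
  refine ⟨AdjoinRoot f, inferInstance, Module.nontrivial_of_finrank_pos (hrank ▸ NeZero.pos n),
    inferInstance, hf.free_adjoinRoot, hf.finite_adjoinRoot, AdjoinRoot.root f, hrank,
    ?_, fun b => ?_⟩
  · rw [← sub_eq_zero, ← AdjoinRoot.eval₂_root f]
    simp [f]
  · obtain ⟨q, rfl⟩ := AdjoinRoot.mk_surjective b
    obtain ⟨g, hg⟩ := Polynomial.X_dvd_sub_C (p := q)
    refine ⟨q.coeff 0, Ideal.mem_span_singleton.2 ⟨AdjoinRoot.mk f g, ?_⟩⟩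
    rw [AdjoinRoot.algebraMap_eq, ← AdjoinRoot.mk_C, ← map_sub, hg, map_mul, AdjoinRoot.mk_X]

theorem exists_free_algebra_pow_eq_pow_eq {R : Type u} [CommRing R] [Nontrivial R] (n : ℕ)
    [NeZero n] (a b : R) :
    ∃ (B : Type u) (_ : CommRing B) (_ : Nontrivial B) (_ : Algebra R B) (_ : Module.Free R B)
      (_ : Module.Finite R B) (x y : B), Module.finrank R B = n * n ∧ x ^ n = algebraMap R B a ∧
        y ^ n = algebraMap R B b ∧ ∀ c : B, ∃ r : R, c - algebraMap R B r ∈ Ideal.span {x, y} := by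
  obtain ⟨A, _, _, _, _, _, x, hA, hx, hxA⟩ := exists_free_algebra_pow_eq n a
  obtain ⟨B, _, _, _, _, _, y, hB, hy, hyB⟩ := exists_free_algebra_pow_eq n (algebraMap R A b)
  let := Algebra.compHom B (algebraMap R A)
  have : IsScalarTower R A B := .of_algebraMap_eq' rfl
  refine ⟨B, inferInstance, inferInstance, inferInstance, .trans (S := A), .trans A B,
    algebraMap A B x, y, ?_, ?_, ?_, fun c => ?_⟩
  · rw [← Module.finrank_mul_finrank R A B, hA, hB]
  · rw [← map_pow, hx, ← IsScalarTower.algebraMap_apply]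
  · rw [hy, ← IsScalarTower.algebraMap_apply]
  · obtain ⟨c', hc'⟩ := hyB c
    obtain ⟨r, hr⟩ := hxA c'
    refine ⟨r, ?_⟩
    rw [IsScalarTower.algebraMap_apply R A B, ← sub_add_sub_cancel c (algebraMap A B c'),
      ← map_sub, Ideal.span_insert, sup_comm]
    refine Submodule.add_mem_sup hc' ?_
    rw [← Set.image_singleton, ← Ideal.map_span]
    exact Ideal.mem_map_of_mem _ hr

theorem finrank_quotient_map_le {k P Q : Type*} [Field k] [CommRing P] [Nontrivial P] [Algebra k P]
    [CommRing Q] [Algebra k Q] [Algebra P Q] [IsScalarTower k P Q] [Module.Free P Q]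
    [Module.Finite P Q] {m : Ideal P} (hm : ∀ a : P, ∃ c : k, a - algebraMap k P c ∈ m) :
    Module.finrank k (Q ⧸ m.map (algebraMap P Q)) ≤ Module.finrank P Q := by
  let b := Module.finBasis P Q
  have hspan : Submodule.span k
      (Set.range fun i => Ideal.Quotient.mk (m.map (algebraMap P Q)) (b i)) = ⊤ := by
    refine eq_top_iff.2 fun q _ => ?_
    obtain ⟨q, rfl⟩ := Ideal.Quotient.mk_surjective q
    rw [← b.sum_repr q, map_sum]
    refine sum_mem fun i _ => ?_
    obtain ⟨c, hc⟩ := hm (b.repr q i)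
    have hmk : Ideal.Quotient.mk (m.map (algebraMap P Q)) (b.repr q i • b i) =
        Ideal.Quotient.mk (m.map (algebraMap P Q)) (c • b i) := by
      rw [Ideal.Quotient.eq, ← algebraMap_smul P c (b i), ← sub_smul, Algebra.smul_def]
      exact Ideal.mul_mem_right _ _ (Ideal.mem_map_of_mem _ hc)
    rw [hmk]
    exact Submodule.smul_mem _ c (Submodule.subset_span (Set.mem_range_self i))
  simpa using finrank_le_of_span_eq_top hspan

/-- The algebra is free of rank `3p²` over its subalgebra `k[xᵖ, yᵖ] = k[s, w] / (sᵗ, wᵗ)`. -/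
theorem exists_finite_algebra_cube_eq (k : Type u) [Field k] (p t : ℕ) [NeZero p] [NeZero t] :
    ∃ (Q : Type u) (_ : CommRing Q) (_ : Algebra k Q) (_ : Module.Finite k Q) (x y z : Q),
      x ^ (p * t) = 0 ∧ y ^ (p * t) = 0 ∧ z ^ 3 = -(x ^ 3 + y ^ 3) ∧
      Module.finrank k Q = t * t * (p * p * 3) ∧
      Module.finrank k (Q ⧸ Ideal.span {x ^ p, y ^ p}) ≤ p * p * 3 := by
  obtain ⟨P, _, _, _, _, _, s, w, hP, hs, hw, hconst⟩ :=
    exists_free_algebra_pow_eq_pow_eq t (0 : k) 0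
  obtain ⟨B, _, _, _, _, _, x, y, hB, hx, hy, -⟩ := exists_free_algebra_pow_eq_pow_eq p s w
  obtain ⟨Q, _, _, _, _, _, z, hQ, hz, -⟩ := exists_free_algebra_pow_eq 3 (-(x ^ 3 + y ^ 3))
  let := Algebra.compHom Q (algebraMap P B)
  let := Algebra.compHom Q (algebraMap k P)
  have : IsScalarTower P B Q := .of_algebraMap_eq' rfl
  have : IsScalarTower k P Q := .of_algebraMap_eq' rfl
  have : Module.Free P Q := .trans (S := B)
  have : Module.Finite P Q := .trans B Q
  have hPQ : Module.finrank P Q = p * p * 3 := by rw [← Module.finrank_mul_finrank P B Q, hB, hQ]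
  have hxQ : algebraMap B Q x ^ p = algebraMap P Q s := by
    rw [← map_pow, hx, ← IsScalarTower.algebraMap_apply]
  have hyQ : algebraMap B Q y ^ p = algebraMap P Q w := by
    rw [← map_pow, hy, ← IsScalarTower.algebraMap_apply]
  refine ⟨Q, inferInstance, inferInstance, .trans P Q, algebraMap B Q x, algebraMap B Q y, z,
    ?_, ?_, ?_, ?_, ?_⟩
  · rw [pow_mul, hxQ, ← map_pow, hs, map_zero, map_zero]
  · rw [pow_mul, hyQ, ← map_pow, hw, map_zero, map_zero]
  · rw [hz, map_neg, map_add, map_pow, map_pow]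
  · rw [← Module.finrank_mul_finrank k P Q, hP, hPQ]
  · rw [hxQ, hyQ, ← Set.image_pair, ← Ideal.map_span, ← hPQ]
    exact finrank_quotient_map_le hconst

end ArtinianCubic

section PositiveCharacteristic

/-- The ideal generated by `xᵗ`, `yᵗ` and the two relations of the forcing algebra, at a point
`a = (x, y, z, u, v)`. -/
def truncatedRelations {S : Type*} [CommRing S] (t : ℕ) (a : Fin 5 → S) : Ideal S :=
  Ideal.span {a 0 ^ t, a 1 ^ t, a 0 ^ 3 + a 1 ^ 3 + a 2 ^ 3, a 2 ^ 2 - a 3 * a 0 - a 4 * a 1}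

theorem map_truncatedRelations {S T F : Type*} [CommRing S] [CommRing T] [FunLike F S T]
    [RingHomClass F S T] (φ : F) (t : ℕ) (a : Fin 5 → S) :
    (truncatedRelations t a).map φ = truncatedRelations t fun i => φ (a i) := by
  simp only [truncatedRelations, Ideal.map_span, Set.image_insert_eq, Set.image_singleton, map_sub,
    map_add, map_mul, map_pow]

/-- The point is `(xᵖ, yᵖ, zᵖ, u, v)`, where `u` and `v` witness that the Frobenius power `z²ᵖ`
lies in `(xᵖ, yᵖ)`. -/
theorem exists_truncatedRelations_eq_bot {k : Type u} [Field k] {p : ℕ} [Fact p.Prime] [CharP k p]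
    (hp : p % 3 = 2) (t : ℕ) [NeZero t] :
    ∃ (Q : Type u) (_ : CommRing Q) (_ : Algebra k Q) (_ : Module.Finite k Q) (a : Fin 5 → Q),
      truncatedRelations t a = ⊥ ∧ Ideal.span (Set.range a) ^ (2 * t + 1) = ⊥ ∧
      ∃ r, 0 < r ∧ Module.finrank k Q = t * t * r ∧
        Module.finrank k (Q ⧸ Ideal.span {a 0, a 1}) ≤ r := by
  have hp0 : 0 < p := (Fact.out : p.Prime).pos
  have : NeZero p := ⟨hp0.ne'⟩
  obtain ⟨Q, _, _, _, x, y, z, hx, hy, hz, hQ, hQxy⟩ := exists_finite_algebra_cube_eq k p t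
  have : Nontrivial Q := Module.nontrivial_of_finrank_pos (R := k) (by
    rw [hQ]
    have := NeZero.pos t
    positivity)
  have : CharP Q p := (Algebra.charP_iff k Q p).1 inferInstance
  obtain ⟨u, hu, v, hv, huv⟩ := exists_mem_pow_sq_pow_eq hz (r := p / 3) (p := p) (by omega)
  refine ⟨Q, inferInstance, inferInstance, inferInstance, ![x ^ p, y ^ p, z ^ p, u, v], ?_, ?_,
    p * p * 3, by positivity, hQ, hQxy⟩
  · have hcube : (x ^ p) ^ 3 + (y ^ p) ^ 3 + (z ^ p) ^ 3 = 0 := by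
      simp only [pow_right_comm _ p 3]
      rw [← add_pow_char, ← add_pow_char, hz, add_neg_cancel, zero_pow hp0.ne']
    rw [truncatedRelations, Ideal.span_eq_bot]
    rintro _ (rfl | rfl | rfl | rfl)
    · exact (pow_mul x p t).symm.trans hx
    · exact (pow_mul y p t).symm.trans hy
    · exact hcube
    · change (z ^ p) ^ 2 - u * x ^ p - v * y ^ p = 0
      rw [huv]
      ring
  · have hle : Ideal.span (Set.range ![x ^ p, y ^ p, z ^ p, u, v]) ≤ Ideal.span {x, y, z} ^ p := by
      rw [Ideal.span_le, Set.range_subset_iff]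
      intro i
      fin_cases i
      · exact Ideal.pow_mem_pow (Ideal.subset_span (by simp)) p
      · exact Ideal.pow_mem_pow (Ideal.subset_span (by simp)) p
      · exact Ideal.pow_mem_pow (Ideal.subset_span (by simp)) p
      · exact hu
      · exact hv
    have hdeg : 2 * (p * t) + 2 ≤ p * (2 * t + 1) := by
      have := (Fact.out : p.Prime).two_le
      linarith
    rw [eq_bot_iff, ← span_pow_add_two_eq_bot_of_cube_eq hz hx hy]
    refine (Ideal.pow_right_mono hle _).trans ?_
    rw [← pow_mul]
    exact Ideal.pow_le_pow_right hdeg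

theorem HasCyclicChain_s16.sq_le_of_charP {D k : Type*} [CommRing D] [Field k] (ψ : D →+* k) {p : ℕ}
    [Fact p.Prime] [CharP k p] (hp : p % 3 = 2) {t h : ℕ} [NeZero t]
    (H : HasCyclicChain_s16 (Ideal.span {MvPolynomial.X 0, MvPolynomial.X 1})
      (truncatedRelations t MvPolynomial.X ⊔ MvPolynomial.idealOfVars (Fin 5) D ^ (2 * t + 1)) h) :
    t ^ 2 ≤ h := by
  obtain ⟨Q, _, _, _, a, hrel, hpow, r, hr, hQ, hQa⟩ := exists_truncatedRelations_eq_bot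
    (k := k) hp t
  let φ := MvPolynomial.eval₂Hom ((algebraMap k Q).comp ψ) a
  have hφ (i : Fin 5) : φ (MvPolynomial.X i) = a i := MvPolynomial.eval₂Hom_X' _ _ i
  have hvars : (MvPolynomial.idealOfVars (Fin 5) D).map φ = Ideal.span (Set.range a) := by
    rw [MvPolynomial.idealOfVars, Ideal.map_span, ← Set.range_comp]
    simp only [Function.comp_def, hφ]
  have hmap := H.map φ
  rw [Ideal.map_span, Set.image_pair, Ideal.map_sup, Ideal.map_pow, hvars, hpow,
    map_truncatedRelations] at hmap
  simp only [hφ] at hmap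
  rw [hrel, sup_bot_eq] at hmap
  refine Nat.le_of_mul_le_mul_right ?_ hr
  calc t ^ 2 * r = Module.finrank k Q := by rw [hQ, sq]
    _ ≤ h * Module.finrank k (Q ⧸ Ideal.span {a 0, a 1}) := hmap.finrank_le
    _ ≤ h * r := by gcongr

end PositiveCharacteristic

section CharZero

theorem exists_forall_prime_not_dvd_exists_isPrime_mem (D : Type*) [CommRing D] [IsDomain D]
    [CharZero D] [Algebra.FiniteType ℤ D] :
    ∃ n : ℤ, n ≠ 0 ∧ ∀ p : ℕ, p.Prime → ¬ (p : ℤ) ∣ n → ∃ q : Ideal D, q.IsPrime ∧ (p : D) ∈ q := by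
  have : Algebra.FinitePresentation ℤ D := Algebra.FinitePresentation.of_finiteType.1 inferInstance
  have hopen : IsOpenMap (PrimeSpectrum.comap (algebraMap ℤ D)) :=
    PrimeSpectrum.isOpenMap_comap_of_hasGoingDown_of_finitePresentation
  obtain ⟨_, ⟨n, rfl⟩, hn, hsub⟩ :=
    PrimeSpectrum.isTopologicalBasis_basic_opens.exists_subset_of_mem_open
      (Set.mem_range_self ⊥) hopen.isOpen_range
  refine ⟨n, fun h0 => hn (h0 ▸ Ideal.zero_mem _), fun p hp hpn => ?_⟩
  have hpZ : Prime (p : ℤ) := Nat.prime_iff_prime_int.1 hp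
  obtain ⟨q, hq⟩ := hsub (show (⟨Ideal.span {(p : ℤ)},
    (Ideal.span_singleton_prime hpZ.ne_zero).2 hpZ⟩ : PrimeSpectrum ℤ) ∈ _ from
      fun hmem => hpn (Ideal.mem_span_singleton.1 hmem))
  have hmem : (p : ℤ) ∈ (PrimeSpectrum.comap (algebraMap ℤ D) q).asIdeal :=
    hq ▸ Ideal.mem_span_singleton_self _
  exact ⟨q.asIdeal, q.isPrime, by simpa using hmem⟩

theorem exists_prime_modEq_exists_charP_quotient {m a : ℕ} (hm : m ≠ 0)
    (ha : a.Coprime m) (D : Type*) [CommRing D] [IsDomain D] [CharZero D] [Algebra.FiniteType ℤ D] :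
    ∃ p : ℕ, p.Prime ∧ p ≡ a [MOD m] ∧ ∃ q : Ideal D, q.IsPrime ∧ CharP (D ⧸ q) p := by
  obtain ⟨n, hn, hD⟩ := exists_forall_prime_not_dvd_exists_isPrime_mem D
  obtain ⟨p, hpn, hp, hpa⟩ := Nat.forall_exists_prime_gt_and_modEq n.natAbs hm ha
  obtain ⟨q, hq, hpq⟩ := hD p hp fun hdvd =>
    hpn.not_ge (Nat.le_of_dvd (Int.natAbs_pos.2 hn) (Int.natCast_dvd.1 hdvd))
  refine ⟨p, hp, hpa, q, hq, (CharP.charP_iff_prime_eq_zero hp).2 ?_⟩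
  rwa [← map_natCast (Ideal.Quotient.mk q), Ideal.Quotient.eq_zero_iff_mem]

theorem map_span_X_pair {A B : Type*} [CommRing A] [CommRing B] (f : A →+* B) :
    (Ideal.span {MvPolynomial.X 0, MvPolynomial.X 1}).map (MvPolynomial.map f) =
      Ideal.span {(MvPolynomial.X 0 : MvPolynomial (Fin 5) B), MvPolynomial.X 1} := by
  simp only [Ideal.map_span, Set.image_pair, MvPolynomial.map_X]

theorem map_truncatedRelations_sup_idealOfVars_pow {A B : Type*} [CommRing A] [CommRing B]
    (f : A →+* B) (t N : ℕ) :
    (truncatedRelations t MvPolynomial.X ⊔ MvPolynomial.idealOfVars (Fin 5) A ^ N).map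
        (MvPolynomial.map f) =
      truncatedRelations t MvPolynomial.X ⊔ MvPolynomial.idealOfVars (Fin 5) B ^ N := by
  simp only [Ideal.map_sup, Ideal.map_pow, map_truncatedRelations, MvPolynomial.idealOfVars,
    Ideal.map_span, ← Set.range_comp, Function.comp_def, MvPolynomial.map_X]

theorem HasCyclicChain_s16.sq_le_of_isDomain {𝕜 : Type*} [CommRing 𝕜] [IsDomain 𝕜] [CharZero 𝕜]
    {t h : ℕ} [NeZero t]
    (H : HasCyclicChain_s16 (Ideal.span {MvPolynomial.X 0, MvPolynomial.X 1})
      (truncatedRelations t MvPolynomial.X ⊔ MvPolynomial.idealOfVars (Fin 5) 𝕜 ^ (2 * t + 1)) h) :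
    t ^ 2 ≤ h := by
  rw [← map_span_X_pair (algebraMap ℤ 𝕜),
    ← map_truncatedRelations_sup_idealOfVars_pow (algebraMap ℤ 𝕜)] at H
  obtain ⟨D, hDfg, HD⟩ := H.exists_fg_subalgebra (Submodule.fg_span (Set.toFinite _))
  rw [map_span_X_pair, map_truncatedRelations_sup_idealOfVars_pow] at HD
  have : Algebra.FiniteType ℤ D := D.fg_iff_finiteType.1 hDfg
  obtain ⟨p, hp, hp3, q, hq, hchar⟩ :=
    exists_prime_modEq_exists_charP_quotient three_ne_zero (show Nat.Coprime 2 3 by decide) D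
  have : Fact p.Prime := ⟨hp⟩
  have : CharP (FractionRing (D ⧸ q)) p :=
    charP_of_injective_algebraMap (IsFractionRing.injective (D ⧸ q) _) p
  exact HD.sq_le_of_charP ((algebraMap (D ⧸ q) (FractionRing (D ⧸ q))).comp (Ideal.Quotient.mk q))
    hp3

theorem HasCyclicChain_s16.sq_le {𝕜 : Type*} [CommRing 𝕜] [Nontrivial 𝕜] [Algebra ℚ 𝕜]
    {t h : ℕ} [NeZero t]
    (H : HasCyclicChain_s16 (Ideal.span {MvPolynomial.X 0, MvPolynomial.X 1})
      (truncatedRelations t MvPolynomial.X ⊔ MvPolynomial.idealOfVars (Fin 5) 𝕜 ^ (2 * t + 1)) h) :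
    t ^ 2 ≤ h := by
  obtain ⟨m, _⟩ := Ideal.exists_maximal 𝕜
  have : CharZero (𝕜 ⧸ m) := algebraRat.charZero _
  have hm := H.map (MvPolynomial.map (Ideal.Quotient.mk m))
  rw [map_span_X_pair, map_truncatedRelations_sup_idealOfVars_pow] at hm
  exact hm.sq_le_of_isDomain

end CharZero

section PowerSeries

theorem HasCyclicChain_s16.sup_idealOfVars_pow {σ A : Type*} [Finite σ] [CommRing A]
    {J K : Ideal (MvPolynomial σ A)} {h : ℕ}
    (H : HasCyclicChain_s16 (J.map (algebraMap _ (MvPowerSeries σ A)))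
      (K.map (algebraMap _ (MvPowerSeries σ A))) h) (N : ℕ) :
    HasCyclicChain_s16 J (K ⊔ MvPolynomial.idealOfVars σ A ^ N) h := by
  let τ := truncTotalAlgHom σ A N
  have hτ (I : Ideal (MvPolynomial σ A)) : (I.map (algebraMap _ (MvPowerSeries σ A))).map
      τ.toRingHom = I.map (Ideal.Quotient.mk _) := by
    rw [Ideal.map_map]
    exact congrArg (I.map ·) τ.comp_algebraMap
  have hmap := H.map τ.toRingHom
  rw [hτ, hτ] at hmap
  have hcomap := hmap.comap_of_surjective Ideal.Quotient.mk_surjective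
  rwa [Ideal.comap_map_quotientMk, sup_comm] at hcomap

theorem algebraMap_X {σ A : Type*} [CommRing A] (i : σ) :
    algebraMap (MvPolynomial σ A) (MvPowerSeries σ A) (MvPolynomial.X i) = X i := by
  simp [MvPowerSeries.algebraMap_apply']

/-- The defining ideal of the forcing algebra `A⟦x, y, z, u, v⟧ / (x³ + y³ + z³, z² - ux - vy)` of
`z²` with respect to the elements `x, y` of the cubic cone. -/
noncomputable def cubicForcingIdeal (A : Type*) [CommRing A] : Ideal (MvPowerSeries (Fin 5) A) :=
  Ideal.span {X 0 ^ 3 + X 1 ^ 3 + X 2 ^ 3, X 2 ^ 2 - X 3 * X 0 - X 4 * X 1}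

variable {A : Type u} [CommRing A]

theorem cubicForcingIdeal_sup_span_pow (t : ℕ) :
    cubicForcingIdeal A ⊔ Ideal.span {X 0 ^ t, X 1 ^ t} = truncatedRelations t X := by
  rw [cubicForcingIdeal, sup_comm, ← Ideal.span_union, truncatedRelations, Set.insert_union,
    Set.singleton_union]

theorem cubicForcingIdeal_sup_span_ne_top [Nontrivial A] :
    cubicForcingIdeal A ⊔ Ideal.span {X 0, X 1} ≠ ⊤ := by
  refine ne_top_of_le_ne_top (RingHom.ker_ne_top (constantCoeff (σ := Fin 5) (R := A))) ?_
  refine sup_le (Ideal.span_le.2 ?_) (Ideal.span_le.2 ?_)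
  · rintro _ (rfl | rfl) <;> simp
  · rintro _ (rfl | rfl) <;> simp

theorem HasQLFiltration.sq_le_of_cubicForcingIdeal [Nontrivial A] [Algebra ℚ A] {t h : ℕ} [NeZero t]
    (H : HasQLFiltration (MvPowerSeries (Fin 5) A ⧸ cubicForcingIdeal A)
      ((Ideal.span {X 0, X 1}).map (Ideal.Quotient.mk _))
      (_ ⧸ (Ideal.span {X 0 ^ t, X 1 ^ t}).map (Ideal.Quotient.mk (cubicForcingIdeal A))) h) :
    t ^ 2 ≤ h := by
  have hseries := H.hasCyclicChain_s16.comap_of_surjective Ideal.Quotient.mk_surjective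
  rw [Ideal.comap_map_quotientMk, cubicForcingIdeal_sup_span_pow] at hseries
  have hspan : Ideal.span {X 0, X 1} = (Ideal.span {MvPolynomial.X 0, MvPolynomial.X 1}).map
      (algebraMap (MvPolynomial (Fin 5) A) (MvPowerSeries (Fin 5) A)) := by
    simp only [Ideal.map_span, Set.image_pair, algebraMap_X]
  have hrel : truncatedRelations t X = (truncatedRelations t MvPolynomial.X).map
      (algebraMap (MvPolynomial (Fin 5) A) (MvPowerSeries (Fin 5) A)) := by
    simp only [map_truncatedRelations, algebraMap_X]
  rw [hspan, hrel] at hseries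
  exact (hseries.sup_idealOfVars_pow (2 * t + 1)).sq_le

theorem isQSequence_cubicForcingIdeal [Nontrivial A] [Algebra ℚ A] :
    IsQSequence ![Ideal.Quotient.mk (cubicForcingIdeal A) (X 0),
      Ideal.Quotient.mk (cubicForcingIdeal A) (X 1)] := by
  have hspan (t : ℕ) : Ideal.span (Set.range fun i =>
      ![Ideal.Quotient.mk (cubicForcingIdeal A) (X 0),
        Ideal.Quotient.mk (cubicForcingIdeal A) (X 1)] i ^ t) =
      (Ideal.span {X 0 ^ t, X 1 ^ t}).map (Ideal.Quotient.mk (cubicForcingIdeal A)) := by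
    rw [Ideal.map_span, Set.image_pair, map_pow, map_pow]
    congr 1
    ext q
    simp [Fin.exists_fin_two, eq_comm]
  have hspan_one := hspan 1
  simp only [pow_one] at hspan_one
  refine ⟨?_, fun t ht => le_sInf ?_⟩
  · rw [hspan_one]
    intro htop
    apply cubicForcingIdeal_sup_span_ne_top (A := A)
    rw [← Ideal.comap_map_quotientMk, htop, Ideal.comap_top]
  · rintro _ ⟨h, rfl, H⟩
    rw [hspan t, hspan_one] at H
    have : NeZero t := ⟨ht.ne'⟩
    exact_mod_cast H.sq_le_of_cubicForcingIdeal

end PowerSeries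

theorem idealHeight_span_pair_le_one {S : Type u} [CommRing S] [IsNoetherianRing S] [Algebra ℚ S]
    {x y z u v : S} (hcube : x ^ 3 + y ^ 3 + z ^ 3 = 0) (hsq : z ^ 2 - u * x - v * y = 0)
    (hne : Ideal.span {x, y} ≠ ⊤) : idealHeight S (Ideal.span {x, y}) ≤ 1 := by
  rw [← Matrix.range_cons_cons_empty x y ![]] at hne ⊢
  obtain ⟨P, hP, hheight⟩ := exists_height_le_one hne (eq_neg_of_add_eq_zero_right hcube)
    (show z ^ 2 = u * x + v * y by linear_combination hsq)
  refine (iInf₂_le ⟨P, hP.1.1⟩ hP.1.2).trans ?_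
  rwa [← PrimeSpectrum.height_eq_orderHeight]

universe w

theorem forcingAlgebra_cubic_QSequence_superheight_one_general {𝕜 : Type u} [CommRing 𝕜]
    [Nontrivial 𝕜] [Algebra ℚ 𝕜] :
    let x : MvPowerSeries (Fin 5) 𝕜 := X 0
    let y : MvPowerSeries (Fin 5) 𝕜 := X 1
    let z : MvPowerSeries (Fin 5) 𝕜 := X 2
    let u : MvPowerSeries (Fin 5) 𝕜 := X 3
    let v : MvPowerSeries (Fin 5) 𝕜 := X 4
    let J : Ideal (MvPowerSeries (Fin 5) 𝕜) := Ideal.span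
      {x ^ 3 + y ^ 3 + z ^ 3, z ^ 2 - u * x - v * y}
    let R := MvPowerSeries (Fin 5) 𝕜 ⧸ J
    let xR : R := Ideal.Quotient.mk J x
    let yR : R := Ideal.Quotient.mk J y
    IsQSequence ![xR, yR] ∧
    ∀ (S : Type w) [CommRing S] [IsNoetherianRing S] [Algebra R S],
      Ideal.span {algebraMap R S xR, algebraMap R S yR} ≠ ⊤ →
      idealHeight S (Ideal.span {algebraMap R S xR, algebraMap R S yR}) ≤ 1 := by
  intro x y z u v J R xR yR
  refine ⟨isQSequence_cubicForcingIdeal, fun S _ _ _ hne => ?_⟩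
  let φ : MvPowerSeries (Fin 5) 𝕜 →+* S := (algebraMap R S).comp (Ideal.Quotient.mk J)
  have hφ : ∀ r ∈ J, φ r = 0 := fun r hr => by
    rw [RingHom.comp_apply, Ideal.Quotient.eq_zero_iff_mem.2 hr, map_zero]
  have hcube := hφ _ (Ideal.subset_span (Set.mem_insert _ _))
  have hsq := hφ _ (Ideal.subset_span (Set.mem_insert_of_mem _ (Set.mem_singleton _)))
  simp only [map_add, map_sub, map_mul, map_pow] at hcube hsq
  let := (φ.comp ((C (σ := Fin 5) (R := 𝕜)).comp (algebraMap ℚ 𝕜))).toAlgebra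
  exact idealHeight_span_pair_le_one hcube hsq hne

/-- Let `R = ℂ[[x,y,z,u,v]]/(x³+y³+z³, z²−ux−vy)`. Then `x, y`
is a Q-sequence in `R`, but the superheight of `(x,y)R` is `1`: in every Noetherian
`R`-algebra `S` in which `(x,y)S` is proper, the height of `(x,y)S` is at most `1`. -/
theorem forcingAlgebra_cubic_QSequence_superheight_one :
    let x : MvPowerSeries (Fin 5) ℂ := X 0
    let y : MvPowerSeries (Fin 5) ℂ := X 1
    let z : MvPowerSeries (Fin 5) ℂ := X 2
    let u : MvPowerSeries (Fin 5) ℂ := X 3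
    let v : MvPowerSeries (Fin 5) ℂ := X 4
    let J : Ideal (MvPowerSeries (Fin 5) ℂ) := Ideal.span
      {x ^ 3 + y ^ 3 + z ^ 3, z ^ 2 - u * x - v * y}
    let R := MvPowerSeries (Fin 5) ℂ ⧸ J
    let xR : R := Ideal.Quotient.mk J x
    let yR : R := Ideal.Quotient.mk J y
    IsQSequence ![xR, yR] ∧
    ∀ (S : Type) [CommRing S] [IsNoetherianRing S] [Algebra R S],
      Ideal.span {algebraMap R S xR, algebraMap R S yR} ≠ ⊤ →
      idealHeight S (Ideal.span {algebraMap R S xR, algebraMap R S yR}) ≤ 1 :=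
  forcingAlgebra_cubic_QSequence_superheight_one_general
end
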